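/- arXiv:2110.01570 — 2 statements merged into one kernel-verified Lean document; each statement's English description precedes it below -/
import Mathlib

section
/- Suppose 0 < 1/n ≤ 1/q ≪ 1/k ≤ 1/2 and 1/q ≪ ν. Let H be an n-vertex k-graph on a vertex set V, and let Q be chosen uniformly at random from the q-element subsets of V. Then the probability that |H[Q]| = (q^k/n^k)·|H| ± ν·C(q,k) is at least 1 − 2e^{−ν²q/(8k²)}. -/
/-!
Expose `Q` one vertex at a time: a random `(q + 1)`-subset of `W` is a random `x ∈ W` together with
a random `q`-subset of `W \ {x}`. If exchanging one vertex changes a function of `Q` by at most `c`,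
then its conditional means given `x` and given `y` differ by at most `c`, because the transposition
of `x` and `y` couples the two conditional distributions so that the outcomes differ by at most one
exchange. Hoeffding's lemma at each of the `q` exposures makes the function sub-Gaussian with
variance proxy `q * c ^ 2`.

For the number of edges inside `Q` one has `c = C(q - 1, k - 1) = k * C(q, k) / q`, which gives a
deviation of at most `ν / 2 * C(q, k)` outside a set of probability `2 * exp (-ν² q / (8 k²))`.
The other half of `ν` pays for replacing the mean `C(q, k) / C(n, k) * |H|` by
`q ^ k / n ^ k * |H|`; by Bernoulli's inequality `q ≥ k ^ 2 * (1 + 2 / ν)` is enough for that.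
-/

open Finset Real
open scoped BigOperators

section Averaging

variable {V M : Type*} [AddCommMonoid M]

theorem expect_powersetCard_map {U : Type*} [Module ℚ≥0 M] (e : U ↪ V) (q : ℕ) (W : Finset U)
    (g : Finset V → M) :
    𝔼 Q ∈ (W.map e).powersetCard q, g Q = 𝔼 R ∈ W.powersetCard q, g (R.map e) := by
  simp [expect, powersetCard_map]

variable [DecidableEq V]

theorem insert_mem_powersetCard_succ_iff {q : ℕ} {x : V} {R W : Finset V} (hx : x ∈ W)
    (hxR : x ∉ R) :
    insert x R ∈ W.powersetCard (q + 1) ↔ R ∈ (W.erase x).powersetCard q := by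
  simp [mem_powersetCard, insert_subset_iff, subset_erase, hx, hxR]

theorem sum_powersetCard_succ_sum_erase (q : ℕ) (W : Finset V) (f : V → Finset V → M) :
    ∑ Q ∈ W.powersetCard (q + 1), ∑ x ∈ Q, f x (Q.erase x) =
      ∑ x ∈ W, ∑ R ∈ (W.erase x).powersetCard q, f x R := by
  rw [sum_sigma', sum_sigma']
  refine sum_nbij' (fun p ↦ ⟨p.2, p.1.erase p.2⟩) (fun p ↦ ⟨insert p.1 p.2, p.1⟩)
    ?_ ?_ ?_ ?_ ?_ <;>
    simp +contextual [mem_powersetCard, subset_iff, forall_and]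

theorem expect_powersetCard_succ [Module ℚ≥0 M] (q : ℕ) (W : Finset V) (g : Finset V → M) :
    𝔼 Q ∈ W.powersetCard (q + 1), g Q =
      𝔼 x ∈ W, 𝔼 R ∈ (W.erase x).powersetCard q, g (insert x R) := by
  have hcount : ∑ x ∈ W, ∑ R ∈ (W.erase x).powersetCard q, g (insert x R) =
      (q + 1) • ∑ Q ∈ W.powersetCard (q + 1), g Q := by
    rw [← sum_powersetCard_succ_sum_erase q W fun x R ↦ g (insert x R), smul_sum]
    refine sum_congr rfl fun Q hQ ↦ ?_
    rw [sum_congr rfl fun x hx ↦ by rw [insert_erase hx], sum_const, (mem_powersetCard.1 hQ).2]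
  obtain rfl | hW := W.eq_empty_or_nonempty
  · rw [powersetCard_eq_empty.2 (by simp), expect_empty, expect_empty]
  obtain ⟨n, hn⟩ := Nat.exists_eq_add_one.2 hW.card_pos
  have hinner : ∀ x ∈ W, 𝔼 R ∈ (W.erase x).powersetCard q, g (insert x R) =
      (n.choose q : ℚ≥0)⁻¹ • ∑ R ∈ (W.erase x).powersetCard q, g (insert x R) := fun x hx ↦ by
    rw [expect, card_powersetCard, card_erase_of_mem hx, hn, Nat.add_sub_cancel]
  have hchoose : ((n + 1 : ℕ) : ℚ≥0) * n.choose q = (n + 1).choose (q + 1) * (q + 1 : ℕ) :=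
    mod_cast Nat.add_one_mul_choose_eq n q
  have hinv : ((n + 1).choose (q + 1) : ℚ≥0)⁻¹ =
      ((n + 1 : ℕ) : ℚ≥0)⁻¹ * (n.choose q : ℚ≥0)⁻¹ * (q + 1 : ℕ) := by
    rw [← mul_inv, hchoose, mul_inv, inv_mul_cancel_right₀ (Nat.cast_ne_zero.2 q.succ_ne_zero)]
  rw [expect_congr rfl hinner, ← smul_expect, expect, expect, card_powersetCard, hn, hcount,
    ← Nat.cast_smul_eq_nsmul ℚ≥0, smul_smul, smul_smul, hinv,
    mul_comm (n.choose q : ℚ≥0)⁻¹]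

end Averaging

section Subgaussian

variable {ι κ : Type*} {s : Finset ι} {f : ι → ℝ} {c v w : ℝ}

/-- `f`, evaluated at a uniformly random point of `s`, is sub-Gaussian about its mean with variance
proxy `v`. This is a finite form of `ProbabilityTheory.HasSubgaussianMGF`, with averages in place of
a measure. -/
def SubgaussianOn (s : Finset ι) (f : ι → ℝ) (v : ℝ) : Prop :=
  ∀ r : ℝ, 𝔼 i ∈ s, exp (r * f i) ≤ exp (r * 𝔼 i ∈ s, f i + r ^ 2 * v / 2)

theorem SubgaussianOn.neg (h : SubgaussianOn s f v) : SubgaussianOn s (fun i ↦ -f i) v := by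
  intro r
  simpa [expect_neg_distrib] using h (-r)

theorem subgaussianOn_of_abs_sub_expect_le (h : ∀ i ∈ s, |f i - 𝔼 j ∈ s, f j| ≤ c) :
    SubgaussianOn s f (c ^ 2) := by
  intro r
  obtain rfl | hs := s.eq_empty_or_nonempty
  · simp [exp_nonneg]
  set μ := 𝔼 j ∈ s, f j
  have hc : 0 ≤ c := let ⟨i, hi⟩ := hs; (abs_nonneg _).trans (h i hi)
  have hdev : 𝔼 i ∈ s, (f i - μ) = 0 := by
    rw [expect_sub_distrib, expect_const hs, sub_self]
  calc 𝔼 i ∈ s, exp (r * f i)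
      ≤ 𝔼 i ∈ s, exp (r * μ) * (cosh (r * c) + (f i - μ) / c * sinh (r * c)) := by
        refine expect_le_expect fun i hi ↦ ?_
        have hscale : (f i - μ) / c * c = f i - μ :=
          div_mul_cancel_of_imp fun hc0 ↦ abs_nonpos_iff.1 (hc0 ▸ h i hi)
        have hunit : |(f i - μ) / c| ≤ 1 := by
          rw [abs_div, abs_of_nonneg hc]
          exact div_le_one_of_le₀ (h i hi) hc
        calc exp (r * f i) = exp (r * μ) * exp ((f i - μ) / c * (r * c)) := by
              rw [← exp_add, mul_left_comm, hscale]; ring_nf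
          _ ≤ _ := by gcongr; exact exp_mul_le_cosh_add_mul_sinh hunit _
    _ = exp (r * μ) * cosh (r * c) := by
        rw [← mul_expect, expect_add_distrib, expect_const hs, ← expect_mul, ← expect_div, hdev]
        simp
    _ ≤ exp (r * μ + r ^ 2 * c ^ 2 / 2) := by
        rw [exp_add, ← mul_pow]
        gcongr
        exact cosh_le_exp_half_sq _

theorem subgaussianOn_of_abs_sub_le (h : ∀ i ∈ s, ∀ j ∈ s, |f i - f j| ≤ c) :
    SubgaussianOn s f (c ^ 2) := by
  refine subgaussianOn_of_abs_sub_expect_le fun i hi ↦ ?_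
  have hs : s.Nonempty := ⟨i, hi⟩
  calc |f i - 𝔼 j ∈ s, f j| = |𝔼 j ∈ s, (f i - f j)| := by
        rw [expect_sub_distrib, expect_const hs]
    _ ≤ 𝔼 j ∈ s, |f i - f j| := abs_expect_le _ _
    _ ≤ c := expect_le hs (h i hi)

theorem SubgaussianOn.expect_expect_exp_le {t : ι → Finset κ} {F : ι → κ → ℝ}
    (hs : SubgaussianOn s (fun i ↦ 𝔼 j ∈ t i, F i j) v)
    (ht : ∀ i ∈ s, SubgaussianOn (t i) (F i) w) (r : ℝ) :
    𝔼 i ∈ s, 𝔼 j ∈ t i, exp (r * F i j) ≤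
      exp (r * 𝔼 i ∈ s, 𝔼 j ∈ t i, F i j + r ^ 2 * (v + w) / 2) :=
  calc 𝔼 i ∈ s, 𝔼 j ∈ t i, exp (r * F i j)
      ≤ 𝔼 i ∈ s, exp (r * 𝔼 j ∈ t i, F i j) * exp (r ^ 2 * w / 2) :=
        expect_le_expect fun i hi ↦ (ht i hi r).trans_eq (exp_add _ _)
    _ = (𝔼 i ∈ s, exp (r * 𝔼 j ∈ t i, F i j)) * exp (r ^ 2 * w / 2) := by rw [expect_mul]
    _ ≤ exp (r * 𝔼 i ∈ s, 𝔼 j ∈ t i, F i j + r ^ 2 * v / 2) * exp (r ^ 2 * w / 2) := by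
        gcongr; exact hs r
    _ = _ := by rw [← exp_add]; ring_nf

theorem SubgaussianOn.card_filter_expect_add_le (h : SubgaussianOn s f v) (hv : 0 < v) {t : ℝ}
    (ht : 0 ≤ t) :
    (#{i ∈ s | 𝔼 j ∈ s, f j + t ≤ f i} : ℝ) ≤ exp (-t ^ 2 / (2 * v)) * #s := by
  set μ := 𝔼 j ∈ s, f j
  set r := t / v with hr
  have hmarkov : #{i ∈ s | μ + t ≤ f i} * exp (r * (μ + t)) ≤ ∑ i ∈ s, exp (r * f i) := by
    rw [← nsmul_eq_mul]
    refine (card_nsmul_le_sum _ (fun i ↦ exp (r * f i)) _ fun i hi ↦ ?_).trans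
      (sum_le_sum_of_subset_of_nonneg (filter_subset _ _) fun _ _ _ ↦ exp_nonneg _)
    gcongr
    exact (mem_filter.1 hi).2
  have hexp : exp (r * μ + r ^ 2 * v / 2) = exp (-t ^ 2 / (2 * v)) * exp (r * (μ + t)) := by
    rw [← exp_add, hr]
    congr 1
    field_simp
    ring
  refine le_of_mul_le_mul_right ?_ (exp_pos (r * (μ + t)))
  calc #{i ∈ s | μ + t ≤ f i} * exp (r * (μ + t))
      ≤ ∑ i ∈ s, exp (r * f i) := hmarkov
    _ = #s * 𝔼 i ∈ s, exp (r * f i) := (card_mul_expect _ _).symm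
    _ ≤ #s * exp (r * μ + r ^ 2 * v / 2) := by gcongr; exact h r
    _ = _ := by rw [hexp]; ring

theorem SubgaussianOn.card_filter_le_abs_sub_expect_le (h : SubgaussianOn s f v) (hv : 0 < v)
    {t : ℝ} (ht : 0 ≤ t) :
    (#{i ∈ s | t ≤ |f i - 𝔼 j ∈ s, f j|} : ℝ) ≤ 2 * exp (-t ^ 2 / (2 * v)) * #s := by
  classical
  set μ := 𝔼 j ∈ s, f j
  have hupper := h.card_filter_expect_add_le hv ht
  have hlower := h.neg.card_filter_expect_add_le hv ht
  rw [expect_neg_distrib] at hlower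
  have hunion : {i ∈ s | t ≤ |f i - μ|} ⊆ {i ∈ s | μ + t ≤ f i} ∪ {i ∈ s | -μ + t ≤ -f i} := by
    rw [← filter_or]
    refine monotone_filter_right s fun i _ hi ↦ ?_
    rcases le_abs.1 hi with hi | hi
    · exact Or.inl (by linarith)
    · exact Or.inr (by linarith)
  have hcard : (#{i ∈ s | t ≤ |f i - μ|} : ℝ) ≤
      #{i ∈ s | μ + t ≤ f i} + #{i ∈ s | -μ + t ≤ -f i} :=
    mod_cast (card_le_card hunion).trans (card_union_le _ _)
  linarith

end Subgaussian

section Exchange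

variable {V : Type*} [DecidableEq V] {𝒜 : Finset (Finset V)} {W : Finset V} {q : ℕ}
  {g : Finset V → ℝ} {c : ℝ}

/-- Lipschitz continuity with respect to exchanges: `g` changes by at most `c` between two members
of `𝒜` that arise from a common set `R` by adding one element each. For `𝒜 = W.powersetCard q` these
are the pairs of adjacent vertices of the Johnson graph. -/
def ExchangeLipschitzOn (𝒜 : Finset (Finset V)) (g : Finset V → ℝ) (c : ℝ) : Prop :=
  ∀ ⦃R x y⦄, x ∉ R → y ∉ R → insert x R ∈ 𝒜 → insert y R ∈ 𝒜 →
    |g (insert x R) - g (insert y R)| ≤ c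

theorem ExchangeLipschitzOn.comp_insert (hg : ExchangeLipschitzOn (W.powersetCard (q + 1)) g c)
    {x : V} (hx : x ∈ W) :
    ExchangeLipschitzOn ((W.erase x).powersetCard q) (fun R ↦ g (insert x R)) c := by
  intro R y z hyR hzR hy hz
  have hx_notMem : ∀ {u}, insert u R ∈ (W.erase x).powersetCard q → x ∉ insert u R := fun hu h ↦
    notMem_erase x W ((mem_powersetCard.1 hu).1 h)
  have hinsert : ∀ {u}, insert u R ∈ (W.erase x).powersetCard q →
      insert u (insert x R) ∈ W.powersetCard (q + 1) := fun {u} hu ↦ by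
    rw [insert_comm]
    exact (insert_mem_powersetCard_succ_iff hx (hx_notMem hu)).2 hu
  have hnotMem : ∀ {u}, u ∉ R → insert u R ∈ (W.erase x).powersetCard q → u ∉ insert x R :=
    fun hu hmem ↦ mem_insert.not.2 (not_or.2
      ⟨fun hux ↦ hx_notMem hmem (hux ▸ mem_insert_self _ _), hu⟩)
  simpa only [insert_comm x] using
    hg (hnotMem hyR hy) (hnotMem hzR hz) (hinsert hy) (hinsert hz)

theorem ExchangeLipschitzOn.abs_sub_map_swap_le
    (hg : ExchangeLipschitzOn (W.powersetCard (q + 1)) g c) (hc : 0 ≤ c) {x y : V} (hx : x ∈ W)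
    (hy : y ∈ W) {R : Finset V} (hR : R ∈ (W.erase x).powersetCard q) :
    |g (insert x R) - g (insert y (R.map (Equiv.swap x y).toEmbedding))| ≤ c := by
  have hxR : x ∉ R := fun h ↦ notMem_erase x W ((mem_powersetCard.1 hR).1 h)
  by_cases hyR : y ∈ R
  · have hmap : insert y (R.map (Equiv.swap x y).toEmbedding) = insert x R := by
      calc insert y (R.map (Equiv.swap x y).toEmbedding)
          = (insert x R).map (Equiv.swap x y).toEmbedding := by simp [map_insert]
        _ = insert x R := map_perm fun z hz ↦ by
          rcases Equiv.eq_or_eq_of_swap_apply_ne_self hz with rfl | rfl <;> simp [hyR]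
    simpa [hmap] using hc
  · have hmap : R.map (Equiv.swap x y).toEmbedding = R := by
      rw [map_eq_image, image_congr (g := id), image_id]
      intro z hz
      exact Equiv.swap_apply_of_ne_of_ne (ne_of_mem_of_not_mem hz hxR) (ne_of_mem_of_not_mem hz hyR)
    rw [hmap]
    refine hg hxR hyR ((insert_mem_powersetCard_succ_iff hx hxR).2 hR) ?_
    obtain ⟨hRW, hRc⟩ := mem_powersetCard.1 hR
    rw [mem_powersetCard, card_insert_of_notMem hyR, hRc]
    exact ⟨insert_subset hy (hRW.trans (erase_subset x W)), rfl⟩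

theorem ExchangeLipschitzOn.abs_expect_insert_sub_le
    (hg : ExchangeLipschitzOn (W.powersetCard (q + 1)) g c) (hc : 0 ≤ c) {x y : V} (hx : x ∈ W)
    (hy : y ∈ W) :
    |𝔼 R ∈ (W.erase x).powersetCard q, g (insert x R) -
      𝔼 R ∈ (W.erase y).powersetCard q, g (insert y R)| ≤ c := by
  have hswap : W.erase y = (W.erase x).map (Equiv.swap x y).toEmbedding := by
    have hW : W.map (Equiv.swap x y).toEmbedding = W := map_perm fun z hz ↦ by
      rcases Equiv.eq_or_eq_of_swap_apply_ne_self hz with rfl | rfl <;> assumption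
    rw [map_erase, hW, Equiv.coe_toEmbedding, Equiv.swap_apply_left]
  rw [hswap, expect_powersetCard_map, ← expect_sub_distrib]
  obtain hempty | hne := ((W.erase x).powersetCard q).eq_empty_or_nonempty
  · simpa [hempty] using hc
  · exact (abs_expect_le _ _).trans
      (expect_le hne fun R hR ↦ hg.abs_sub_map_swap_le hc hx hy hR)

theorem ExchangeLipschitzOn.subgaussianOn (hg : ExchangeLipschitzOn (W.powersetCard q) g c)
    (hc : 0 ≤ c) : SubgaussianOn (W.powersetCard q) g (q * c ^ 2) := by
  induction q generalizing W g with
  | zero => intro r; simp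
  | succ q ih =>
    intro r
    rw [expect_powersetCard_succ, expect_powersetCard_succ, Nat.cast_succ, add_one_mul,
      add_comm (q * c ^ 2)]
    exact (subgaussianOn_of_abs_sub_le fun x hx y hy ↦
      hg.abs_expect_insert_sub_le hc hx hy).expect_expect_exp_le
        (fun x hx ↦ ih (hg.comp_insert hx)) r

end Exchange

section EdgeCount

variable {V : Type*} [DecidableEq V] {W : Finset V} {H : Finset (Finset V)} {k q : ℕ}

/-- The edge set of the induced hypergraph `H[Q]`, where a hypergraph is given by its set `H` of
edges. -/
def edgesIn (H : Finset (Finset V)) (Q : Finset V) : Finset (Finset V) := {e ∈ H | e ⊆ Q}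

theorem edgesIn_mono {Q R : Finset V} (h : Q ⊆ R) : edgesIn H Q ⊆ edgesIn H R :=
  monotone_filter_right H fun _ _ he ↦ he.trans h

theorem expect_card_edgesIn (hkq : k ≤ q) (hq : q ≤ #W) (hH : H ⊆ W.powersetCard k) :
    𝔼 Q ∈ W.powersetCard q, (#(edgesIn H Q) : ℝ) = q.choose k / (#W).choose k * #H := by
  have hcount : ∑ Q ∈ W.powersetCard q, #(edgesIn H Q) = #H * (#W - k).choose (q - k) := by
    simp_rw [edgesIn, card_filter]
    rw [sum_comm, ← smul_eq_mul]
    refine sum_eq_card_nsmul fun e he ↦ ?_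
    obtain ⟨heW, hek⟩ := mem_powersetCard.1 (hH he)
    rw [← card_filter, card_filter_powersetCard_subset e W q heW (hek ▸ hkq), hek]
  have hWq : (0 : ℝ) < (#W).choose q := mod_cast Nat.choose_pos hq
  have hWk : (0 : ℝ) < (#W).choose k := mod_cast Nat.choose_pos (hkq.trans hq)
  have hchoose : ((#W).choose q : ℝ) * q.choose k =
      (#W).choose k * (#W - k).choose (q - k) := mod_cast Nat.choose_mul hkq
  rw [expect_eq_sum_div_card, ← Nat.cast_sum, hcount, card_powersetCard, Nat.cast_mul]
  field_simp
  linear_combination -(#H : ℝ) * hchoose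

theorem card_edgesIn_insert_le (hH : (H : Set (Finset V)).Sized k) (R : Finset V) (x : V) :
    #(edgesIn H (insert x R)) ≤ #(edgesIn H R) + (#R).choose (k - 1) := by
  have hmem : ∀ e ∈ edgesIn H (insert x R) \ edgesIn H R, e ∈ H ∧ e ⊆ insert x R ∧ x ∈ e := by
    intro e he
    obtain ⟨⟨heH, hex⟩, heR⟩ : (e ∈ H ∧ e ⊆ insert x R) ∧ (e ∈ H → ¬e ⊆ R) := by
      simpa [edgesIn] using he
    refine ⟨heH, hex, by_contra fun hxe ↦ heR heH ?_⟩
    exact (subset_insert_iff_of_notMem hxe).1 hex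
  have hnew : #(edgesIn H (insert x R) \ edgesIn H R) ≤ #(R.powersetCard (k - 1)) := by
    refine card_le_card_of_injOn (fun e ↦ e.erase x) (fun e he ↦ ?_) ?_
    · obtain ⟨heH, hex, hxe⟩ := hmem e he
      exact mem_powersetCard.2 ⟨subset_insert_iff.1 hex, by rw [card_erase_of_mem hxe, hH heH]⟩
    · exact (erase_injOn' x).mono fun e he ↦ (hmem e he).2.2
  rw [card_powersetCard] at hnew
  rw [← card_sdiff_add_card_eq_card (edgesIn_mono (H := H) (subset_insert x R)), add_comm]
  gcongr

theorem exchangeLipschitzOn_card_edgesIn (hH : (H : Set (Finset V)).Sized k) (q : ℕ)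
    (W : Finset V) :
    ExchangeLipschitzOn (W.powersetCard q) (fun Q ↦ (#(edgesIn H Q) : ℝ))
      ((q - 1).choose (k - 1)) := by
  intro R x y hxR _ hx _
  have hR : #R = q - 1 := by
    rw [← (mem_powersetCard.1 hx).2, card_insert_of_notMem hxR, Nat.add_sub_cancel]
  have hlower : ∀ z, (#(edgesIn H R) : ℝ) ≤ #(edgesIn H (insert z R)) := fun z ↦
    mod_cast card_le_card (edgesIn_mono (subset_insert z R))
  have hupper : ∀ z, (#(edgesIn H (insert z R)) : ℝ) ≤
      #(edgesIn H R) + (q - 1).choose (k - 1) := fun z ↦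
    mod_cast hR ▸ card_edgesIn_insert_le hH R z
  simpa using abs_sub_le_of_le_of_le (hlower x) (hupper x) (hlower y) (hupper y)

theorem subgaussianOn_card_edgesIn (hk : 1 ≤ k) (hq : 1 ≤ q)
    (hH : (H : Set (Finset V)).Sized k) (W : Finset V) :
    SubgaussianOn (W.powersetCard q) (fun Q ↦ (#(edgesIn H Q) : ℝ)) ((k * q.choose k) ^ 2 / q) := by
  have hvar : (k * q.choose k : ℝ) ^ 2 / q = q * ((q - 1).choose (k - 1) : ℝ) ^ 2 := by
    obtain ⟨q, rfl⟩ := Nat.exists_eq_add_of_le' hq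
    obtain ⟨k, rfl⟩ := Nat.exists_eq_add_of_le' hk
    have hchoose : ((k + 1 : ℕ) : ℝ) * (q + 1).choose (k + 1) = (q + 1 : ℕ) * q.choose k := by
      rw [mul_comm]
      exact mod_cast (Nat.add_one_mul_choose_eq q k).symm
    rw [hchoose, Nat.add_sub_cancel, Nat.add_sub_cancel]
    field_simp
  rw [hvar]
  exact (exchangeLipschitzOn_card_edgesIn hH q W).subgaussianOn (Nat.cast_nonneg _)

theorem card_filter_le_abs_card_edgesIn_sub_le (hk : 1 ≤ k) (hkq : k ≤ q) (hq : q ≤ #W)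
    (hH : H ⊆ W.powersetCard k) {t : ℝ} (ht : 0 ≤ t) :
    (#{Q ∈ W.powersetCard q | t * q.choose k ≤
        |(#(edgesIn H Q) : ℝ) - q.choose k / (#W).choose k * #H|} : ℝ) ≤
      2 * exp (-(t ^ 2 * q) / (2 * k ^ 2)) * #(W.powersetCard q) := by
  have hsized : (H : Set (Finset V)).Sized k := (Set.sized_powersetCard W k).mono (mod_cast hH)
  have hq0 : (0 : ℝ) < q := mod_cast hk.trans hkq
  have hchoose : (0 : ℝ) < q.choose k := mod_cast Nat.choose_pos hkq
  have hsubgaussian := subgaussianOn_card_edgesIn hk (hk.trans hkq) hsized W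
  have htail := hsubgaussian.card_filter_le_abs_sub_expect_le (by positivity)
    (t := t * q.choose k) (by positivity)
  have hexp : -(t * q.choose k : ℝ) ^ 2 / (2 * ((k * q.choose k) ^ 2 / q)) =
      -(t ^ 2 * q) / (2 * k ^ 2) := by
    field_simp
  rwa [expect_card_edgesIn hkq hq hH, hexp] at htail

end EdgeCount

section Density

variable {k q n : ℕ}

theorem le_of_sq_mul_one_add_one_div_le {δ : ℝ} (hδ : 0 < δ) (hq : k ^ 2 * (1 + 1 / δ) ≤ q) :
    k ≤ q := by
  have hk : (k ^ 2 : ℝ) ≤ q :=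
    (le_mul_of_one_le_right (by positivity) (le_add_of_nonneg_right (by positivity))).trans hq
  exact (Nat.le_self_pow two_ne_zero k).trans (mod_cast hk)

theorem choose_div_choose_le_pow_div_pow (hkn : k ≤ n) (hqn : q ≤ n) :
    (q.choose k / n.choose k : ℝ) ≤ q ^ k / n ^ k := by
  have hdesc : (q.descFactorial k * n ^ k : ℝ) ≤ q ^ k * n.descFactorial k := by
    have hfactor : ∀ i ∈ range k, (q - i) * n ≤ q * (n - i) := fun i _ ↦ by
      rw [Nat.sub_mul, Nat.mul_sub, mul_comm i n]
      exact Nat.sub_le_sub_left (mul_comm n i ▸ mul_comm q i ▸ Nat.mul_le_mul_left i hqn) _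
    have hprod := prod_le_prod' hfactor
    simp only [prod_mul_distrib, prod_const, card_range, ← Nat.descFactorial_eq_prod_range] at hprod
    exact mod_cast hprod
  have hn : (0 : ℝ) < n.choose k := mod_cast Nat.choose_pos hkn
  have hnk : (0 : ℝ) < n ^ k := mod_cast Nat.pow_pos_iff.2 (by omega)
  rw [div_le_div_iff₀ hn hnk]
  simp only [Nat.descFactorial_eq_factorial_mul_choose, Nat.cast_mul] at hdesc
  refine le_of_mul_le_mul_left ?_ (Nat.cast_pos.2 k.factorial_pos : (0 : ℝ) < k.factorial)
  linarith

theorem pow_div_factorial_le_mul_choose {δ : ℝ} (hδ : 0 < δ) (hq : k ^ 2 * (1 + 1 / δ) ≤ q) :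
    (q ^ k / k.factorial : ℝ) ≤ (1 + δ) * q.choose k := by
  obtain rfl | hk := k.eq_zero_or_pos
  · simpa using hδ.le
  have hkq := le_of_sq_mul_one_add_one_div_le hδ hq
  have hq0 : (0 : ℝ) < q := mod_cast hk.trans_le hkq
  have hbernoulli : (1 - k ^ 2 / q : ℝ) ≤ (1 - k / q) ^ k := by
    have hkq_div : (k / q : ℝ) ≤ 1 := div_le_one_of_le₀ (mod_cast hkq) hq0.le
    calc (1 - k ^ 2 / q : ℝ) = 1 + k * -(k / q) := by ring
      _ ≤ (1 + -(k / q)) ^ k := one_add_mul_le_pow (by linarith) k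
      _ = (1 - k / q) ^ k := by rw [← sub_eq_add_neg]
  have hdesc : (q - k : ℝ) ^ k ≤ q.descFactorial k := by
    rw [← Nat.cast_sub hkq]
    exact mod_cast (Nat.pow_le_pow_left (by omega) k).trans (Nat.pow_sub_le_descFactorial q k)
  have hδq : 1 ≤ (1 + δ) * (1 - k ^ 2 / q) := by
    field_simp at hq ⊢
    linarith
  rw [div_le_iff₀ (mod_cast k.factorial_pos)]
  calc (q ^ k : ℝ) ≤ q ^ k * ((1 + δ) * (1 - k ^ 2 / q)) :=
        le_mul_of_one_le_right (by positivity) hδq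
    _ ≤ q ^ k * ((1 + δ) * (1 - k / q) ^ k) := by gcongr
    _ = (1 + δ) * (q - k) ^ k := by
        rw [mul_left_comm, ← mul_pow, mul_one_sub, mul_div_cancel₀ _ hq0.ne']
    _ ≤ (1 + δ) * q.descFactorial k := by gcongr
    _ = (1 + δ) * q.choose k * k.factorial := by
        rw [Nat.descFactorial_eq_factorial_mul_choose]
        push_cast
        ring

theorem abs_choose_div_choose_mul_sub_le {h δ : ℝ} (hδ : 0 < δ)
    (hq : k ^ 2 * (1 + 1 / δ) ≤ q) (hqn : q ≤ n) (h0 : 0 ≤ h) (hh : h ≤ n.choose k) :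
    |q.choose k / n.choose k * h - q ^ k / n ^ k * h| ≤ δ * q.choose k := by
  have hkn : k ≤ n := (le_of_sq_mul_one_add_one_div_le hδ hq).trans hqn
  have hgap : 0 ≤ (q ^ k / n ^ k : ℝ) - q.choose k / n.choose k :=
    sub_nonneg.2 (choose_div_choose_le_pow_div_pow hkn hqn)
  have hn : (0 : ℝ) < n.choose k := mod_cast Nat.choose_pos hkn
  have hpow : (q ^ k / n ^ k : ℝ) * n.choose k ≤ q ^ k / k.factorial :=
    calc (q ^ k / n ^ k : ℝ) * n.choose k
        ≤ q ^ k / n ^ k * (n ^ k / k.factorial) := by gcongr; exact Nat.choose_le_pow_div k n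
      _ = q ^ k / k.factorial * (n ^ k / n ^ k) := by ring
      _ ≤ q ^ k / k.factorial := mul_le_of_le_one_right (by positivity) (div_self_le_one _)
  rw [abs_sub_comm, ← sub_mul, abs_of_nonneg (mul_nonneg hgap h0)]
  calc (q ^ k / n ^ k - q.choose k / n.choose k : ℝ) * h
      ≤ (q ^ k / n ^ k - q.choose k / n.choose k) * n.choose k := by gcongr
    _ = q ^ k / n ^ k * n.choose k - q.choose k := by rw [sub_mul, div_mul_cancel₀ _ hn.ne']
    _ ≤ δ * q.choose k := by linarith [pow_div_factorial_le_mul_choose hδ hq]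

end Density

theorem random_subset_edge_count_general {V : Type*} [DecidableEq V] {k q : ℕ} {ν : ℝ}
    {W : Finset V} {H : Finset (Finset V)} (hk : 1 ≤ k) (hν : 0 < ν)
    (hq : k ^ 2 * (1 + 2 / ν) ≤ q) (hqW : q ≤ #W) (hH : H ⊆ W.powersetCard k) :
    (1 - 2 * exp (-(ν ^ 2 * q) / (8 * k ^ 2))) * #(W.powersetCard q) ≤
      (#{Q ∈ W.powersetCard q |
        |(#(edgesIn H Q) : ℝ) - q ^ k / #W ^ k * #H| ≤ ν * q.choose k} : ℝ) := by
  have hq_half : k ^ 2 * (1 + 1 / (ν / 2)) ≤ q := by rwa [one_div_div]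
  have hkq : k ≤ q := le_of_sq_mul_one_add_one_div_le (half_pos hν) hq_half
  have hHcard : (#H : ℝ) ≤ (#W).choose k := mod_cast card_powersetCard k W ▸ card_le_card hH
  have hmean := abs_choose_div_choose_mul_sub_le (half_pos hν) hq_half hqW (#H).cast_nonneg hHcard
  have hexp : -((ν / 2) ^ 2 * q) / (2 * k ^ 2) = -(ν ^ 2 * q) / (8 * k ^ 2) := by ring
  set good : Finset V → Prop := fun Q ↦
    |(#(edgesIn H Q) : ℝ) - q ^ k / #W ^ k * #H| ≤ ν * q.choose k
  have hbad : {Q ∈ W.powersetCard q | ¬good Q} ⊆ {Q ∈ W.powersetCard q |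
      ν / 2 * q.choose k ≤ |(#(edgesIn H Q) : ℝ) - q.choose k / (#W).choose k * #H|} := by
    refine monotone_filter_right _ fun Q _ hQ ↦ ?_
    have htriangle := abs_sub_le (#(edgesIn H Q) : ℝ) (q.choose k / (#W).choose k * #H)
      (q ^ k / #W ^ k * #H)
    linarith [not_le.1 hQ]
  have hbadcard : (#{Q ∈ W.powersetCard q | ¬good Q} : ℝ) ≤
      2 * exp (-(ν ^ 2 * q) / (8 * k ^ 2)) * #(W.powersetCard q) :=
    hexp ▸ (Nat.cast_le.2 (card_le_card hbad)).trans
      (card_filter_le_abs_card_edgesIn_sub_le hk hkq hqW hH (half_pos hν).le)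
  have hsplit : (#{Q ∈ W.powersetCard q | good Q} + #{Q ∈ W.powersetCard q | ¬good Q} : ℝ) =
      #(W.powersetCard q) := mod_cast card_filter_add_card_filter_not good
  linarith

open Finset in
/-- Lemma: the number of edges induced on a uniformly random q-subset is concentrated. -/
theorem random_subset_edge_count :
    ∀ k : ℕ, 2 ≤ k → ∀ ν : ℝ, 0 < ν → ∃ q₀ : ℕ, ∀ q n : ℕ, q₀ ≤ q → q ≤ n →
    ∀ (V : Type) [DecidableEq V], ∀ W : Finset V, W.card = n →
    ∀ H : Finset (Finset V), (∀ e ∈ H, e ⊆ W ∧ e.card = k) →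
    haveI : DecidablePred fun Q : Finset V =>
        |(((H.filter fun e => e ⊆ Q).card : ℝ)) - (q : ℝ)^k / (n : ℝ)^k * (H.card : ℝ)|
          ≤ ν * (q.choose k : ℝ) := fun _ => Classical.propDecidable _
    (1 - 2 * Real.exp (-(ν^2 * (q : ℝ)) / (8 * (k : ℝ)^2))) * ((W.powersetCard q).card : ℝ) ≤
      (((W.powersetCard q).filter fun Q =>
        |(((H.filter fun e => e ⊆ Q).card : ℝ)) - (q : ℝ)^k / (n : ℝ)^k * (H.card : ℝ)|
          ≤ ν * (q.choose k : ℝ)).card : ℝ) := by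
  intro k hk ν hν
  refine ⟨⌈k ^ 2 * (1 + 2 / ν)⌉₊, fun q n hq hqn V _ W hW H hH ↦ ?_⟩
  subst hW
  convert random_subset_edge_count_general (by omega) hν (Nat.ceil_le.1 hq) hqn
    fun e he ↦ mem_powersetCard.2 (hH e he)
  rfl
end

section
/- Suppose 0 < 1/m, 1/n ≪ ε ≪ ν, 1/o, 1/k ≤ 1 and k, o ∈ ℕ∖{1}. Suppose P = P(k−1,a) and Q = Q(k−1,a) are both o-bounded (1/a_1, ε, a)-equitable families of partitions of vertex sets V and V' respectively, with |V| = n and |V'| = m. Suppose H^(k−1) ⊆ K_{k−1}(P^(1)) is a (k−1)-graph on V. Then there exist a (k−1)-graph G^(k−1) ⊆ K_{k−1}(P^(1)) on V and a (k−1)-graph F^(k−1) ⊆ K_{k−1}(Q^(1)) on V' such that (F1) |H^(k−1) △ G^(k−1)| ≤ ν·C(n,k−1), and (F2) for each ẑ ∈ Â(k,k−1,a), d(K_k(G^(k−1)) | P̂^(k−1)(ẑ)) = d(K_k(F^(k−1)) | Q̂^(k−1)(ẑ)) ± ν. -/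
namespace HypReg

open Finset

attribute [local instance 10] Classical.propDecidable

noncomputable section

variable {V : Type*} [DecidableEq V]

/-- Representation of a 1-graph: the set of singletons of `U`. -/
def sing (U : Finset V) : Finset (Finset V) :=
  U.image fun v => ({v} : Finset V)

/-- `Kset W j i B`: the i-element subsets of `W` all of whose j-element subsets lie in `B`. -/
def Kset (W : Finset V) (j i : ℕ) (B : Finset (Finset V)) : Finset (Finset V) :=
  (W.powersetCard i).filter fun S => ∀ T ∈ S.powersetCard j, T ∈ B

/-- Clique operator which, at level 1, uses the ambient family `cr` of crossing i-sets. -/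
def KsetC (W : Finset V) (cr : Finset (Finset V)) (j i : ℕ) (B : Finset (Finset V)) :
    Finset (Finset V) :=
  if j = 1 then cr.filter fun S => ∀ v ∈ S, ({v} : Finset V) ∈ B
  else Kset W j i B

/-- `A` (a (j+1)-graph) is (ε,d)-regular with respect to the j-graph `B` (plain clique sets). -/
def RegPair (W : Finset V) (j : ℕ) (ε d : ℝ) (A B : Finset (Finset V)) : Prop :=
  ∀ Q ⊆ B, ε * ((Kset W j (j+1) B).card : ℝ) ≤ ((Kset W j (j+1) Q).card : ℝ) →
    |((A ∩ Kset W j (j+1) Q).card : ℝ) - d * ((Kset W j (j+1) Q).card : ℝ)|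
      ≤ ε * ((Kset W j (j+1) Q).card : ℝ)

/-- (ε,d)-regularity with crossing-aware clique sets. -/
def RegPairC (W : Finset V) (cr : Finset (Finset V)) (j : ℕ) (ε d : ℝ)
    (A B : Finset (Finset V)) : Prop :=
  ∀ Q ⊆ B, ε * ((KsetC W cr j (j+1) B).card : ℝ) ≤ ((KsetC W cr j (j+1) Q).card : ℝ) →
    |((A ∩ KsetC W cr j (j+1) Q).card : ℝ) - d * ((KsetC W cr j (j+1) Q).card : ℝ)|
      ≤ ε * ((KsetC W cr j (j+1) Q).card : ℝ)

/-- Relative density `d(A | B)` of the (j+1)-graph `A` w.r.t. the j-graph `B`. -/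
def dens (W : Finset V) (cr : Finset (Finset V)) (j : ℕ) (A B : Finset (Finset V)) : ℝ :=
  if (KsetC W cr j (j+1) B).card = 0 then 0
  else ((A ∩ KsetC W cr j (j+1) B).card : ℝ) / ((KsetC W cr j (j+1) B).card : ℝ)

/-- `H` is a k-graph on the vertex set `W`. -/
def IsKGraph (W : Finset V) (k : ℕ) (H : Finset (Finset V)) : Prop :=
  ∀ e ∈ H, e ⊆ W ∧ e.card = k

/-- symmetric difference of two hypergraphs -/
def sd (A B : Finset (Finset V)) : Finset (Finset V) := (A \ B) ∪ (B \ A)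

/-- A (candidate) family of partitions: the ground set, the class of each vertex and,
for each level `j ≥ 2`, the class of each crossing j-set. -/
structure PartFam (V : Type*) [DecidableEq V] where
  gnd : Finset V
  vClass : V → Finset V
  cls : ℕ → Finset V → Finset (Finset V)

namespace PartFam

variable (F : PartFam V)

/-- crossing i-sets -/
def cross (i : ℕ) : Finset (Finset V) :=
  (F.gnd.powersetCard i).filter fun S =>
    ∀ u ∈ S, ∀ v ∈ S, u ≠ v → F.vClass u ≠ F.vClass v

/-- the level-j polyad of a vertex set `J` -/
def polyad (j : ℕ) (J : Finset V) : Finset (Finset V) :=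
  if j = 1 then sing (J.sup F.vClass) else (J.powersetCard j).sup (F.cls j)

/-- the clique set `K_j(P̂^{(j-1)}(J))` of the (j−1)-polyad of a crossing j-set `J` -/
def polyCliques (j : ℕ) (J : Finset V) : Finset (Finset V) :=
  KsetC F.gnd (F.cross j) (j-1) j (F.polyad (j-1) J)

/-- `F` is a family of partitions `P(k−1, a)`. -/
def IsFamily (k : ℕ) (a : ℕ → ℕ) : Prop :=
  (∀ v ∈ F.gnd, v ∈ F.vClass v) ∧
  (∀ v ∈ F.gnd, F.vClass v ⊆ F.gnd) ∧
  (∀ u ∈ F.gnd, ∀ v ∈ F.gnd, u ∈ F.vClass v → F.vClass u = F.vClass v) ∧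
  (F.gnd.image F.vClass).card = a 1 ∧ k ≤ a 1 ∧
  ∀ j, 2 ≤ j → j ≤ k - 1 →
    (∀ J ∈ F.cross j, J ∈ F.cls j J) ∧
    (∀ J ∈ F.cross j, ∀ I ∈ F.cls j J, F.cls j I = F.cls j J) ∧
    (∀ J ∈ F.cross j, F.cls j J ⊆ F.polyCliques j J) ∧
    (∀ J ∈ F.cross j, F.polyCliques j J ⊆ F.cross j) ∧
    (∀ J ∈ F.cross j, ((F.polyCliques j J).image (F.cls j)).card = a j)

/-- the regularity condition in the definition of an equitable family of partitions:
all polyad complexes of crossing k-sets are (ε, (1/a_2, …, 1/a_{k−1}))-regular. -/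
def PolyadReg (k : ℕ) (a : ℕ → ℕ) (ε : ℝ) : Prop :=
  ∀ K ∈ F.cross k, ∀ j, 2 ≤ j → j ≤ k - 1 → ∀ J ∈ K.powersetCard j,
    RegPairC F.gnd (F.cross j) (j-1) ε (1 / (a j : ℝ)) (F.polyad j K) (F.polyad (j-1) J)

/-- `(η, ε, a, λ)`-equitable family of partitions -/
def IsEquitable (k : ℕ) (a : ℕ → ℕ) (η ε lam : ℝ) : Prop :=
  1 ≤ η * (a 1 : ℝ) ∧
  (∀ v ∈ F.gnd, |((F.vClass v).card : ℝ) - (F.gnd.card : ℝ) / (a 1 : ℝ)|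
      ≤ lam * (F.gnd.card : ℝ) / (a 1 : ℝ)) ∧
  F.PolyadReg k a ε

/-- `(η, ε, a)`-equitable family of partitions (classes of size ⌊n/a₁⌋ or ⌊n/a₁⌋+1) -/
def IsEquitableE (k : ℕ) (a : ℕ → ℕ) (η ε : ℝ) : Prop :=
  1 ≤ η * (a 1 : ℝ) ∧
  (∀ v ∈ F.gnd, (F.vClass v).card = F.gnd.card / a 1 ∨
      (F.vClass v).card = F.gnd.card / a 1 + 1) ∧
  F.PolyadReg k a ε

/-- `G` is perfectly ε-regular with respect to `F`. -/
def PerfectlyRegular (k : ℕ) (ε : ℝ) (G : Finset (Finset V)) : Prop :=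
  ∀ K ∈ F.cross k, ∃ d : ℝ, 0 ≤ d ∧
    RegPairC F.gnd (F.cross k) (k-1) ε d G (F.polyad (k-1) K)

end PartFam

/-- `a` is a T-bounded vector of length k−1. -/
def BoundedVec (k T : ℕ) (a : ℕ → ℕ) : Prop := ∀ j, 1 ≤ j → j ≤ k - 1 → a j ≤ T

/-- level-j refinement `F^{(j)} ≺ P^{(j)}` between two families of partitions -/
def RefinesAt (F P : PartFam V) (j : ℕ) : Prop :=
  if j = 1 then ∀ v ∈ F.gnd, F.vClass v ⊆ P.vClass v
  else ∀ I ∈ F.cross j,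
    (∃ J ∈ P.cross j, F.cls j I ⊆ P.cls j J) ∨ ∀ S ∈ F.cls j I, S ∉ P.cross j

/-- level-j approximate refinement `F^{(j)} ≺_ν P^{(j)}` -/
def RefinesApproxAt (F P : PartFam V) (j : ℕ) (ν : ℝ) : Prop :=
  if j = 1 then
    ∃ f : Finset V → Finset V,
      (∀ v ∈ F.gnd, f (F.vClass v) ∈ F.gnd.image P.vClass) ∧
      ∑ C ∈ F.gnd.image F.vClass, ((C \ f C).card : ℝ) ≤ ν * (F.gnd.card : ℝ)
  else
    ∃ f : Finset (Finset V) → Finset (Finset V),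
      (∀ I ∈ F.cross j,
        f (F.cls j I) ∈ ((P.cross j).image (P.cls j)) ∪ {F.cross j \ P.cross j}) ∧
      ∑ C ∈ (F.cross j).image (F.cls j), ((C \ f C).card : ℝ) ≤ ν * ((F.cross j).card : ℝ)

/-- The address space: a base set (of class indices) together with a labelling of its subsets. -/
abbrev Addr := Finset ℕ × (Finset ℕ → ℕ)

/-- `x` is an element of the address space `Â(l, j, a)`. -/
def IsAddress (l j : ℕ) (a : ℕ → ℕ) (x : Addr) : Prop :=
  x.1.card = l ∧ (∀ i ∈ x.1, 1 ≤ i ∧ i ≤ a 1) ∧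
  (∀ L : Finset ℕ, L ⊆ x.1 → 2 ≤ L.card → L.card ≤ j → 1 ≤ x.2 L ∧ x.2 L ≤ a L.card) ∧
  (∀ L : Finset ℕ, ¬(L ⊆ x.1 ∧ 2 ≤ L.card ∧ L.card ≤ j) → x.2 L = 0)

/-- restriction `ŷ ≤ x̂` of an address to the base `B`, keeping levels up to `j`. -/
def restrictA (x : Addr) (j : ℕ) (B : Finset ℕ) : Addr :=
  (B, fun L => if L ⊆ B ∧ 2 ≤ L.card ∧ L.card ≤ j then x.2 L else 0)

/-- `d` is a density function of `Â(k, k−1, a)`. -/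
def DensityFun (k : ℕ) (a : ℕ → ℕ) (d : Addr → ℝ) : Prop :=
  ∀ x : Addr, IsAddress k (k-1) a x → 0 ≤ d x ∧ d x ≤ 1

/-- A family of partitions together with an `a`-labelling. -/
structure LabFam (V : Type*) [DecidableEq V] extends PartFam V where
  vIdx : V → ℕ
  lbl : ℕ → Finset V → ℕ

namespace LabFam

variable (F : LabFam V)

/-- `F` is a family of partitions with a legitimate `a`-labelling. -/
def IsLabeled (k : ℕ) (a : ℕ → ℕ) : Prop :=
  F.toPartFam.IsFamily k a ∧
  (∀ v ∈ F.gnd, 1 ≤ F.vIdx v ∧ F.vIdx v ≤ a 1) ∧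
  (∀ u ∈ F.gnd, ∀ v ∈ F.gnd, (F.vIdx u = F.vIdx v ↔ F.vClass u = F.vClass v)) ∧
  ∀ j, 2 ≤ j → j ≤ k - 1 →
    (∀ I ∈ F.toPartFam.cross j, 1 ≤ F.lbl j I ∧ F.lbl j I ≤ a j) ∧
    (∀ I ∈ F.toPartFam.cross j, ∀ I' ∈ F.cls j I, F.lbl j I' = F.lbl j I) ∧
    (∀ I ∈ F.toPartFam.cross j, ∀ I' ∈ F.toPartFam.cross j,
      F.toPartFam.polyad (j-1) I = F.toPartFam.polyad (j-1) I' →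
      F.lbl j I = F.lbl j I' → F.cls j I = F.cls j I')

/-- the address `x̂(L)` (up to level j) of a crossing set `L` -/
def addrOf (j : ℕ) (L : Finset V) : Addr :=
  (L.image F.vIdx,
   fun M => if M ⊆ L.image F.vIdx ∧ 2 ≤ M.card ∧ M.card ≤ j
     then F.lbl M.card (L.filter fun v => F.vIdx v ∈ M) else 0)

/-- the part `P^{(j)}(x̂, b)` -/
def partAt (j : ℕ) (x : Addr) (b : ℕ) : Finset (Finset V) :=
  if j ≤ 1 then (if x.1 = {b} then sing (F.gnd.filter fun v => F.vIdx v = b) else ∅)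
  else (F.toPartFam.cross j).filter fun I => F.addrOf (j-1) I = x ∧ F.lbl j I = b

/-- the polyad `P̂^{(j)}(x̂)` -/
def polyAt (j : ℕ) (x : Addr) : Finset (Finset V) :=
  if j = 1 then sing (F.gnd.filter fun v => F.vIdx v ∈ x.1)
  else (x.1.powersetCard j).sup fun B => F.partAt j (restrictA x (j-1) B) (x.2 B)

/-- `F` is an `(ε, d)`-partition of `H`. -/
def IsDensPartition (k : ℕ) (a : ℕ → ℕ) (ε : ℝ) (d : Addr → ℝ)
    (H : Finset (Finset V)) : Prop :=
  ∀ x : Addr, IsAddress k (k-1) a x →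
    RegPairC F.gnd (F.toPartFam.cross k) (k-1) ε (d x) H (F.polyAt (k-1) x)

/-- `F` is an `(ε, a, d)`-equitable partition of `H`. -/
def IsEquitPartition (k : ℕ) (a : ℕ → ℕ) (ε : ℝ) (d : Addr → ℝ)
    (H : Finset (Finset V)) : Prop :=
  F.IsLabeled k a ∧ F.toPartFam.IsEquitableE k a (1 / (a 1 : ℝ)) ε ∧
  F.IsDensPartition k a ε d H

end LabFam

/-- An ℓ-partite complex: vertex classes and, for each level, a partite graph. -/
structure Cx (V : Type*) [DecidableEq V] (l : ℕ) where
  C : Fin l → Finset V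
  G : ℕ → Finset (Finset V)

namespace Cx

variable {l : ℕ} (X : Cx V l)

def gnd : Finset V := Finset.univ.sup X.C

/-- crossing i-sets with respect to the classes of `X` -/
def cross (i : ℕ) : Finset (Finset V) :=
  (X.gnd.powersetCard i).filter fun S => ∀ t : Fin l, (S ∩ X.C t).card ≤ 1

/-- restriction of the level-j graph to the classes indexed by `L` -/
def restr (j : ℕ) (L : Finset (Fin l)) : Finset (Finset V) :=
  if j = 1 then sing (L.sup X.C) else (X.G j).filter fun e => e ⊆ L.sup X.C

/-- `X` is a complex with levels up to `k`. -/
def IsComplex (k : ℕ) : Prop :=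
  (∀ s t : Fin l, s ≠ t → Disjoint (X.C s) (X.C t)) ∧
  (∀ j, 2 ≤ j → j ≤ k → X.G j ⊆ X.cross j) ∧
  (∀ j, 3 ≤ j → j ≤ k → X.G j ⊆ Kset X.gnd (j-1) j (X.G (j-1)))

/-- `X` is an (ε, (d_2, …, d_k))-regular complex. -/
def IsRegular (k : ℕ) (ε : ℝ) (d : ℕ → ℝ) : Prop :=
  ∀ j, 2 ≤ j → j ≤ k → ∀ L ∈ (Finset.univ : Finset (Fin l)).powersetCard j,
    RegPairC X.gnd (X.cross j) (j-1) ε (d j) (X.G j) (X.restr (j-1) L)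

/-- The restricted complex `X[L]` is (ε, (d_2, …, d_{k−1}, p))-regular. -/
def RestrRegular (k : ℕ) (ε : ℝ) (d : ℕ → ℝ) (L : Finset (Fin l)) (p : ℝ) : Prop :=
  ∀ j, 2 ≤ j → j ≤ k → ∀ L' ∈ L.powersetCard j,
    RegPairC X.gnd (X.cross j) (j-1) ε (if j = k then p else d j)
      (X.restr j L) (X.restr (j-1) L')

/-- clique set `K_i` of the level-j graph of the complex (level 1: crossing sets). -/
def KsetLvl (j i : ℕ) : Finset (Finset V) :=
  if j ≤ 1 then X.cross i else Kset X.gnd j i (X.G j)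

end Cx

/-- `eCL`, `mCL` satisfy the counting lemma of Kohayakawa–Rödl–Skokan. -/
def CountingProp (eCL : ℝ → ℝ → ℕ → ℕ → ℝ) (mCL : ℝ → ℝ → ℕ → ℕ → ℕ) : Prop :=
  ∀ γ d₀ : ℝ, 0 < γ → 0 < d₀ → ∀ k l : ℕ, 2 ≤ k → k ≤ l →
    (0 < eCL γ d₀ k l ∧ eCL γ d₀ k l ≤ 1) ∧
    ∀ (V₀ : Type) [DecidableEq V₀], ∀ (X : Cx V₀ l) (m : ℕ) (lam ε : ℝ) (d : ℕ → ℝ),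
      0 ≤ lam → lam < 1/4 → 0 < ε → ε ≤ eCL γ d₀ k l → mCL γ d₀ k l ≤ m →
      (∀ j, 2 ≤ j → j ≤ k → d₀ ≤ d j) →
      X.IsComplex k →
      (∀ i, |((X.C i).card : ℝ) - (m : ℝ)| ≤ lam * m) →
      X.IsRegular k ε d →
      |((Kset X.gnd k l (X.G k)).card : ℝ) -
        (∏ j ∈ Finset.Icc 2 k, d j ^ (l.choose j)) * ∏ i, ((X.C i).card : ℝ)|
        ≤ γ * ((∏ j ∈ Finset.Icc 2 k, d j ^ (l.choose j)) * ∏ i, ((X.C i).card : ℝ))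

/-- `eRI` is a legitimate function for defining regularity instances. -/
def GoodERI (eRI : ℕ → ℕ → ℝ) : Prop :=
  (∀ t k : ℕ, 1 ≤ t → 2 ≤ k → 0 < eRI t k ∧ eRI t k ≤ 1) ∧
  (∀ k t t' : ℕ, 1 ≤ t → t ≤ t' → eRI t' k ≤ eRI t k) ∧
  (∀ t k k' : ℕ, 2 ≤ k → k ≤ k' → eRI t k' ≤ eRI t k) ∧
  (∀ k : ℕ, Filter.Tendsto (fun t => eRI t k) Filter.atTop (nhds 0)) ∧
  ∃ (eCL : ℝ → ℝ → ℕ → ℕ → ℝ) (mCL : ℝ → ℝ → ℕ → ℕ → ℕ),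
    CountingProp eCL mCL ∧
    ∀ t k : ℕ, 1 ≤ t → 2 ≤ k →
      eRI t k < eCL (1/(t:ℝ)) (1/(t:ℝ)) (k-1) k / (4 * (t:ℝ) ^ (4^k))

/-- `max_i a_i` over `i ∈ [k−1]` -/
def maxA (k : ℕ) (a : ℕ → ℕ) : ℕ := (Finset.Icc 1 (k-1)).sup a

/-- `(ε, a, d)` is a regularity instance. -/
def RegInstance (eRI : ℕ → ℕ → ℝ) (k : ℕ) (ε : ℝ) (a : ℕ → ℕ) (d : Addr → ℝ) : Prop :=
  2 ≤ k ∧ (∀ j, 1 ≤ j → j ≤ k - 1 → 1 ≤ a j) ∧ 0 < ε ∧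
  ε ≤ eRI (maxA k a) k ∧ DensityFun k a d

section Counting

variable {W : Type} [Fintype W] [DecidableEq W]

/-- `S` spans an induced copy of `Fg` in `H` (both k-graphs). -/
def InducedCopy (Fg : Finset (Finset W)) (H : Finset (Finset V)) (k : ℕ) (S : Finset V) :
    Prop :=
  ∃ e : W → V, Function.Injective e ∧ Finset.univ.image e = S ∧
    ∀ A : Finset W, A.card = k → (A.image e ∈ H ↔ A ∈ Fg)

/-- the size of the automorphism group of `Fg` -/
def AutCount (Fg : Finset (Finset W)) : ℕ :=
  Nat.card {π : W ≃ W // ∀ A : Finset W, A.image π ∈ Fg ↔ A ∈ Fg}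

/-- the number `IC_σ(F, H)` of σ-induced copies of `Fg` in the complex `X` -/
def ICosig {l : ℕ} (X : Cx V l) (k : ℕ) (Fg : Finset (Finset W)) (σ : W ≃ Fin l) : ℕ :=
  Set.ncard {e : W → V |
    (∀ v, e v ∈ X.C (σ v)) ∧
    Finset.univ.image e ∈ X.KsetLvl (k-1) l ∧
    ∀ A : Finset W, A.card = k → (A.image e ∈ X.G k ↔ A ∈ Fg)}

/-- `IC(F, d, x̂, σ)` -/
def ICs (Fg : Finset (Finset W)) (k l : ℕ) (a : ℕ → ℕ) (d : Addr → ℝ)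
    (x : Addr) (σ : W → ℕ) : ℝ :=
  (∏ B ∈ x.1.powersetCard k,
    if ∃ A ∈ Fg, A.image σ = B then d (restrictA x (k-1) B)
    else 1 - d (restrictA x (k-1) B)) *
  ∏ j ∈ Finset.Icc 2 (k-1), ((a j : ℝ) ^ (l.choose j))⁻¹

/-- `IC(F, d, x̂)` -/
def ICa (Fg : Finset (Finset W)) (k l : ℕ) (a : ℕ → ℕ) (d : Addr → ℝ) (x : Addr) : ℝ :=
  (AutCount Fg : ℝ)⁻¹ *
    ∑ᶠ σ ∈ {σ : W → ℕ | Set.BijOn σ Set.univ ↑x.1}, ICs Fg k l a d x σ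

/-- `IC(F, d)` -/
def IC (Fg : Finset (Finset W)) (k l : ℕ) (a : ℕ → ℕ) (d : Addr → ℝ) : ℝ :=
  (((a 1).choose l : ℝ))⁻¹ * ∑ᶠ x ∈ {x : Addr | IsAddress l (k-1) a x}, ICa Fg k l a d x

end Counting

end

end HypReg

/-!
Index the transversals of the vertex classes by points `x` of a product space, so that the cells of
the partitions become labels of the partial transversals. Equitability makes these labels
quasirandom: given the labels of its proper subsets, a partial transversal gets each label with the
expected conditional probability, up to a small error in a cut norm. Hence the counting lemma
determines the frequencies of all patterns of labels.

A hypergraph is then a colouring of the `j`-sets, which is copied by induction on `j`. Weak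
regularity finds a colouring of the facets which predicts the given colouring up to a small cut
norm; the facet colouring is copied by the induction hypothesis, and the `j`-sets of the target are
coloured at random with the predicted probabilities. The counting lemma, applied on both sides,
shows that the pattern frequencies agree, and so do the densities of the polyads.
-/

namespace HypReg

open Finset
open scoped BigOperators

/-! ### Indicators and conditional averages -/

section Averages

/-- The real-valued indicator of a proposition. -/
noncomputable def ind (p : Prop) : ℝ := open Classical in if p then 1 else 0

lemma ind_true {p : Prop} (h : p) : ind p = 1 := by simp [ind, h]

lemma ind_false {p : Prop} (h : ¬p) : ind p = 0 := by simp [ind, h]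

lemma ind_mem_unitInterval (p : Prop) : ind p ∈ unitInterval := by
  by_cases h : p <;> simp [ind, h]

lemma ind_nonneg (p : Prop) : 0 ≤ ind p := (ind_mem_unitInterval p).1

lemma ind_le_one (p : Prop) : ind p ≤ 1 := (ind_mem_unitInterval p).2

lemma ind_and (p q : Prop) : ind (p ∧ q) = ind p * ind q := by
  by_cases h : p <;> by_cases h' : q <;> simp [ind, h, h']

lemma ind_congr {p q : Prop} (h : p ↔ q) : ind p = ind q := by rw [propext h]

lemma ind_forall_mem {α : Type*} (s : Finset α) (p : α → Prop) :
    ind (∀ i ∈ s, p i) = ∏ i ∈ s, ind (p i) := by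
  classical
  induction s using Finset.induction_on with
  | empty => simp [ind]
  | insert a s ha ih => rw [prod_insert ha, ← ih, ← ind_and, forall_mem_insert]

lemma ind_forall {α : Type*} [Fintype α] (p : α → Prop) : ind (∀ i, p i) = ∏ i, ind (p i) := by
  simpa using ind_forall_mem univ p

lemma sum_ind_eq_mul {α : Type*} [Fintype α] (a : α) (f : α → ℝ) :
    ∑ b, ind (a = b) * f b = f a := by
  classical
  simp [ind]

lemma sum_ind_eq {α : Type*} [Fintype α] (a : α) : ∑ b, ind (a = b) = 1 := by
  simpa using sum_ind_eq_mul a 1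

lemma prod_mem_unitInterval {α : Type*} {s : Finset α} {f : α → ℝ}
    (hf : ∀ a ∈ s, f a ∈ unitInterval) : ∏ a ∈ s, f a ∈ unitInterval :=
  prod_mem (S := unitInterval.submonoid) hf

lemma sq_expect_mul_le {X : Type*} [Fintype X] {d u : X → ℝ}
    (hu : ∀ x, |u x| ≤ 1) : (𝔼 x, d x * u x) ^ 2 ≤ 𝔼 x, d x ^ 2 := by
  rcases isEmpty_or_nonempty X with _ | _
  · simp
  calc (𝔼 x, d x * u x) ^ 2 ≤ 𝔼 x, (d x * u x) ^ 2 := by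
        set m := 𝔼 x, d x * u x with hm
        have hvar : 0 ≤ 𝔼 x, (d x * u x - m) ^ 2 := expect_nonneg fun x _ => sq_nonneg _
        have hexpand : 𝔼 x, (d x * u x - m) ^ 2 = 𝔼 x, (d x * u x) ^ 2 - m ^ 2 := by
          simp only [sub_sq, mul_right_comm 2 _ m, expect_add_distrib, expect_sub_distrib,
            ← mul_expect, ← hm, Fintype.expect_const]
          ring
        linarith
    _ ≤ 𝔼 x, d x ^ 2 := expect_le_expect fun x _ => by
        rw [mul_pow]
        exact mul_le_of_le_one_right (sq_nonneg _) ((sq_le_one_iff_abs_le_one _).2 (hu x))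

lemma abs_expect_comp_sub_le {X X' T : Type*} [Fintype X] [Fintype X'] [Fintype T]
    {Φ : X → T} {Φ' : X' → T} {δ : ℝ}
    (h : ∀ t, |𝔼 x, ind (Φ x = t) - 𝔼 x, ind (Φ' x = t)| ≤ δ) {f : T → ℝ} (hf : ∀ t, |f t| ≤ 1) :
    |𝔼 x, f (Φ x) - 𝔼 x, f (Φ' x)| ≤ Fintype.card T * δ := by
  have hlaw : 𝔼 x, f (Φ x) - 𝔼 x, f (Φ' x) =
      ∑ t, (𝔼 x, ind (Φ x = t) - 𝔼 x, ind (Φ' x = t)) * f t := by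
    simp only [sub_mul, sum_sub_distrib, expect_mul, ← expect_sum_comm, sum_ind_eq_mul]
  rw [hlaw]
  calc |∑ t, (𝔼 x, ind (Φ x = t) - 𝔼 x, ind (Φ' x = t)) * f t|
      ≤ ∑ t, |(𝔼 x, ind (Φ x = t) - 𝔼 x, ind (Φ' x = t)) * f t| := abs_sum_le_sum_abs _ _
    _ ≤ ∑ _t : T, δ := sum_le_sum fun t _ => by
        rw [abs_mul]
        exact (mul_le_of_le_one_right (abs_nonneg _) (hf t)).trans (h t)
    _ = Fintype.card T * δ := by simp

variable {X D : Type*} [Fintype X]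

/-- The conditional average of `f` given `Φ`: its value at `x` is the mean of `f` over the fibre
of `Φ` through `x`. -/
noncomputable def condAvg (Φ : X → D) (f : X → ℝ) (x : X) : ℝ :=
  (∑ y, ind (Φ x = Φ y) * f y) / ∑ y, ind (Φ x = Φ y)

lemma sum_ind_fiber_pos (Φ : X → D) (x : X) : 0 < ∑ y, ind (Φ x = Φ y) :=
  sum_pos' (fun y _ => ind_nonneg _) ⟨x, mem_univ _, by simp [ind]⟩

lemma condAvg_factorsThrough (Φ : X → D) (f : X → ℝ) : (condAvg Φ f).FactorsThrough Φ :=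
  fun x y h => by simp only [condAvg, h]

lemma condAvg_congr {D' : Type*} {Φ : X → D} {Φ' : X → D'} (h : ∀ x y, Φ x = Φ y ↔ Φ' x = Φ' y)
    (f : X → ℝ) : condAvg Φ f = condAvg Φ' f := by
  funext x
  simp only [condAvg, h]

lemma condAvg_mem_unitInterval (Φ : X → D) {f : X → ℝ} (hf : ∀ x, f x ∈ unitInterval) (x : X) :
    condAvg Φ f x ∈ unitInterval :=
  ⟨div_nonneg (sum_nonneg fun y _ => mul_nonneg (ind_nonneg _) (hf y).1)
      (sum_ind_fiber_pos Φ x).le,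
    (div_le_one (sum_ind_fiber_pos Φ x)).2 <| sum_le_sum fun y _ =>
      mul_le_of_le_one_right (ind_nonneg _) (hf y).2⟩

lemma expect_condAvg_mul (Φ : X → D) (f : X → ℝ) {g : X → ℝ} (hg : g.FactorsThrough Φ) :
    𝔼 x, condAvg Φ f x * g x = 𝔼 x, f x * g x := by
  have hexpand : ∀ x, condAvg Φ f x * g x =
      ∑ y, f y * g y * (ind (Φ y = Φ x) / ∑ z, ind (Φ y = Φ z)) := by
    intro x
    rw [condAvg, div_mul_eq_mul_div, sum_mul, sum_div]
    refine sum_congr rfl fun y _ => ?_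
    by_cases h : Φ x = Φ y
    · rw [ind_true h, ind_true h.symm, h, hg h]
      ring
    · rw [ind_false h, ind_false (Ne.symm h)]
      ring
  rw [Fintype.expect_eq_sum_div_card, Fintype.expect_eq_sum_div_card]
  congr 1
  simp only [hexpand]
  rw [sum_comm]
  refine sum_congr rfl fun y _ => ?_
  rw [← mul_sum, ← sum_div, div_self (sum_ind_fiber_pos Φ y).ne', mul_one]

section Refinement

variable {D' : Type*} {Φ : X → D} {Φ' : X → D'}

lemma expect_condAvg_sub_sq (f : X → ℝ) (hΦ : Φ.FactorsThrough Φ') :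
    𝔼 x, (condAvg Φ' f x - condAvg Φ f x) ^ 2 =
      𝔼 x, condAvg Φ' f x ^ 2 - 𝔼 x, condAvg Φ f x ^ 2 := by
  have hfine : 𝔼 x, condAvg Φ' f x * condAvg Φ f x = 𝔼 x, f x * condAvg Φ f x :=
    expect_condAvg_mul Φ' f fun _ _ h => condAvg_factorsThrough Φ f (hΦ h)
  have hcoarse : 𝔼 x, condAvg Φ f x ^ 2 = 𝔼 x, f x * condAvg Φ f x := by
    simp only [sq, expect_condAvg_mul Φ f (condAvg_factorsThrough Φ f)]
  simp only [sub_sq, mul_assoc, expect_add_distrib, expect_sub_distrib, ← mul_expect, hfine,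
    hcoarse]
  ring

lemma sq_expect_sub_condAvg_mul_le (f : X → ℝ) (hΦ : Φ.FactorsThrough Φ') {u : X → ℝ}
    (hu : u.FactorsThrough Φ') (hu1 : ∀ x, |u x| ≤ 1) :
    (𝔼 x, (f x - condAvg Φ f x) * u x) ^ 2 ≤
      𝔼 x, condAvg Φ' f x ^ 2 - 𝔼 x, condAvg Φ f x ^ 2 := by
  have hproj : 𝔼 x, (f x - condAvg Φ f x) * u x =
      𝔼 x, (condAvg Φ' f x - condAvg Φ f x) * u x := by
    simp only [sub_mul, expect_sub_distrib, expect_condAvg_mul Φ' f hu]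
  rw [hproj, ← expect_condAvg_sub_sq f hΦ]
  exact sq_expect_mul_le hu1

end Refinement

-- After replacing `h` by its conditional average, the extremal `u` is the indicator of a sign.
lemma abs_expect_mul_le_of_forall_ind {Φ : X → D} {h u : X → ℝ} {c : ℝ}
    (hu : u.FactorsThrough Φ) (hu1 : ∀ x, u x ∈ unitInterval)
    (hc : ∀ A : X → Prop, A.FactorsThrough Φ → |𝔼 x, h x * ind (A x)| ≤ c) :
    |𝔼 x, h x * u x| ≤ c := by
  set g := condAvg Φ h
  have htest : ∀ q : ℝ → Prop, |𝔼 x, g x * ind (q (g x))| ≤ c := fun q => by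
    have hq : Function.FactorsThrough (fun x => q (g x)) Φ := fun x y hxy =>
      congrArg q (condAvg_factorsThrough Φ h hxy)
    rw [expect_condAvg_mul Φ h fun x y hxy => congrArg ind (hq hxy)]
    exact hc _ hq
  rw [← expect_condAvg_mul Φ h hu, abs_le]
  constructor
  · refine (abs_le.1 (htest (· < 0))).1.trans (expect_le_expect fun x _ => ?_)
    by_cases hx : g x < 0
    · rw [ind_true hx]
      nlinarith [(hu1 x).2]
    · rw [ind_false hx]
      nlinarith [(hu1 x).1]
  · refine le_trans (expect_le_expect fun x _ => ?_) (abs_le.1 (htest (0 < ·))).2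
    by_cases hx : 0 < g x
    · rw [ind_true hx]
      nlinarith [(hu1 x).2]
    · rw [ind_false hx]
      nlinarith [(hu1 x).1]

end Averages

/-! ### Cut norms on product spaces -/

section CutNorm

variable {ι : Type*} {V : ι → Type*}

lemma dependsOn_comp {β γ : Type*} {g : (∀ i, V i) → β} {S : Set ι} (hg : DependsOn g S)
    (f : β → γ) : DependsOn (fun x => f (g x)) S :=
  fun _ _ h => congrArg f (hg h)

section Piecewise

variable [DecidableEq ι] {β : Type*} {g : (∀ i, V i) → β}

lemma dependsOn_comp_piecewise {S : Set ι} (hg : DependsOn g S) (B : Finset ι) (y : ∀ i, V i) :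
    DependsOn (fun x => g (B.piecewise x y)) (B ∩ S) := by
  intro x x' h
  refine hg fun i hi => ?_
  by_cases hB : i ∈ B
  · simpa [hB] using h i ⟨hB, hi⟩
  · simp [hB]

lemma apply_piecewise_of_dependsOn {B : Finset ι} (hg : DependsOn g B) (x y : ∀ i, V i) :
    g (B.piecewise x y) = g x :=
  hg fun i hi => by simp [show i ∈ B from hi]

end Piecewise

/-- A cylinder product over `B` is a product of `[0,1]`-valued functions indexed by `i ∈ B`, the
`i`-th of which does not depend on the `i`-th coordinate. -/
def IsCylinderProduct (B : Finset ι) (g : (∀ i, V i) → ℝ) : Prop :=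
  ∃ u : ι → (∀ i, V i) → ℝ, (∀ i ∈ B, DependsOn (u i) ({i}ᶜ : Set ι)) ∧
    (∀ i ∈ B, ∀ x, u i x ∈ unitInterval) ∧ ∀ x, g x = ∏ i ∈ B, u i x

namespace IsCylinderProduct

variable {B : Finset ι} {g g' : (∀ i, V i) → ℝ}

lemma one : IsCylinderProduct B (fun _ : ∀ i, V i => 1) :=
  ⟨fun _ _ => 1, fun _ _ _ _ _ => rfl, by simp, by simp⟩

lemma mul (hg : IsCylinderProduct B g) (hg' : IsCylinderProduct B g') :
    IsCylinderProduct B (fun x => g x * g' x) := by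
  obtain ⟨u, hu, hu1, h⟩ := hg
  obtain ⟨u', hu', hu1', h'⟩ := hg'
  refine ⟨fun i x => u i x * u' i x, fun i hi x y hxy => ?_,
    fun i hi x => unitInterval.mul_mem (hu1 i hi x) (hu1' i hi x), fun x => ?_⟩
  · simp only [hu i hi hxy, hu' i hi hxy]
  · simp only [h, h', prod_mul_distrib]

lemma prod {α : Type*} {s : Finset α} {g : α → (∀ i, V i) → ℝ}
    (hg : ∀ a ∈ s, IsCylinderProduct B (g a)) :
    IsCylinderProduct B (fun x => ∏ a ∈ s, g a x) := by
  classical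
  induction s using Finset.induction_on with
  | empty => simpa using one
  | insert a s ha ih =>
    simp only [prod_insert ha]
    exact (hg a (by simp)).mul (ih fun b hb => hg b (by simp [hb]))

lemma of_dependsOn {S : Finset ι} (hg : DependsOn g S) (hg1 : ∀ x, g x ∈ unitInterval)
    (hBS : ¬B ⊆ S) : IsCylinderProduct B g := by
  classical
  obtain ⟨a, haB, haS⟩ := not_subset.1 hBS
  refine ⟨fun i => if i = a then g else 1, fun i _ => ?_, fun i _ x => ?_, fun x => ?_⟩
  · rcases eq_or_ne i a with rfl | hia
    · simp only [if_true]
      refine hg.mono fun b hb => ?_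
      rintro rfl
      exact haS hb
    · simp only [hia, if_false]
      exact fun _ _ _ => rfl
  · dsimp only
    split_ifs
    exacts [hg1 x, unitInterval.one_mem]
  · simp only [ite_apply, Pi.one_apply, prod_ite_eq', haB, if_true]

end IsCylinderProduct

variable [Fintype ι] [DecidableEq ι] [∀ i, Fintype (V i)]

lemma expect_expect_piecewise (B : Finset ι) (g : (∀ i, V i) → ℝ) :
    𝔼 y, 𝔼 x, g (B.piecewise x y) = 𝔼 x, g x := by
  rcases isEmpty_or_nonempty (∀ i, V i) with _ | _
  · simp
  have hswap : Function.Involutive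
      (fun p : (∀ i, V i) × (∀ i, V i) => (B.piecewise p.1 p.2, B.piecewise p.2 p.1)) := by
    rintro ⟨x, y⟩
    ext i <;> by_cases hi : i ∈ B <;> simp [hi]
  calc 𝔼 y, 𝔼 x, g (B.piecewise x y)
      = 𝔼 p : (∀ i, V i) × (∀ i, V i), g (B.piecewise p.1 p.2) := by
        rw [expect_comm, ← univ_product_univ, expect_product]
    _ = 𝔼 p : (∀ i, V i) × (∀ i, V i), g p.1 :=
        Fintype.expect_equiv hswap.toPerm _ _ fun _ => rfl
    _ = 𝔼 x, g x := by
        rw [← univ_product_univ, expect_product]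
        simp only [Fintype.expect_const]

/-- `h` has cut norm at most `c` over `B`: it correlates by at most `c` with every product of
indicators, indexed by `i ∈ B`, the `i`-th of which depends only on the coordinates in
`B \ {i}`. -/
def CutLE (B : Finset ι) (h : (∀ i, V i) → ℝ) (c : ℝ) : Prop :=
  ∀ u : ι → (∀ i, V i) → Prop, (∀ i ∈ B, DependsOn (u i) (B.erase i)) →
    |𝔼 x, h x * ind (∀ i ∈ B, u i x)| ≤ c

namespace CutLE

variable {B : Finset ι} {h h' : (∀ i, V i) → ℝ} {c c' : ℝ}

lemma mono (hc : CutLE B h c) (hcc : c ≤ c') : CutLE B h c' := fun u hu => (hc u hu).trans hcc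

lemma abs_expect_le (hc : CutLE B h c) : |𝔼 x, h x| ≤ c := by
  simpa [ind_true] using hc (fun _ _ => True) fun _ _ _ _ _ => rfl

lemma nonneg (hc : CutLE B h c) : 0 ≤ c := (abs_nonneg _).trans hc.abs_expect_le

lemma add (hc : CutLE B h c) (hc' : CutLE B h' c') :
    CutLE B (fun x => h x + h' x) (c + c') := by
  intro u hu
  simp only [add_mul, expect_add_distrib]
  exact (abs_add_le _ _).trans (add_le_add (hc u hu) (hc' u hu))

lemma sum {α : Type*} {s : Finset α} {h : α → (∀ i, V i) → ℝ}
    (hc : ∀ a ∈ s, CutLE B (h a) c) : CutLE B (fun x => ∑ a ∈ s, h a x) (#s * c) := by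
  intro u hu
  simp only [sum_mul, expect_sum_comm]
  refine (abs_sum_le_sum_abs _ _).trans ((sum_le_sum fun a ha => hc a ha u hu).trans ?_)
  simp

lemma const_mul (hc : CutLE B h c) (t : ℝ) : CutLE B (fun x => t * h x) (|t| * c) := by
  intro u hu
  simp only [mul_assoc, ← mul_expect, abs_mul]
  exact mul_le_mul_of_nonneg_left (hc u hu) (abs_nonneg t)

lemma abs_expect_mul_prod_mul_ind_le (hc : CutLE B h c) {v : ι → (∀ i, V i) → ℝ}
    (hv : ∀ i ∈ B, DependsOn (v i) (B.erase i)) (hv1 : ∀ i ∈ B, ∀ x, v i x ∈ unitInterval)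
    {T : Finset ι} (hT : T ⊆ B) (u : ι → (∀ i, V i) → Prop)
    (hu : ∀ i ∈ B, DependsOn (u i) (B.erase i)) :
    |𝔼 x, h x * ((∏ i ∈ T, v i x) * ind (∀ i ∈ B \ T, u i x))| ≤ c := by
  induction T using Finset.induction_on generalizing u with
  | empty => simpa using hc u hu
  | insert a T ha ih =>
    have haB : a ∈ B := hT (mem_insert_self a T)
    have hpull : ∀ x, h x * ((∏ i ∈ insert a T, v i x) * ind (∀ i ∈ B \ insert a T, u i x)) =
        h x * ((∏ i ∈ T, v i x) * ind (∀ i ∈ B \ insert a T, u i x)) * v a x := fun x => by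
      rw [prod_insert ha]
      ring
    simp only [hpull]
    refine abs_expect_mul_le_of_forall_ind (dependsOn_iff_factorsThrough.1 (hv a haB))
      (hv1 a haB) fun A hA => ?_
    have hsplit : B \ T = insert a (B \ insert a T) := by
      rw [insert_eq, insert_eq, sdiff_union_distrib]
      ext i
      by_cases hia : i = a <;> simp [hia, haB, ha]
    have hupdate : ∀ i ∈ B, DependsOn (Function.update u a A i) (B.erase i) := fun i hi => by
      rcases eq_or_ne i a with rfl | hia
      · rw [Function.update_self]
        exact dependsOn_iff_factorsThrough.2 hA
      · rw [Function.update_of_ne hia]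
        exact hu i hi
    have hother : ∀ i ∈ B \ insert a T, Function.update u a A i = u i := fun i hi =>
      Function.update_of_ne (by rintro rfl; simp at hi) _ _
    refine (congrArg abs (expect_congr rfl fun x _ => ?_)).trans_le
      (ih ((subset_insert a T).trans hT) _ hupdate)
    rw [hsplit, ind_forall_mem, ind_forall_mem, prod_insert (by simp), Function.update_self,
      prod_congr rfl fun i hi => congrArg ind (congrFun (hother i hi) x)]
    ring

lemma abs_expect_mul_prod_le (hc : CutLE B h c) {v : ι → (∀ i, V i) → ℝ}
    (hv : ∀ i ∈ B, DependsOn (v i) (B.erase i)) (hv1 : ∀ i ∈ B, ∀ x, v i x ∈ unitInterval) :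
    |𝔼 x, h x * ∏ i ∈ B, v i x| ≤ c := by
  simpa [ind_true] using hc.abs_expect_mul_prod_mul_ind_le hv hv1 subset_rfl (fun _ _ => True)
    fun _ _ _ _ _ => rfl

-- Fixing the coordinates outside `B` turns a cylinder product into a test for the cut norm.
lemma abs_expect_mul_isCylinderProduct_le (hc : CutLE B h c) (hB : DependsOn h B)
    {g : (∀ i, V i) → ℝ} (hg : IsCylinderProduct B g) : |𝔼 x, h x * g x| ≤ c := by
  rcases isEmpty_or_nonempty (∀ i, V i) with _ | _
  · simpa using hc.nonneg
  obtain ⟨u, hu, hu1, hgu⟩ := hg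
  rw [← expect_expect_piecewise B]
  refine (Finset.abs_expect_le _ _).trans (expect_le univ_nonempty fun y _ => ?_)
  have hfixed := hc.abs_expect_mul_prod_le (v := fun i x => u i (B.piecewise x y)) (fun i hi =>
    (dependsOn_comp_piecewise (hu i hi) B y).mono fun b hb => by simpa [and_comm] using hb)
    fun i hi x => hu1 i hi _
  simpa only [hgu, apply_piecewise_of_dependsOn hB] using hfixed

end CutLE

lemma abs_expect_mul_prod_sub_le {κ : Type*} {τ : Finset κ} {S : κ → Finset ι}
    {F G : κ → (∀ i, V i) → ℝ} {c : ℝ}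
    (hF : ∀ t ∈ τ, DependsOn (F t) (S t)) (hG : ∀ t ∈ τ, DependsOn (G t) (S t))
    (hF1 : ∀ t ∈ τ, ∀ x, F t x ∈ unitInterval) (hG1 : ∀ t ∈ τ, ∀ x, G t x ∈ unitInterval)
    (hcut : ∀ t ∈ τ, CutLE (S t) (fun x => F t x - G t x) c)
    (hanti : (τ : Set κ).Pairwise fun s t => ¬S s ⊆ S t)
    {E : (∀ i, V i) → ℝ} (hE : ∀ t ∈ τ, IsCylinderProduct (S t) E) :
    |𝔼 x, E x * ∏ t ∈ τ, F t x - 𝔼 x, E x * ∏ t ∈ τ, G t x| ≤ #τ * c := by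
  classical
  induction τ using Finset.induction_on generalizing E with
  | empty => simp
  | insert s τ hs ih =>
    rw [coe_insert, Set.pairwise_insert_of_notMem (by simpa using hs)] at hanti
    rw [forall_mem_insert] at hF hG hF1 hG1 hcut hE
    have hsplit : 𝔼 x, E x * ∏ t ∈ insert s τ, F t x - 𝔼 x, E x * ∏ t ∈ insert s τ, G t x =
        𝔼 x, (F s x - G s x) * (E x * ∏ t ∈ τ, F t x) +
        (𝔼 x, E x * G s x * ∏ t ∈ τ, F t x - 𝔼 x, E x * G s x * ∏ t ∈ τ, G t x) := by
      simp only [← expect_sub_distrib, ← expect_add_distrib, prod_insert hs]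
      exact expect_congr rfl fun x _ => by ring
    have hreplace : |𝔼 x, (F s x - G s x) * (E x * ∏ t ∈ τ, F t x)| ≤ c :=
      hcut.1.abs_expect_mul_isCylinderProduct_le
        (fun x y hxy => by simp only [hF.1 hxy, hG.1 hxy])
        (hE.1.mul (.prod fun t ht => .of_dependsOn (hF.2 t ht) (hF1.2 t ht) (hanti.2 t ht).1))
    have hrest := ih hF.2 hG.2 hF1.2 hG1.2 hcut.2 hanti.1 fun t ht =>
      (hE.2 t ht).mul (.of_dependsOn hG.1 hG1.1 (hanti.2 t ht).2)
    rw [hsplit, card_insert_of_notMem hs]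
    push_cast
    linarith [abs_add_le (𝔼 x, (F s x - G s x) * (E x * ∏ t ∈ τ, F t x))
      (𝔼 x, E x * G s x * ∏ t ∈ τ, F t x - 𝔼 x, E x * G s x * ∏ t ∈ τ, G t x)]

/-- A labelling `l` of all partial transversals is `ε`-quasirandom with densities `p` if, for each
index set `B`, the label of the transversal of `B` equals `a` with density `p B a`, up to an error
of cut norm at most `ε`. -/
structure IsQuasirandom {L : Type*} (l : Finset ι → (∀ i, V i) → L) (p : Finset ι → L → ℝ)
    (ε : ℝ) : Prop where
  dependsOn : ∀ B, DependsOn (l B) B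
  cutLE : ∀ B a, CutLE B (fun x => ind (l B x = a) - p B a) ε

namespace IsQuasirandom

variable {L : Type*} {l : Finset ι → (∀ i, V i) → L} {p : Finset ι → L → ℝ} {ε ε' : ℝ}

lemma mono (hl : IsQuasirandom l p ε) (hε : ε ≤ ε') : IsQuasirandom l p ε' :=
  ⟨hl.dependsOn, fun B a => (hl.cutLE B a).mono hε⟩

lemma dependsOn_ind (hl : IsQuasirandom l p ε) (B : Finset ι) (a : L) :
    DependsOn (fun x => ind (l B x = a)) B :=
  dependsOn_comp (hl.dependsOn B) fun b => ind (b = a)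

-- A set of maximal cardinality is not contained in any of the others, so that the other labels
-- form a cylinder product over it.
lemma abs_expect_prod_ind_sub_le [∀ i, Nonempty (V i)] (hl : IsQuasirandom l p ε)
    (hp : ∀ B a, p B a ∈ unitInterval) (a : Finset ι → L) (τ : Finset (Finset ι)) :
    |𝔼 x, ∏ B ∈ τ, ind (l B x = a B) - ∏ B ∈ τ, p B (a B)| ≤ #τ * ε := by
  refine induction_on_max_value card τ (by simp) fun A τ hA hmax ih => ?_
  have hothers : IsCylinderProduct A fun x => ∏ B ∈ τ, ind (l B x = a B) :=
    .prod fun B hB => .of_dependsOn (hl.dependsOn_ind B (a B)) (fun x => ind_mem_unitInterval _)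
      fun hAB => hA (eq_of_subset_of_card_le hAB (hmax B hB) ▸ hB)
  have hreplace : |𝔼 x, (ind (l A x = a A) - p A (a A)) * ∏ B ∈ τ, ind (l B x = a B)| ≤ ε :=
    (hl.cutLE A (a A)).abs_expect_mul_isCylinderProduct_le
      (dependsOn_comp (hl.dependsOn_ind A (a A)) (· - p A (a A))) hothers
  have hrest : |p A (a A) * (𝔼 x, ∏ B ∈ τ, ind (l B x = a B) - ∏ B ∈ τ, p B (a B))| ≤ #τ * ε := by
    rw [abs_mul, abs_of_nonneg (hp _ _).1]
    exact (mul_le_of_le_one_left (abs_nonneg _) (hp _ _).2).trans ih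
  have hsplit : 𝔼 x, ∏ B ∈ insert A τ, ind (l B x = a B) - ∏ B ∈ insert A τ, p B (a B) =
      𝔼 x, (ind (l A x = a A) - p A (a A)) * ∏ B ∈ τ, ind (l B x = a B) +
        p A (a A) * (𝔼 x, ∏ B ∈ τ, ind (l B x = a B) - ∏ B ∈ τ, p B (a B)) := by
    simp only [prod_insert hA, sub_mul, expect_sub_distrib, ← mul_expect]
    ring
  rw [hsplit, card_insert_of_notMem hA]
  push_cast
  linarith [abs_add_le (𝔼 x, (ind (l A x = a A) - p A (a A)) * ∏ B ∈ τ, ind (l B x = a B))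
    (p A (a A) * (𝔼 x, ∏ B ∈ τ, ind (l B x = a B) - ∏ B ∈ τ, p B (a B)))]

end IsQuasirandom

end CutNorm

/-! ### Weak regularity -/

section WeakRegularity

variable {ι : Type*} [DecidableEq ι] {V : ι → Type*} {C : Type*}

/-- The colours of the facets `B \ {i}`, `i ∈ B`, of a transversal of `B`. -/
def facets {X : Type*} (ψ : Finset ι → X → C) (B : Finset ι) (x : X) (i : B) : C :=
  ψ (B.erase i) x

lemma facets_eq_iff {X : Type*} {ψ : Finset ι → X → C} {B : Finset ι} {x y : X} :
    facets ψ B x = facets ψ B y ↔ ∀ i ∈ B, ψ (B.erase i) x = ψ (B.erase i) y := by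
  simp [funext_iff, facets]

lemma dependsOn_facets {ψ : Finset ι → (∀ i, V i) → C} (hψ : ∀ A, DependsOn (ψ A) A)
    (B : Finset ι) : DependsOn (facets ψ B) B :=
  fun _ _ h => facets_eq_iff.2 fun i _ => hψ _ fun j hj => h j (erase_subset i B hj)

lemma exists_dependsOn_erase_iff {B : Finset ι} {u : ι → (∀ i, V i) → Prop}
    (hu : ∀ i ∈ B, DependsOn (u i) (B.erase i)) :
    ∃ b : Finset ι → (∀ i, V i) → Prop, (∀ A, DependsOn (b A) A) ∧
      ∀ i ∈ B, ∀ x, b (B.erase i) x ↔ u i x := by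
  refine ⟨fun A x => ∃ i ∈ B, A = B.erase i ∧ u i x, fun A x y hxy => propext ?_, fun i hi x => ?_⟩
  · refine exists_congr fun i => and_congr_right fun hi => and_congr_right fun hA => ?_
    rw [hu i hi (hA ▸ hxy)]
  · constructor
    · rintro ⟨j, hj, hij, hx⟩
      rwa [erase_injOn B hi hj hij]
    · exact fun hx => ⟨i, hi, rfl, hx⟩

variable [Fintype ι] [∀ i, Fintype (V i)] {τ : Type*} [Fintype τ]

/-- The energy of a colouring `ψ` with respect to functions `f t`: the sum of the squared `L²`-norms
of the conditional averages of `f t` given the colours of the facets of `B t`. -/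
noncomputable def energy (B : τ → Finset ι) (f : τ → (∀ i, V i) → ℝ)
    (ψ : Finset ι → (∀ i, V i) → C) : ℝ :=
  ∑ t, 𝔼 x, condAvg (facets ψ (B t)) (f t) x ^ 2

section Energy

variable {B : τ → Finset ι} {f : τ → (∀ i, V i) → ℝ} {ψ : Finset ι → (∀ i, V i) → C}

lemma energy_nonneg : 0 ≤ energy B f ψ :=
  sum_nonneg fun _ _ => expect_nonneg fun _ _ => sq_nonneg _

lemma energy_le_card (hf : ∀ t x, f t x ∈ unitInterval) : energy B f ψ ≤ Fintype.card τ := by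
  rcases isEmpty_or_nonempty (∀ i, V i) with _ | _
  · simp [energy]
  calc energy B f ψ ≤ ∑ _t : τ, (1 : ℝ) := sum_le_sum fun t _ =>
        expect_le univ_nonempty fun x _ =>
          have hx := condAvg_mem_unitInterval (facets ψ (B t)) (hf t) x
          pow_le_one₀ hx.1 hx.2
    _ = Fintype.card τ := by simp

lemma energy_add_sq_le {C' : Type*} {ψ' : Finset ι → (∀ i, V i) → C'} {δ : ℝ} (hδ : 0 ≤ δ)
    (hψ : ∀ A, (ψ A).FactorsThrough (ψ' A)) {t₀ : τ} {u : ι → (∀ i, V i) → Prop}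
    (hu : ∀ i ∈ B t₀, (u i).FactorsThrough (ψ' ((B t₀).erase i)))
    (hbig : δ ≤ |𝔼 x, (f t₀ x - condAvg (facets ψ (B t₀)) (f t₀) x) * ind (∀ i ∈ B t₀, u i x)|) :
    energy B f ψ + δ ^ 2 ≤ energy B f ψ' := by
  have hfacets : ∀ t, (facets ψ (B t)).FactorsThrough (facets ψ' (B t)) := fun t x y hxy =>
    facets_eq_iff.2 fun i hi => hψ _ (facets_eq_iff.1 hxy i hi)
  have hgain : ∀ t, 0 ≤ 𝔼 x, condAvg (facets ψ' (B t)) (f t) x ^ 2 -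
      𝔼 x, condAvg (facets ψ (B t)) (f t) x ^ 2 := fun t => by
    rw [← expect_condAvg_sub_sq (f t) (hfacets t)]
    exact expect_nonneg fun x _ => sq_nonneg _
  have hgain₀ : δ ^ 2 ≤ 𝔼 x, condAvg (facets ψ' (B t₀)) (f t₀) x ^ 2 -
      𝔼 x, condAvg (facets ψ (B t₀)) (f t₀) x ^ 2 := by
    refine ((pow_le_pow_left₀ hδ hbig 2).trans_eq (sq_abs _)).trans
      (sq_expect_sub_condAvg_mul_le (f t₀) (hfacets t₀) (fun x y hxy => ?_) fun x => ?_)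
    · rw [facets_eq_iff] at hxy
      exact ind_congr (forall₂_congr fun i hi => (hu i hi (hxy i hi)).to_iff)
    · rw [abs_of_nonneg (ind_nonneg _)]
      exact ind_le_one _
  have htotal := hgain₀.trans (single_le_sum (fun t _ => hgain t) (mem_univ t₀))
  rw [sum_sub_distrib] at htotal
  rw [energy, energy]
  linarith

end Energy

-- Refining the colouring by a violated test raises the energy, which is bounded, by `δ ^ 2`.
lemma exists_coloring_cutLE_or_le_energy {B : τ → Finset ι} (f : τ → (∀ i, V i) → ℝ) {δ : ℝ}
    (hδ : 0 ≤ δ) (s : ℕ) :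
    ∃ ψ : Finset ι → (∀ i, V i) → Fin s → Prop, (∀ A, DependsOn (ψ A) A) ∧
      ((∀ t, CutLE (B t) (fun x => f t x - condAvg (facets ψ (B t)) (f t) x) δ) ∨
        s * δ ^ 2 ≤ energy B f ψ) := by
  induction s with
  | zero => exact ⟨fun _ _ => Fin.elim0, fun _ _ _ _ => rfl, .inr (by simpa using energy_nonneg)⟩
  | succ s ih =>
    obtain ⟨ψ, hψ, h⟩ := ih
    by_cases hgood : ∀ t, CutLE (B t) (fun x => f t x - condAvg (facets ψ (B t)) (f t) x) δ
    · refine ⟨fun A x => Fin.cons False (ψ A x), fun A x y hxy => by simp only [hψ A hxy],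
        .inl fun t => ?_⟩
      rw [condAvg_congr fun x y => ?_]
      · exact hgood t
      · simp [facets_eq_iff, Fin.cons_inj]
    · have henergy := h.resolve_left hgood
      simp only [CutLE, not_forall, not_le] at hgood
      obtain ⟨t₀, u, hu, hbig⟩ := hgood
      obtain ⟨b, hb, hbu⟩ := exists_dependsOn_erase_iff hu
      refine ⟨fun A x => Fin.cons (b A x) (ψ A x), fun A x y hxy => ?_, .inr ?_⟩
      · simp only [hb A hxy, hψ A hxy]
      have hincrement := energy_add_sq_le (ψ := ψ)
        (ψ' := fun A x => (Fin.cons (b A x) (ψ A x) : Fin (s + 1) → Prop)) hδ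
        (fun A x y hxy => (Fin.cons_inj.1 hxy).2) (fun i hi x y hxy => propext ?_) hbig.le
      · push_cast
        linarith
      · rw [← hbu i hi, ← hbu i hi, (Fin.cons_inj.1 hxy).1]

lemma exists_coloring_cutLE (τ : Type*) [Finite τ] {δ : ℝ} (hδ : 0 < δ) : ∃ n : ℕ,
    ∀ (V : ι → Type*) [∀ i, Fintype (V i)] (B : τ → Finset ι) (f : τ → (∀ i, V i) → ℝ),
      (∀ t x, f t x ∈ unitInterval) → ∃ ψ : Finset ι → (∀ i, V i) → Fin n → Prop,
        (∀ A, DependsOn (ψ A) A) ∧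
        ∀ t, CutLE (B t) (fun x => f t x - condAvg (facets ψ (B t)) (f t) x) δ := by
  have := Fintype.ofFinite τ
  obtain ⟨n, hn⟩ := exists_nat_gt (Fintype.card τ / δ ^ 2)
  refine ⟨n, fun V _ B f hf => ?_⟩
  obtain ⟨ψ, hψ, h⟩ := exists_coloring_cutLE_or_le_energy f hδ.le n
  refine ⟨ψ, hψ, h.resolve_right fun hbig => ?_⟩
  rw [div_lt_iff₀ (by positivity)] at hn
  exact (hn.trans_le hbig).not_ge (energy_le_card hf)

end WeakRegularity

section FacetWeights

section Fibres

variable {X D : Type*} [Fintype X] (Φ : X → D)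

lemma expect_abs_condAvg (f : X → ℝ) :
    𝔼 x, |condAvg Φ f x| = 𝔼 x, f x * SignType.sign (condAvg Φ f x) := by
  simp only [← self_mul_sign]
  exact expect_condAvg_mul Φ f fun x y hxy => by rw [condAvg_factorsThrough Φ f hxy]

lemma condAvg_sub_const (f : X → ℝ) (r : ℝ) (x : X) :
    condAvg Φ (fun y => f y - r) x = condAvg Φ f x - r := by
  rw [condAvg, condAvg, eq_sub_iff_add_eq, div_add' _ _ _ (sum_ind_fiber_pos Φ x).ne', mul_sum,
    ← sum_add_distrib]
  simp only [mul_sub, mul_comm r, sub_add_cancel]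

lemma sum_condAvg {α : Type*} (s : Finset α) (f : α → X → ℝ) (x : X) :
    ∑ a ∈ s, condAvg Φ (f a) x = condAvg Φ (fun y => ∑ a ∈ s, f a y) x := by
  simp only [condAvg, ← sum_div, mul_sum]
  rw [sum_comm]

-- On fibres where all the averages vanish, any distribution may serve as `w`.
lemma exists_stdSimplex_condAvg_eq [Nonempty X] {C : Type*} [Fintype C] [Nonempty C]
    {f : C → X → ℝ} (hf : ∀ c x, 0 ≤ f c x) :
    ∃ w : D → stdSimplex ℝ C, ∀ c x,
      condAvg Φ (f c) x = w (Φ x) c * condAvg Φ (fun y => ∑ c, f c y) x := by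
  classical
  have hpos : ∀ c x, 0 ≤ condAvg Φ (f c) x := fun c x =>
    div_nonneg (sum_nonneg fun y _ => mul_nonneg (ind_nonneg _) (hf c y)) (sum_ind_fiber_pos Φ x).le
  have hfiber : ∀ x, ∃ v : stdSimplex ℝ C, ∀ c,
      condAvg Φ (f c) x = v c * condAvg Φ (fun y => ∑ c, f c y) x := fun x => by
    rw [← sum_condAvg]
    by_cases hx : ∑ c, condAvg Φ (f c) x = 0
    · refine ⟨stdSimplex.vertex (Classical.arbitrary C), fun c => ?_⟩
      rw [hx, mul_zero, (sum_eq_zero_iff_of_nonneg fun c _ => hpos c x).1 hx c (mem_univ c)]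
    · exact ⟨⟨fun c => condAvg Φ (f c) x / ∑ c, condAvg Φ (f c) x,
        fun c => div_nonneg (hpos c x) (sum_nonneg fun c _ => hpos c x),
        by rw [← sum_div, div_self hx]⟩, fun c => (div_mul_cancel₀ _ hx).symm⟩
  choose v hv using hfiber
  refine ⟨fun d => v (Function.invFun Φ d), fun c x => ?_⟩
  have hx : Φ (Function.invFun Φ (Φ x)) = Φ x := Function.invFun_eq ⟨x, rfl⟩
  rw [← condAvg_factorsThrough Φ _ hx, ← condAvg_factorsThrough Φ _ hx, hv]

end Fibres

namespace CutLE

variable {ι : Type*} [DecidableEq ι] [Fintype ι] {V : ι → Type*} [∀ i, Fintype (V i)]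
  {C : Type*} {ψ : Finset ι → (∀ i, V i) → C} {B : Finset ι} {h : (∀ i, V i) → ℝ} {c : ℝ}

lemma mul_ind_facets (hc : CutLE B h c) (hψ : ∀ A, DependsOn (ψ A) A) (d : B → C) :
    CutLE B (fun x => h x * ind (facets ψ B x = d)) c := by
  intro u hu
  refine (congrArg abs (expect_congr rfl fun x _ => ?_)).trans_le
    (hc (fun i x => u i x ∧ ∀ hi : i ∈ B, ψ (B.erase i) x = d ⟨i, hi⟩) fun i hi x y hxy => by
      simp only [hu i hi hxy, hψ _ hxy])
  rw [mul_assoc, ← ind_and]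
  congr 1
  exact ind_congr ⟨fun hx i hi => ⟨hx.2 i hi, fun _ => congrFun hx.1 ⟨i, hi⟩⟩, fun hx =>
    ⟨funext fun i => (hx i i.2).2 i.2, fun i hi => (hx i hi).1⟩⟩

variable [Fintype C]

lemma mul_of_factorsThrough (hc : CutLE B h c) (hψ : ∀ A, DependsOn (ψ A) A)
    {v : (∀ i, V i) → ℝ} (hv : v.FactorsThrough (facets ψ B)) (hv1 : ∀ x, |v x| ≤ 1) :
    CutLE B (fun x => h x * v x) (Fintype.card (B → C) * c) := by
  set w := Function.extend (facets ψ B) v 0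
  have hw1 : ∀ d, |w d| ≤ 1 := fun d => by
    by_cases hd : ∃ x, facets ψ B x = d
    · obtain ⟨x, rfl⟩ := hd
      exact (congrArg abs (hv.extend_apply 0 x)).trans_le (hv1 x)
    · simp [w, Function.extend_apply' _ _ _ hd]
  have hw : ∀ x, w (facets ψ B x) = v x := hv.extend_apply 0
  have hexpand : ∀ x, h x * v x = ∑ d, w d * (h x * ind (facets ψ B x = d)) := fun x => by
    rw [← hw, ← sum_ind_eq_mul (facets ψ B x) w, mul_sum]
    exact sum_congr rfl fun d _ => by ring
  simp only [hexpand]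
  exact sum fun d _ => ((hc.mul_ind_facets hψ d).const_mul (w d)).mono
    (mul_le_of_le_one_left hc.nonneg (hw1 d))

lemma condAvg_mul {v : (∀ i, V i) → ℝ} (hc : CutLE B h c) (hψ : ∀ A, DependsOn (ψ A) A)
    (hv1 : ∀ x, |v x| ≤ 1) :
    CutLE B (fun x => condAvg (facets ψ B) h x * v x) (Fintype.card (B → C) * c) := by
  intro u _
  calc |𝔼 x, condAvg (facets ψ B) h x * v x * ind (∀ i ∈ B, u i x)|
      ≤ 𝔼 x, |condAvg (facets ψ B) h x| :=
        (Finset.abs_expect_le _ _).trans <| expect_le_expect fun x _ => by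
          rw [abs_mul, abs_mul, abs_of_nonneg (ind_nonneg _), mul_assoc]
          exact mul_le_of_le_one_right (abs_nonneg _)
            (mul_le_one₀ (hv1 x) (ind_nonneg _) (ind_le_one _))
    _ ≤ Fintype.card (B → C) * c := by
        rw [expect_abs_condAvg]
        refine (le_abs_self _).trans (abs_expect_le (hc.mul_of_factorsThrough hψ (fun x y hxy => ?_)
          fun x => ?_))
        · rw [condAvg_factorsThrough _ h hxy]
        · cases SignType.sign (condAvg (facets ψ B) h x) <;> simp

end CutLE

end FacetWeights

/-! ### Random rounding -/

section Rounding

section SecondMoment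

variable {X Ω : Type*} [Fintype X] [Fintype Ω] (w : stdSimplex ℝ Ω)

lemma sum_mul_sq_expect_sub_eq {Z : X → Ω → ℝ} {M : X → ℝ} (hM : ∀ x, ∑ ω, w ω * Z x ω = M x) :
    ∑ ω, w ω * (𝔼 x, Z x ω - 𝔼 x, M x) ^ 2 =
      𝔼 x, 𝔼 y, (∑ ω, w ω * (Z x ω * Z y ω) - M x * M y) := by
  have hmean : ∑ ω, w ω * 𝔼 x, Z x ω = 𝔼 x, M x := by
    simp only [mul_expect, ← expect_sum_comm, hM]
  have hexpand : ∀ ω, w ω * (𝔼 x, Z x ω - 𝔼 x, M x) ^ 2 =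
      w ω * (𝔼 x, Z x ω) ^ 2 - 2 * (𝔼 x, M x) * (w ω * 𝔼 x, Z x ω) +
        w ω * (𝔼 x, M x) ^ 2 := fun ω => by ring
  calc ∑ ω, w ω * (𝔼 x, Z x ω - 𝔼 x, M x) ^ 2
      = ∑ ω, w ω * (𝔼 x, Z x ω) ^ 2 - (𝔼 x, M x) ^ 2 := by
        simp only [hexpand, sum_add_distrib, sum_sub_distrib]
        rw [← mul_sum, ← sum_mul, stdSimplex.sum_eq_one, hmean]
        ring
    _ = 𝔼 x, 𝔼 y, (∑ ω, w ω * (Z x ω * Z y ω) - M x * M y) := by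
        simp only [expect_sub_distrib, expect_sum_comm, ← mul_expect, ← expect_mul, sq]

lemma sum_mul_sq_expect_sub_le {Z : X → Ω → ℝ} (hZ : ∀ x ω, Z x ω ∈ unitInterval) {M : X → ℝ}
    (hM : ∀ x, ∑ ω, w ω * Z x ω = M x) (r : X → X → Prop)
    (hindep : ∀ x y, ¬r x y → ∑ ω, w ω * (Z x ω * Z y ω) = M x * M y) :
    ∑ ω, w ω * (𝔼 x, Z x ω - 𝔼 x, M x) ^ 2 ≤ 𝔼 x, 𝔼 y, ind (r x y) := by
  rw [sum_mul_sq_expect_sub_eq w hM]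
  refine expect_le_expect fun x _ => expect_le_expect fun y _ => ?_
  by_cases hxy : r x y
  · have hM0 : ∀ x, 0 ≤ M x := fun x => hM x ▸
      sum_nonneg fun ω _ => mul_nonneg (stdSimplex.zero_le w ω) (hZ x ω).1
    have hle : ∑ ω, w ω * (Z x ω * Z y ω) ≤ 1 :=
      (sum_le_sum fun ω _ => mul_le_of_le_one_right (stdSimplex.zero_le w ω)
        (unitInterval.mul_mem (hZ x ω) (hZ y ω)).2).trans_eq (stdSimplex.sum_eq_one w)
    rw [ind_true hxy]
    linarith [mul_nonneg (hM0 x) (hM0 y)]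
  · rw [ind_false hxy, hindep x y hxy, sub_self]

lemma exists_forall_abs_le_of_sum_mul_sq_le {Θ : Type*} [Fintype Θ] {D : Θ → Ω → ℝ} {v δ : ℝ}
    (hδ : 0 ≤ δ) (hv : ∀ t, ∑ ω, w ω * D t ω ^ 2 ≤ v) (hsmall : Fintype.card Θ * v < δ ^ 2) :
    ∃ ω, ∀ t, |D t ω| ≤ δ := by
  obtain ⟨ω, hω⟩ : ∃ ω, ∑ t, D t ω ^ 2 < δ ^ 2 := by
    by_contra! hlarge
    have hmean : δ ^ 2 ≤ ∑ ω, w ω * ∑ t, D t ω ^ 2 := by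
      calc δ ^ 2 = ∑ ω, w ω * δ ^ 2 := by rw [← sum_mul, stdSimplex.sum_eq_one, one_mul]
        _ ≤ ∑ ω, w ω * ∑ t, D t ω ^ 2 := sum_le_sum fun ω _ =>
          mul_le_mul_of_nonneg_left (hlarge ω) (stdSimplex.zero_le w ω)
    simp only [mul_sum] at hmean
    rw [sum_comm] at hmean
    exact hsmall.not_ge (hmean.trans ((sum_le_sum fun t _ => hv t).trans_eq (by simp)))
  exact ⟨ω, fun t => abs_le_of_sq_le_sq ((single_le_sum (f := fun t => D t ω ^ 2)
    (fun t _ => sq_nonneg _) (mem_univ t)).trans hω.le) hδ⟩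

end SecondMoment

section ProductLaw

variable {K C : Type*} [Fintype K] [DecidableEq K] [Fintype C]

/-- The law of a family of independent random colours, the `k`-th of which has law `W k`. -/
def productLaw (W : K → stdSimplex ℝ C) : stdSimplex ℝ (K → C) :=
  ⟨fun ω => ∏ k, W k (ω k), fun _ => prod_nonneg fun _ _ => stdSimplex.zero_le _ _, by
    simp [← Fintype.prod_sum]⟩

lemma sum_productLaw_mul_prod_ind (W : K → stdSimplex ℝ C) (S : Finset K) (c : K → C) :
    ∑ ω, productLaw W ω * ∏ k ∈ S, ind (ω k = c k) = ∏ k ∈ S, W k (c k) := by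
  have hmarginal : ∀ k, ∑ b, W k b * (if k ∈ S then ind (b = c k) else 1) =
      if k ∈ S then W k (c k) else 1 := fun k => by
    by_cases hk : k ∈ S
    · simp only [hk, if_true, mul_comm, ← sum_ind_eq_mul (c k) (W k), eq_comm]
    · simp [hk]
  calc ∑ ω, productLaw W ω * ∏ k ∈ S, ind (ω k = c k)
      = ∑ ω : K → C, ∏ k, W k (ω k) * (if k ∈ S then ind (ω k = c k) else 1) :=
        sum_congr rfl fun ω _ => by
          rw [prod_mul_distrib, prod_ite_mem, univ_inter]
          rfl
    _ = ∏ k ∈ S, W k (c k) := by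
        rw [← Fintype.prod_sum fun k b => W k b * (if k ∈ S then ind (b = c k) else 1)]
        simp only [hmarginal, prod_ite_mem, univ_inter]

lemma sum_productLaw_mul_sq_le {X : Type*} [Fintype X] (W : K → stdSimplex ℝ C)
    (S : X → Finset K) (c : K → C) {g : X → ℝ} (hg : ∀ x, g x ∈ unitInterval) :
    ∑ ω, productLaw W ω *
        (𝔼 x, g x * ∏ k ∈ S x, ind (ω k = c k) - 𝔼 x, g x * ∏ k ∈ S x, W k (c k)) ^ 2 ≤
      𝔼 x, 𝔼 y, ind (¬Disjoint (S x) (S y)) := by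
  refine sum_mul_sq_expect_sub_le (productLaw W)
    (Z := fun x ω => g x * ∏ k ∈ S x, ind (ω k = c k))
    (fun x ω => unitInterval.mul_mem (hg x) (prod_mem_unitInterval fun _ _ =>
      ind_mem_unitInterval _)) (fun x => ?_) _ fun x y hxy => ?_
  · rw [← sum_productLaw_mul_prod_ind, mul_sum]
    exact sum_congr rfl fun ω _ => mul_left_comm _ _ _
  · rw [not_not] at hxy
    rw [mul_mul_mul_comm, ← prod_union hxy, ← sum_productLaw_mul_prod_ind, mul_sum]
    refine sum_congr rfl fun ω _ => ?_
    rw [prod_union hxy]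
    ring

end ProductLaw

variable {ι : Type*} [Fintype ι] [DecidableEq ι] {V : ι → Type*} [∀ i, Fintype (V i)]

lemma expect_ind_apply_eq [∀ i, Nonempty (V i)] (i : ι) (a : V i) :
    𝔼 y : ∀ i, V i, ind (a = y i) = 1 / Fintype.card (V i) := by
  rw [Fintype.expect_equiv (Equiv.piSplitAt i V) (fun y => ind (a = y i))
    (fun p => ind (a = p.1)) fun y => rfl, ← univ_product_univ, expect_product]
  simp only [Fintype.expect_const]
  rw [Fintype.expect_eq_sum_div_card, sum_ind_eq]

variable {N : ℕ}

lemma expect_ind_exists_eq_le (hN : 0 < N) (hV : ∀ i, N ≤ Fintype.card (V i)) :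
    𝔼 x : ∀ i, V i, 𝔼 y : ∀ i, V i, ind (∃ i, x i = y i) ≤ Fintype.card ι / N := by
  have hnonempty : ∀ i, Nonempty (V i) := fun i => Fintype.card_pos_iff.1 (hN.trans_le (hV i))
  have hunion : ∀ x y : ∀ i, V i, ind (∃ i, x i = y i) ≤ ∑ i, ind (x i = y i) := fun x y => by
    by_cases h : ∃ i, x i = y i
    · obtain ⟨i, hi⟩ := h
      refine (ind_le_one _).trans ((ind_true hi).symm.trans_le ?_)
      exact single_le_sum (f := fun i => ind (x i = y i)) (fun _ _ => ind_nonneg _) (mem_univ i)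
    · rw [ind_false h]
      exact sum_nonneg fun _ _ => ind_nonneg _
  calc 𝔼 x : ∀ i, V i, 𝔼 y : ∀ i, V i, ind (∃ i, x i = y i)
      ≤ 𝔼 x : ∀ i, V i, 𝔼 y : ∀ i, V i, ∑ i, ind (x i = y i) :=
        expect_le_expect fun x _ => expect_le_expect fun y _ => hunion x y
    _ = ∑ i, 1 / (Fintype.card (V i) : ℝ) := by
        simp only [expect_sum_comm univ univ, expect_ind_apply_eq, Fintype.expect_const]
    _ ≤ ∑ _i : ι, 1 / (N : ℝ) := sum_le_sum fun i _ =>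
        one_div_le_one_div_of_le (Nat.cast_pos.2 hN) (Nat.cast_le.2 (hV i))
    _ = Fintype.card ι / N := by simp [div_eq_mul_inv]

variable {κ C Θ : Type*} [Fintype κ] [Fintype C] [Fintype Θ] {S : κ → Finset ι}

-- Each partial transversal draws its own colour, independently of the others; two transversals
-- with no common vertex then have independent patterns.
lemma exists_coloring_of_weights (hN : 0 < N) (hV : ∀ i, N ≤ Fintype.card (V i))
    (hS : ∀ k, (S k).Nonempty) {W : κ → (∀ i, V i) → stdSimplex ℝ C}
    (hW : ∀ k, DependsOn (W k) (S k)) {g : Θ → (∀ i, V i) → ℝ}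
    (hg : ∀ t x, g t x ∈ unitInterval) (γ : Θ → κ → C) {δ : ℝ} (hδ : 0 ≤ δ)
    (hsmall : Fintype.card Θ * (Fintype.card ι / N : ℝ) < δ ^ 2) :
    ∃ χ : κ → (∀ i, V i) → C, (∀ k, DependsOn (χ k) (S k)) ∧
      ∀ t, |𝔼 x, g t x * ∏ k, ind (χ k x = γ t k) - 𝔼 x, g t x * ∏ k, W k x (γ t k)| ≤ δ := by
  classical
  have hnonempty : ∀ i, Nonempty (V i) := fun i => Fintype.card_pos_iff.1 (hN.trans_le (hV i))
  obtain ⟨x₀⟩ : Nonempty (∀ i, V i) := inferInstance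
  let key (x : ∀ i, V i) : κ ↪ κ × (∀ i, V i) :=
    ⟨fun k => (k, (S k).piecewise x x₀), fun k k' h => congrArg Prod.fst h⟩
  have hkey : ∀ x k, W (key x k).1 (key x k).2 = W k x := fun x k =>
    apply_piecewise_of_dependsOn (hW k) x x₀
  have hmeet : ∀ x y, ¬Disjoint (univ.map (key x)) (univ.map (key y)) → ∃ i, x i = y i := by
    intro x y hxy
    obtain ⟨_, hx, hy⟩ := not_disjoint_iff.1 hxy
    obtain ⟨k, _, rfl⟩ := mem_map.1 hx
    obtain ⟨k', _, h⟩ := mem_map.1 hy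
    obtain rfl : k' = k := congrArg Prod.fst h
    obtain ⟨i, hi⟩ := hS k'
    have hxy' : (S k').piecewise y x₀ = (S k').piecewise x x₀ := congrArg Prod.snd h
    exact ⟨i, by simpa [hi] using (congrFun hxy' i).symm⟩
  have hvariance : ∀ t, ∑ ω, productLaw (fun k : κ × (∀ i, V i) => W k.1 k.2) ω *
      (𝔼 x, g t x * ∏ k, ind (ω (key x k) = γ t k) - 𝔼 x, g t x * ∏ k, W k x (γ t k)) ^ 2 ≤
        Fintype.card ι / N := fun t => by
    have hle := sum_productLaw_mul_sq_le (fun k : κ × (∀ i, V i) => W k.1 k.2)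
      (fun x => univ.map (key x)) (fun k => γ t k.1) (hg t)
    simp only [prod_map, hkey] at hle
    refine hle.trans (le_trans (expect_le_expect fun x _ => expect_le_expect fun y _ => ?_)
      (expect_ind_exists_eq_le hN hV))
    by_cases hxy : Disjoint (univ.map (key x)) (univ.map (key y))
    · exact (ind_false (not_not.2 hxy)).trans_le (ind_nonneg _)
    · exact (ind_le_one _).trans_eq (ind_true (hmeet x y hxy)).symm
  obtain ⟨ω, hω⟩ := exists_forall_abs_le_of_sum_mul_sq_le _ hδ hvariance hsmall
  exact ⟨fun k x => ω (key x k), fun k x y hxy => congrArg (fun z => ω (k, z))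
    ((S k).piecewise_congr (fun i hi => hxy i hi) fun _ _ => rfl), hω⟩

end Rounding

/-! ### Transferring colourings -/

section Transfer

universe u v w

/-- The subsets of `ι` of cardinality at most `j`. -/
abbrev UpTo (ι : Type*) (j : ℕ) : Type _ := {B : Finset ι // #B ≤ j}

/-- The subsets of `ι` of cardinality `j`. -/
abbrev Level (ι : Type*) (j : ℕ) : Type _ := {B : Finset ι // #B = j}

lemma card_level_fun_eq {ι C : Type*} [DecidableEq ι] [Fintype C] {j : ℕ} (B : Level ι j) :
    (Fintype.card (B.1 → C) : ℝ) = Fintype.card C ^ j := by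
  simp [B.2]

/-- The labels of the partial transversals of a transversal `x` with at most `j` vertices, together
with the colours of those with exactly `j` vertices. -/
def profile {ι X L C : Type*} (j : ℕ) (l : Finset ι → X → L) (χ : Finset ι → X → C) (x : X) :
    (UpTo ι j → L) × (Level ι j → C) :=
  (fun B => l B x, fun B => χ B x)

lemma ind_profile_zero_eq {ι X L C : Type*} (l : Finset ι → X → L) (χ : Finset ι → X → C) (x : X)
    (t : (UpTo ι 0 → L) × (Level ι 0 → C)) :
    ind (profile 0 l χ x = t) =
      ind (l ∅ x = t.1 ⟨∅, by simp⟩) * ind (χ ∅ x = t.2 ⟨∅, by simp⟩) := by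
  rw [← ind_and]
  refine ind_congr ⟨?_, fun h => Prod.ext ?_ ?_⟩
  · rintro rfl
    exact ⟨rfl, rfl⟩
  · funext ⟨B, hB⟩
    obtain rfl : B = ∅ := by simpa using hB
    exact h.1
  · funext ⟨B, hB⟩
    obtain rfl : B = ∅ := by simpa using hB
    exact h.2

/-- The mean of `∏ B, F B` over the event that the labels of the transversals with at most `j`
vertices are given by `a`. The labels of those with `j + 1` vertices are not prescribed. -/
noncomputable def levelMean {ι X L : Type*} [Fintype ι] [Fintype X] {j : ℕ} (l : Finset ι → X → L)
    (a : UpTo ι (j + 1) → L) (F : Level ι (j + 1) → X → ℝ) : ℝ :=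
  𝔼 x, (∏ B : UpTo ι j, ind (l B x = a ⟨B, B.2.trans j.le_succ⟩)) * ∏ B, F B x

lemma expect_ind_profile_succ_eq {ι X L C : Type*} [Fintype ι] [Fintype X] {j : ℕ}
    (l : Finset ι → X → L) (χ : Finset ι → X → C)
    (t : (UpTo ι (j + 1) → L) × (Level ι (j + 1) → C)) :
    𝔼 x, ind (profile (j + 1) l χ x = t) =
      levelMean l t.1 fun B x => ind (l B x = t.1 ⟨B, B.2.le⟩) * ind (χ B x = t.2 B) := by
  refine expect_congr rfl fun x _ => ?_
  simp only [← ind_and, ← ind_forall]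
  refine ind_congr ⟨?_, fun h => Prod.ext (funext fun B => ?_) (funext fun B => (h.2 B).2)⟩
  · rintro rfl
    exact ⟨fun _ => rfl, fun _ => ⟨rfl, rfl⟩⟩
  · rcases Nat.le_succ_iff.1 B.2 with hB | hB
    · exact h.1 ⟨B, hB⟩
    · exact (h.2 ⟨B, hB⟩).1

/-- The `j`-sets can be recoloured on any other similarly labelled, sufficiently large family of
vertex classes so that the frequency of each profile is approximately kept. -/
def MimicAt (ι : Type u) (L : Type v) [Fintype ι] [DecidableEq ι] (j : ℕ) : Prop :=
  ∀ (C : Type) [Fintype C] (δ : ℝ), 0 < δ → ∃ ε > 0, ∃ N : ℕ,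
    ∀ (V V' : ι → Type w) [∀ i, Fintype (V i)] [∀ i, Nonempty (V i)] [∀ i, Fintype (V' i)]
      [∀ i, Nonempty (V' i)] (l : Finset ι → (∀ i, V i) → L) (l' : Finset ι → (∀ i, V' i) → L)
      (p : Finset ι → L → ℝ), (∀ B a, p B a ∈ unitInterval) →
      IsQuasirandom l p ε → IsQuasirandom l' p ε → (∀ i, N ≤ Fintype.card (V' i)) →
      ∀ χ : Finset ι → (∀ i, V i) → C, (∀ B, DependsOn (χ B) B) →
      ∃ χ' : Finset ι → (∀ i, V' i) → C, (∀ B, DependsOn (χ' B) B) ∧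
        ∀ t, |𝔼 x, ind (profile j l χ x = t) - 𝔼 x, ind (profile j l' χ' x = t)| ≤ δ

variable {ι : Type u} {L : Type v} [Fintype ι] [DecidableEq ι]

lemma mimicAt_zero : MimicAt.{u, v, w} ι L 0 := by
  intro C _ δ hδ
  refine ⟨δ / 2, half_pos hδ, 0, fun V V' _ _ _ _ l l' p _ hl hl' _ χ hχ => ?_⟩
  obtain ⟨x₀⟩ : Nonempty (∀ i, V i) := inferInstance
  refine ⟨fun B _ => χ B x₀, fun _ _ _ _ => rfl, fun t => ?_⟩
  have hχ₀ : ∀ x, χ ∅ x = χ ∅ x₀ := fun x => hχ ∅ fun i hi => by simp at hi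
  have hlabel : |𝔼 x, ind (l ∅ x = t.1 ⟨∅, by simp⟩) - 𝔼 x, ind (l' ∅ x = t.1 ⟨∅, by simp⟩)| ≤
      δ := by
    have h := (hl.cutLE ∅ (t.1 ⟨∅, by simp⟩)).abs_expect_le
    have h' := (hl'.cutLE ∅ (t.1 ⟨∅, by simp⟩)).abs_expect_le
    rw [expect_sub_distrib, Fintype.expect_const] at h h'
    rw [abs_le] at *
    constructor <;> linarith [h.1, h.2, h'.1, h'.2]
  simp only [ind_profile_zero_eq, hχ₀, ← expect_mul]
  rw [← sub_mul, abs_mul, abs_of_nonneg (ind_nonneg _)]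
  exact (mul_le_of_le_one_right (abs_nonneg _) (ind_le_one _)).trans hlabel

section Step

variable {V : ι → Type w} [∀ i, Fintype (V i)] {C C' : Type*} {j : ℕ}
  {l : Finset ι → (∀ i, V i) → L} {ψ : Finset ι → (∀ i, V i) → C'}

lemma abs_levelMean_sub_le (hl : ∀ B, DependsOn (l B) B) (a : UpTo ι (j + 1) → L)
    {F G : Level ι (j + 1) → (∀ i, V i) → ℝ} {c : ℝ}
    (hF : ∀ B, DependsOn (F B) B.1) (hG : ∀ B, DependsOn (G B) B.1)
    (hF1 : ∀ B x, F B x ∈ unitInterval) (hG1 : ∀ B x, G B x ∈ unitInterval)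
    (hcut : ∀ B, CutLE B.1 (fun x => F B x - G B x) c) :
    |levelMean l a F - levelMean l a G| ≤ Fintype.card (Level ι (j + 1)) * c := by
  refine abs_expect_mul_prod_sub_le (S := Subtype.val) (fun B _ => hF B) (fun B _ => hG B)
    (fun B _ => hF1 B) (fun B _ => hG1 B) (fun B _ => hcut B) (fun B _ B' _ hne hsub => ?_)
    fun B _ => .prod fun (A : UpTo ι j) _ => .of_dependsOn (S := A.1)
      (dependsOn_comp (hl A) fun b => ind (b = a ⟨A, A.2.trans j.le_succ⟩))
      (fun x => ind_mem_unitInterval _) fun hBA => ?_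
  · exact hne (Subtype.ext (eq_of_subset_of_card_le hsub (by rw [B.2, B'.2])))
  · exact absurd ((card_le_card hBA).trans A.2) (by rw [B.2]; exact Nat.not_succ_le_self j)

variable [Fintype C]

lemma exists_weights [∀ i, Nonempty (V i)] [Nonempty C] (l : Finset ι → (∀ i, V i) → L)
    (χ : Finset ι → (∀ i, V i) → C) (ψ : Finset ι → (∀ i, V i) → C') :
    ∃ w : ∀ B : Finset ι, L → (B → C') → stdSimplex ℝ C, ∀ B a c x,
      condAvg (facets ψ B) (fun y => ind (l B y = a) * ind (χ B y = c)) x =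
        w B a (facets ψ B x) c * condAvg (facets ψ B) (fun y => ind (l B y = a)) x := by
  choose w hw using fun (B : Finset ι) (a : L) =>
    exists_stdSimplex_condAvg_eq (facets ψ B) (f := fun c y => ind (l B y = a) * ind (χ B y = c))
      fun c y => mul_nonneg (ind_nonneg _) (ind_nonneg _)
  refine ⟨w, fun B a c x => (hw B a c x).trans ?_⟩
  simp only [← mul_sum, sum_ind_eq, mul_one]

lemma abs_le_one_of_mem_unitInterval {r : ℝ} (hr : r ∈ unitInterval) : |r| ≤ 1 :=
  (abs_of_nonneg hr.1).trans_le hr.2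

lemma stdSimplex_mem_unitInterval (v : stdSimplex ℝ C) (c : C) : v c ∈ unitInterval :=
  ⟨stdSimplex.zero_le v c, stdSimplex.le_one v c⟩

lemma exists_coloring_abs_expect_ind_profile_sub_le [∀ i, Nonempty (V i)] [Fintype L] [Nonempty C]
    {N : ℕ} (hN : 0 < N) (hV : ∀ i, N ≤ Fintype.card (V i)) (hl : ∀ B, DependsOn (l B) B)
    (hψ : ∀ A, DependsOn (ψ A) A) (w : ∀ B : Finset ι, L → (B → C') → stdSimplex ℝ C)
    {δ : ℝ} (hδ : 0 ≤ δ)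
    (hsmall : Fintype.card ((UpTo ι (j + 1) → L) × (Level ι (j + 1) → C)) *
      (Fintype.card ι / N : ℝ) < δ ^ 2) :
    ∃ χ : Finset ι → (∀ i, V i) → C, (∀ B, DependsOn (χ B) B) ∧
      ∀ t : (UpTo ι (j + 1) → L) × (Level ι (j + 1) → C),
        |𝔼 x, ind (profile (j + 1) l χ x = t) - levelMean l t.1 fun B x =>
          ind (l B x = t.1 ⟨B, B.2.le⟩) * w B (t.1 ⟨B, B.2.le⟩) (facets ψ B x) (t.2 B)| ≤ δ := by
  classical
  obtain ⟨ξ, hξ, hround⟩ := exists_coloring_of_weights (S := fun B : Level ι (j + 1) => B.1) hN hV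
    (fun B => card_pos.1 (by rw [B.2]; exact j.succ_pos))
    (W := fun B x => w B (l B x) (facets ψ B x))
    (fun B x y hxy => by simp only [hl B hxy, dependsOn_facets hψ B hxy])
    (g := fun (t : (UpTo ι (j + 1) → L) × (Level ι (j + 1) → C)) x =>
      (∏ B : UpTo ι j, ind (l B x = t.1 ⟨B, B.2.trans j.le_succ⟩)) *
        ∏ B : Level ι (j + 1), ind (l B x = t.1 ⟨B, B.2.le⟩))
    (fun t x => unitInterval.mul_mem (prod_mem_unitInterval fun _ _ => ind_mem_unitInterval _)
      (prod_mem_unitInterval fun _ _ => ind_mem_unitInterval _)) (fun t => t.2) hδ hsmall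
  refine ⟨fun B x => if hB : #B = j + 1 then ξ ⟨B, hB⟩ x else Classical.arbitrary C,
    fun B x y hxy => ?_, fun t => ?_⟩
  · by_cases hB : #B = j + 1
    · simp only [hB, dif_pos, hξ ⟨B, hB⟩ hxy]
    · simp only [hB, dif_neg, not_false_eq_true]
  · have hweight : ∀ (B : Level ι (j + 1)) x,
        ind (l B x = t.1 ⟨B, B.2.le⟩) * w B (l B x) (facets ψ B x) (t.2 B) =
          ind (l B x = t.1 ⟨B, B.2.le⟩) * w B (t.1 ⟨B, B.2.le⟩) (facets ψ B x) (t.2 B) :=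
      fun B x => by
        by_cases h : l B x = t.1 ⟨B, B.2.le⟩
        · rw [h]
        · rw [ind_false h, zero_mul, zero_mul]
    have hext : ∀ (B : Level ι (j + 1)) x,
        (if hB : #B.1 = j + 1 then ξ ⟨B, hB⟩ x else Classical.arbitrary C) = ξ B x :=
      fun B x => dif_pos B.2
    have hround := hround t
    simp only [mul_assoc, ← prod_mul_distrib, hweight] at hround
    simpa only [expect_ind_profile_succ_eq, levelMean, hext] using hround

variable [Fintype C'] {p : Finset ι → L → ℝ} {ε : ℝ}
  {w : ∀ B : Finset ι, L → (B → C') → stdSimplex ℝ C}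

lemma IsQuasirandom.cutLE_mul_ind_sub (hl : IsQuasirandom l p ε) (hψ : ∀ A, DependsOn (ψ A) A)
    {χ : Finset ι → (∀ i, V i) → C} {B : Finset ι} {a : L} {c : C} {δ : ℝ}
    (hw : ∀ x, condAvg (facets ψ B) (fun y => ind (l B y = a) * ind (χ B y = c)) x =
        w B a (facets ψ B x) c * condAvg (facets ψ B) (fun y => ind (l B y = a)) x)
    (hcut : CutLE B (fun x => ind (l B x = a) * ind (χ B x = c) -
      condAvg (facets ψ B) (fun y => ind (l B y = a) * ind (χ B y = c)) x) δ) :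
    CutLE B (fun x => ind (l B x = a) * ind (χ B x = c) - p B a * w B a (facets ψ B x) c)
      (δ + Fintype.card (B → C') * ε) := by
  have hsplit : ∀ x, ind (l B x = a) * ind (χ B x = c) - p B a * w B a (facets ψ B x) c =
      (ind (l B x = a) * ind (χ B x = c) -
        condAvg (facets ψ B) (fun y => ind (l B y = a) * ind (χ B y = c)) x) +
      condAvg (facets ψ B) (fun y => ind (l B y = a) - p B a) x * w B a (facets ψ B x) c :=
    fun x => by
      rw [hw, condAvg_sub_const]
      ring
  simp only [hsplit]
  exact hcut.add <| (hl.cutLE B a).condAvg_mul hψ fun x =>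
    abs_le_one_of_mem_unitInterval (stdSimplex_mem_unitInterval _ c)

lemma IsQuasirandom.cutLE_ind_mul_sub (hl : IsQuasirandom l p ε) (hψ : ∀ A, DependsOn (ψ A) A)
    (B : Finset ι) (a : L) (c : C) :
    CutLE B (fun x => ind (l B x = a) * w B a (facets ψ B x) c - p B a * w B a (facets ψ B x) c)
      (Fintype.card (B → C') * ε) := by
  simp only [← sub_mul]
  exact (hl.cutLE B a).mul_of_factorsThrough hψ (fun x y hxy => by rw [hxy])
    fun x => abs_le_one_of_mem_unitInterval (stdSimplex_mem_unitInterval _ c)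

lemma IsQuasirandom.abs_expect_ind_profile_sub_le (hl : IsQuasirandom l p ε)
    (hp : ∀ B a, p B a ∈ unitInterval) (hψ : ∀ A, DependsOn (ψ A) A)
    {χ : Finset ι → (∀ i, V i) → C} (hχ : ∀ A, DependsOn (χ A) A) {δ : ℝ}
    (hw : ∀ B a c x, condAvg (facets ψ B) (fun y => ind (l B y = a) * ind (χ B y = c)) x =
      w B a (facets ψ B x) c * condAvg (facets ψ B) (fun y => ind (l B y = a)) x)
    (hcut : ∀ B a c, CutLE B (fun x => ind (l B x = a) * ind (χ B x = c) -
      condAvg (facets ψ B) (fun y => ind (l B y = a) * ind (χ B y = c)) x) δ)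
    (t : (UpTo ι (j + 1) → L) × (Level ι (j + 1) → C)) :
    |𝔼 x, ind (profile (j + 1) l χ x = t) - levelMean l t.1 fun B x =>
        p B (t.1 ⟨B, B.2.le⟩) * w B (t.1 ⟨B, B.2.le⟩) (facets ψ B x) (t.2 B)| ≤
      Fintype.card (Level ι (j + 1)) * (δ + Fintype.card C' ^ (j + 1) * ε) := by
  rw [expect_ind_profile_succ_eq]
  refine abs_levelMean_sub_le hl.dependsOn t.1
    (fun B x y hxy => by simp only [hl.dependsOn B hxy, hχ B hxy])
    (fun B x y hxy => by simp only [dependsOn_facets hψ B hxy])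
    (fun B x => unitInterval.mul_mem (ind_mem_unitInterval _) (ind_mem_unitInterval _))
    (fun B x => unitInterval.mul_mem (hp _ _) (stdSimplex_mem_unitInterval _ _)) fun B => ?_
  rw [← card_level_fun_eq B]
  exact hl.cutLE_mul_ind_sub hψ (hw B _ _) (hcut B _ _)

lemma IsQuasirandom.abs_levelMean_ind_mul_sub_le (hl : IsQuasirandom l p ε)
    (hp : ∀ B a, p B a ∈ unitInterval) (hψ : ∀ A, DependsOn (ψ A) A)
    (t : (UpTo ι (j + 1) → L) × (Level ι (j + 1) → C)) :
    |(levelMean l t.1 fun B x =>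
        ind (l B x = t.1 ⟨B, B.2.le⟩) * w B (t.1 ⟨B, B.2.le⟩) (facets ψ B x) (t.2 B)) -
      levelMean l t.1 fun B x =>
        p B (t.1 ⟨B, B.2.le⟩) * w B (t.1 ⟨B, B.2.le⟩) (facets ψ B x) (t.2 B)| ≤
      Fintype.card (Level ι (j + 1)) * (Fintype.card C' ^ (j + 1) * ε) := by
  refine abs_levelMean_sub_le hl.dependsOn t.1
    (fun B x y hxy => by simp only [hl.dependsOn B hxy, dependsOn_facets hψ B hxy])
    (fun B x y hxy => by simp only [dependsOn_facets hψ B hxy])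
    (fun B x => unitInterval.mul_mem (ind_mem_unitInterval _) (stdSimplex_mem_unitInterval _ _))
    (fun B x => unitInterval.mul_mem (hp _ _) (stdSimplex_mem_unitInterval _ _)) fun B => ?_
  rw [← card_level_fun_eq B]
  exact hl.cutLE_ind_mul_sub hψ B _ _

lemma abs_levelMean_facets_sub_le [Fintype L] {V' : ι → Type w} [∀ i, Fintype (V' i)]
    {l' : Finset ι → (∀ i, V' i) → L} {ψ' : Finset ι → (∀ i, V' i) → C'} {δ : ℝ}
    (hψψ' : ∀ t, |𝔼 x, ind (profile j l ψ x = t) - 𝔼 x, ind (profile j l' ψ' x = t)| ≤ δ)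
    (a : UpTo ι (j + 1) → L) {P : ∀ B : Level ι (j + 1), (B.1 → C') → ℝ}
    (hP : ∀ B s, P B s ∈ unitInterval) :
    |(levelMean l a fun B x => P B (facets ψ B x)) -
      levelMean l' a fun B x => P B (facets ψ' B x)| ≤
      Fintype.card ((UpTo ι j → L) × (Level ι j → C')) * δ := by
  refine abs_expect_comp_sub_le hψψ' (f := fun s =>
    (∏ B : UpTo ι j, ind (s.1 B = a ⟨B, B.2.trans j.le_succ⟩)) *
      ∏ B : Level ι (j + 1), P B fun i => s.2 ⟨B.1.erase i, by
        rw [card_erase_of_mem i.2, B.2, Nat.add_sub_cancel]⟩) fun s => ?_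
  exact abs_le_one_of_mem_unitInterval <| unitInterval.mul_mem
    (prod_mem_unitInterval fun _ _ => ind_mem_unitInterval _)
    (prod_mem_unitInterval fun B _ => hP B _)

lemma IsQuasirandom.exists_coloring [Fintype L] [∀ i, Nonempty (V i)] {V' : ι → Type w}
    [∀ i, Fintype (V' i)] [∀ i, Nonempty (V' i)] {l' : Finset ι → (∀ i, V' i) → L}
    {ψ' : Finset ι → (∀ i, V' i) → C'} {χ : Finset ι → (∀ i, V i) → C} {N : ℕ} {δ₁ δ₂ δ₃ : ℝ}
    (hl : IsQuasirandom l p ε) (hl' : IsQuasirandom l' p ε) (hp : ∀ B a, p B a ∈ unitInterval)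
    (hψ : ∀ A, DependsOn (ψ A) A) (hψ' : ∀ A, DependsOn (ψ' A) A) (hχ : ∀ A, DependsOn (χ A) A)
    (hcut : ∀ B a c, CutLE B (fun x => ind (l B x = a) * ind (χ B x = c) -
      condAvg (facets ψ B) (fun y => ind (l B y = a) * ind (χ B y = c)) x) δ₁)
    (hψψ' : ∀ t, |𝔼 x, ind (profile j l ψ x = t) - 𝔼 x, ind (profile j l' ψ' x = t)| ≤ δ₂)
    (hN : 0 < N) (hV' : ∀ i, N ≤ Fintype.card (V' i)) (hδ₃ : 0 ≤ δ₃)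
    (hsmall : Fintype.card ((UpTo ι (j + 1) → L) × (Level ι (j + 1) → C)) *
      (Fintype.card ι / N : ℝ) < δ₃ ^ 2) :
    ∃ χ' : Finset ι → (∀ i, V' i) → C, (∀ B, DependsOn (χ' B) B) ∧ ∀ t,
      |𝔼 x, ind (profile (j + 1) l χ x = t) - 𝔼 x, ind (profile (j + 1) l' χ' x = t)| ≤
        Fintype.card (Level ι (j + 1)) * (δ₁ + Fintype.card C' ^ (j + 1) * ε) +
        Fintype.card ((UpTo ι j → L) × (Level ι j → C')) * δ₂ +
        Fintype.card (Level ι (j + 1)) * (Fintype.card C' ^ (j + 1) * ε) + δ₃ := by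
  have : Nonempty C := Nonempty.map (χ ∅) inferInstance
  obtain ⟨w, hw⟩ := exists_weights l χ ψ
  obtain ⟨χ', hχ', hround⟩ := exists_coloring_abs_expect_ind_profile_sub_le (j := j) hN hV'
    hl'.dependsOn hψ' w hδ₃ hsmall
  refine ⟨χ', hχ', fun t => ?_⟩
  have hsource := hl.abs_expect_ind_profile_sub_le hp hψ hχ hw hcut t
  have htransfer := abs_levelMean_facets_sub_le hψψ' t.1
    (P := fun B s => p B (t.1 ⟨B, B.2.le⟩) * w B (t.1 ⟨B, B.2.le⟩) s (t.2 B)) fun B s =>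
      unitInterval.mul_mem (hp _ _) (stdSimplex_mem_unitInterval _ _)
  have htarget := hl'.abs_levelMean_ind_mul_sub_le (w := w) hp hψ' t
  have hround := hround t
  rw [abs_le] at *
  constructor <;>
    linarith [hsource.1, hsource.2, htransfer.1, htransfer.2, htarget.1, htarget.2, hround.1,
      hround.2]

end Step

lemma MimicAt.succ [Finite L] {j : ℕ} (h : MimicAt.{u, v, w} ι L j) :
    MimicAt.{u, v, w} ι L (j + 1) := by
  classical
  have := Fintype.ofFinite L
  intro C _ δ hδ
  have hδ5 : 0 < δ / 5 := by positivity
  obtain ⟨δ₁, hδ₁, hδ₁m⟩ := exists_pos_mul_lt hδ5 (Fintype.card (Level ι (j + 1)) : ℝ)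
  obtain ⟨n, hreg⟩ := exists_coloring_cutLE (ι := ι) (Finset ι × L × C) hδ₁
  obtain ⟨δ₂, hδ₂, hδ₂T⟩ := exists_pos_mul_lt hδ5
    (Fintype.card ((UpTo ι j → L) × (Level ι j → Fin n → Prop)) : ℝ)
  obtain ⟨ε₁, hε₁, N₁, hmimic⟩ := h (Fin n → Prop) δ₂ hδ₂
  obtain ⟨ε₂, hε₂, hε₂m⟩ := exists_pos_mul_lt hδ5
    (Fintype.card (Level ι (j + 1)) * (Fintype.card (Fin n → Prop) : ℝ) ^ (j + 1))
  obtain ⟨N₂, hN₂⟩ := exists_nat_gt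
    (Fintype.card ((UpTo ι (j + 1) → L) × (Level ι (j + 1) → C)) * Fintype.card ι / (δ / 5) ^ 2 : ℝ)
  have hN₂0 : (0 : ℝ) < N₂ := lt_of_le_of_lt (by positivity) hN₂
  rw [div_lt_comm₀ (by positivity) hN₂0, mul_div_assoc] at hN₂
  refine ⟨min ε₁ ε₂, lt_min hε₁ hε₂, max N₁ N₂, fun V V' _ _ _ _ l l' p hp hl hl' hV' χ hχ => ?_⟩
  obtain ⟨ψ, hψ, hcut⟩ := hreg V (fun t => t.1)
    (fun t x => ind (l t.1 x = t.2.1) * ind (χ t.1 x = t.2.2))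
    fun t x => unitInterval.mul_mem (ind_mem_unitInterval _) (ind_mem_unitInterval _)
  obtain ⟨ψ', hψ', hψψ'⟩ := hmimic V V' l l' p hp (hl.mono (min_le_left _ _))
    (hl'.mono (min_le_left _ _)) (fun i => (le_max_left _ _).trans (hV' i)) ψ hψ
  obtain ⟨χ', hχ', hχχ'⟩ := (hl.mono (min_le_right _ _)).exists_coloring
    (hl'.mono (min_le_right _ _)) hp hψ hψ' hχ (fun B a c => hcut (B, a, c)) hψψ'
    (Nat.cast_pos.1 hN₂0) (fun i => (le_max_right _ _).trans (hV' i)) hδ5.le hN₂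
  exact ⟨χ', hχ', fun t => (hχχ' t).trans (by linarith)⟩

lemma mimicAt [Finite L] (j : ℕ) : MimicAt.{u, v, w} ι L j := by
  induction j with
  | zero => exact mimicAt_zero
  | succ j ih => exact ih.succ

lemma IsQuasirandom.pow_sub_le_expect_ind_forall {V : ι → Type w} [∀ i, Fintype (V i)]
    [∀ i, Nonempty (V i)] {l : Finset ι → (∀ i, V i) → L} {p : Finset ι → L → ℝ} {ε c : ℝ}
    (hl : IsQuasirandom l p ε) (hp : ∀ B a, p B a ∈ unitInterval) (hc : 0 ≤ c)
    {a : Finset ι → L} {τ : Finset (Finset ι)} (hτ : ∀ B ∈ τ, c ≤ p B (a B)) :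
    c ^ #τ - #τ * ε ≤ 𝔼 x, ind (∀ B ∈ τ, l B x = a B) := by
  have hprod : c ^ #τ ≤ ∏ B ∈ τ, p B (a B) := by
    rw [← prod_const]
    exact prod_le_prod (fun _ _ => hc) hτ
  have hcount := abs_le.1 (hl.abs_expect_prod_ind_sub_le hp a τ)
  simp only [← ind_forall_mem] at hcount
  linarith [hcount.1]

lemma abs_div_sub_div_le {x x' y y' c δ : ℝ} (hc : 0 < c) (hy : c ≤ y) (hy' : c ≤ y')
    (hx' : |x'| ≤ y') (hx : |x - x'| ≤ δ) (hyy' : |y - y'| ≤ δ) :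
    |x / y - x' / y'| ≤ 2 * δ / c := by
  have hy0 : 0 < y := hc.trans_le hy
  have hy0' : 0 < y' := hc.trans_le hy'
  have hratio : |x' / y'| ≤ 1 := by
    rwa [abs_div, abs_of_pos hy0', div_le_one hy0']
  calc |x / y - x' / y'| = |(x - x') - x' / y' * (y - y')| / y := by
        rw [← abs_of_pos hy0, ← abs_div, abs_of_pos hy0]
        congr 1
        field_simp
        ring
    _ ≤ (δ + 1 * δ) / c := by
        have hδ : 0 ≤ δ := (abs_nonneg _).trans hx
        refine div_le_div₀ (by positivity) ((abs_sub _ _).trans (add_le_add hx ?_)) hc hy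
        rw [abs_mul]
        exact mul_le_mul hratio hyy' (abs_nonneg _) zero_le_one
    _ = 2 * δ / c := by ring

/-- The probability that the facets of a random transversal of the index set `Z` all satisfy `χ`,
conditioned on its proper subsets being labelled by `a`. -/
noncomputable def facetDensity {X : Type*} [Fintype X] (l : Finset ι → X → L)
    (χ : Finset ι → X → Prop) (Z : Finset ι) (a : Finset ι → L) : ℝ :=
  (𝔼 x, ind ((∀ B ∈ Z.ssubsets, l B x = a B) ∧ ∀ B ∈ Z.powersetCard (#Z - 1), χ B x)) /
    𝔼 x, ind (∀ B ∈ Z.ssubsets, l B x = a B)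

lemma abs_facetDensity_sub_le [Fintype L] {X X' : Type*} [Fintype X] [Fintype X'] {j : ℕ}
    {l : Finset ι → X → L} {l' : Finset ι → X' → L} {χ : Finset ι → X → Prop}
    {χ' : Finset ι → X' → Prop} {Z : Finset ι} {a : Finset ι → L} {c δ : ℝ} (hZ : #Z = j + 1)
    (hχχ' : ∀ t, |𝔼 x, ind (profile j l χ x = t) - 𝔼 x, ind (profile j l' χ' x = t)| ≤ δ)
    (hc : 0 < c) (hl : c ≤ 𝔼 x, ind (∀ B ∈ Z.ssubsets, l B x = a B))
    (hl' : c ≤ 𝔼 x, ind (∀ B ∈ Z.ssubsets, l' B x = a B)) :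
    |facetDensity l χ Z a - facetDensity l' χ' Z a| ≤
      2 * (Fintype.card ((UpTo ι j → L) × (Level ι j → Prop)) * δ) / c := by
  classical
  have hcard : ∀ B ∈ Z.ssubsets, #B ≤ j := fun B hB =>
    Nat.le_of_lt_succ <| (card_lt_card (mem_ssubsets.1 hB)).trans_eq hZ
  have hfacet : ∀ B ∈ Z.powersetCard (#Z - 1), #B = j := fun B hB => by
    rw [(mem_powersetCard.1 hB).2, hZ, Nat.add_sub_cancel]
  refine abs_div_sub_div_le hc hl hl' ?_
    (abs_expect_comp_sub_le hχχ' (f := fun s => ind ((∀ B hB, s.1 ⟨B, hcard B hB⟩ = a B) ∧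
      ∀ B hB, s.2 ⟨B, hfacet B hB⟩)) fun _ =>
        abs_le_one_of_mem_unitInterval (ind_mem_unitInterval _))
    (abs_expect_comp_sub_le hχχ' (f := fun s => ind (∀ B hB, s.1 ⟨B, hcard B hB⟩ = a B)) fun _ =>
        abs_le_one_of_mem_unitInterval (ind_mem_unitInterval _))
  rw [abs_of_nonneg (expect_nonneg fun _ _ => ind_nonneg _)]
  refine expect_le_expect fun x _ => ?_
  rw [ind_and]
  exact mul_le_of_le_one_right (ind_nonneg _) (ind_le_one _)

theorem exists_mimic (ι : Type u) (L : Type v) [Fintype ι] [DecidableEq ι] [Finite L] (j : ℕ)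
    {c ν : ℝ} (hc : 0 < c) (hν : 0 < ν) : ∃ ε > 0, ∃ N : ℕ,
    ∀ (V V' : ι → Type w) [∀ i, Fintype (V i)] [∀ i, Nonempty (V i)] [∀ i, Fintype (V' i)]
      [∀ i, Nonempty (V' i)] (l : Finset ι → (∀ i, V i) → L) (l' : Finset ι → (∀ i, V' i) → L)
      (p : Finset ι → L → ℝ), (∀ B a, p B a ∈ unitInterval) →
      IsQuasirandom l p ε → IsQuasirandom l' p ε → (∀ i, N ≤ Fintype.card (V' i)) →
      ∀ χ : Finset ι → (∀ i, V i) → Prop, (∀ B, DependsOn (χ B) B) →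
      ∃ χ' : Finset ι → (∀ i, V' i) → Prop, (∀ B, DependsOn (χ' B) B) ∧
        ∀ (Z : Finset ι) (a : Finset ι → L), #Z = j + 1 → (∀ B ∈ Z.ssubsets, c ≤ p B (a B)) →
          |facetDensity l χ Z a - facetDensity l' χ' Z a| ≤ ν := by
  classical
  have := Fintype.ofFinite L
  set b := Fintype.card (Finset ι)
  have hcb : 0 < c ^ b / 2 := by positivity
  obtain ⟨δ, hδ, hδT⟩ := exists_pos_mul_lt (show 0 < ν * (c ^ b / 2) / 2 by positivity)
    (Fintype.card ((UpTo ι j → L) × (Level ι j → Prop)) : ℝ)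
  obtain ⟨ε₁, hε₁, N, hmimic⟩ := mimicAt.{u, v, w} (ι := ι) (L := L) j Prop δ hδ
  obtain ⟨ε₂, hε₂, hε₂b⟩ := exists_pos_mul_lt hcb (b : ℝ)
  refine ⟨min ε₁ ε₂, lt_min hε₁ hε₂, N, fun V V' _ _ _ _ l l' p hp hl hl' hV' χ hχ => ?_⟩
  obtain ⟨χ', hχ', hχχ'⟩ := hmimic V V' l l' p hp (hl.mono (min_le_left _ _))
    (hl'.mono (min_le_left _ _)) hV' χ hχ
  refine ⟨χ', hχ', fun Z a hZ hpZ => ?_⟩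
  have hc1 : c ≤ 1 := (hpZ ∅ (empty_mem_ssubsets (card_pos.1 (by simp [hZ])))).trans (hp _ _).2
  have hlow : c ^ b / 2 ≤ c ^ #Z.ssubsets - #Z.ssubsets * ε₂ := by
    have hpow : c ^ b ≤ c ^ #Z.ssubsets := pow_le_pow_of_le_one hc.le hc1 (card_le_univ _)
    have herror : #Z.ssubsets * ε₂ ≤ b * ε₂ := by
      gcongr
      exact card_le_univ _
    linarith
  refine (abs_facetDensity_sub_le hZ hχχ' hcb
    (hlow.trans ((hl.mono (min_le_right _ _)).pow_sub_le_expect_ind_forall hp hc.le hpZ))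
    (hlow.trans ((hl'.mono (min_le_right _ _)).pow_sub_le_expect_ind_forall hp hc.le hpZ))).trans ?_
  rw [div_le_iff₀ hcb]
  linarith

end Transfer

/-! ### Transversals of a labelled family of partitions -/

section Transversals

lemma card_image_le_card_image {α β γ : Type*} [DecidableEq β] [DecidableEq γ] {s : Finset α}
    {f : α → β} {g : α → γ} (h : ∀ u ∈ s, ∀ v ∈ s, f u = f v → g u = g v) :
    #(s.image g) ≤ #(s.image f) := by
  refine card_le_card_of_forall_subsingleton (fun c b => ∃ v ∈ s, g v = c ∧ f v = b)
    (fun c hc => ?_) fun b _ => ?_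
  · obtain ⟨v, hv, rfl⟩ := mem_image.1 hc
    exact ⟨f v, mem_image_of_mem f hv, v, hv, rfl, rfl⟩
  · rintro _ ⟨-, u, hu, rfl, huf⟩ _ ⟨-, v, hv, rfl, hvf⟩
    exact h u hu v hv (huf.trans hvf.symm)

variable {V : Type*} [DecidableEq V] {P : LabFam V} {N : ℕ}

/-- The indices of the classes. -/
abbrev Idx (N : ℕ) : Type := {i : ℕ // i ∈ Icc 1 N}

/-- The class with index `i`, as a type. -/
abbrev LabFam.Part (P : LabFam V) (N : ℕ) (i : Idx N) : Type _ :=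
  {v : V // v ∈ P.gnd.filter fun v => P.vIdx v = i}

/-- A set of class indices as a set of natural numbers, the form used by addresses. -/
def idxSet (B : Finset (Idx N)) : Finset ℕ := B.map (Function.Embedding.subtype _)

/-- The vertices which the transversal `x` picks in the classes with index in `B`. -/
def tr (B : Finset (Idx N)) (x : ∀ i, P.Part N i) : Finset V := B.image fun i => (x i).1

lemma mem_gnd_of_part {i : Idx N} (v : P.Part N i) : v.1 ∈ P.gnd := (mem_filter.1 v.2).1

lemma vIdx_part {i : Idx N} (v : P.Part N i) : P.vIdx v.1 = i := (mem_filter.1 v.2).2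

lemma mem_idxSet {B : Finset (Idx N)} {i : Idx N} : (i : ℕ) ∈ idxSet B ↔ i ∈ B := by
  simp [idxSet, -mem_Icc]

lemma card_idxSet (B : Finset (Idx N)) : #(idxSet B) = #B := card_map _

lemma idxSet_injective : Function.Injective (idxSet (N := N)) := map_injective _

lemma idxSet_subset_idxSet {A B : Finset (Idx N)} : idxSet A ⊆ idxSet B ↔ A ⊆ B :=
  map_subset_map

lemma exists_idxSet_eq {M : Finset ℕ} (hM : ∀ i ∈ M, 1 ≤ i ∧ i ≤ N) :
    ∃ B : Finset (Idx N), idxSet B = M := by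
  refine ⟨M.subtype (· ∈ Icc 1 N), ?_⟩
  rw [idxSet, subtype_map, filter_eq_self]
  exact fun i hi => mem_Icc.2 (hM i hi)

lemma exists_idxSet_eq_of_subset {M : Finset ℕ} {B : Finset (Idx N)} (hM : M ⊆ idxSet B) :
    ∃ A ⊆ B, idxSet A = M := by
  obtain ⟨A, rfl⟩ := exists_idxSet_eq (N := N) (M := M) fun i hi => by
    obtain ⟨j, _, rfl⟩ := mem_map.1 (hM hi)
    exact mem_Icc.1 j.2
  exact ⟨A, idxSet_subset_idxSet.1 hM, rfl⟩

variable {A B : Finset (Idx N)} {x y : ∀ i, P.Part N i}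

lemma mem_tr {v : V} : v ∈ tr B x ↔ ∃ i ∈ B, (x i).1 = v := mem_image

lemma part_injective (x : ∀ i, P.Part N i) : Function.Injective fun i => (x i).1 :=
  fun i j h => Subtype.ext <| by rw [← vIdx_part (x i), ← vIdx_part (x j)]; exact congrArg _ h

lemma card_tr : #(tr B x) = #B := card_image_of_injective _ (part_injective x)

lemma tr_mono (h : A ⊆ B) : tr A x ⊆ tr B x := image_subset_image h

lemma tr_subset_gnd : tr B x ⊆ P.gnd := by
  intro v hv
  obtain ⟨i, _, rfl⟩ := mem_tr.1 hv
  exact mem_gnd_of_part (x i)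

lemma image_vIdx_tr : (tr B x).image P.vIdx = idxSet B := by
  rw [tr, image_image, idxSet, map_eq_image]
  exact image_congr fun i _ => vIdx_part (x i)

lemma filter_tr (h : A ⊆ B) : ((tr B x).filter fun v => P.vIdx v ∈ idxSet A) = tr A x := by
  ext v
  rw [mem_filter, mem_tr, mem_tr]
  constructor
  · rintro ⟨⟨i, _, rfl⟩, hA⟩
    rw [vIdx_part (x i), mem_idxSet] at hA
    exact ⟨i, hA, rfl⟩
  · rintro ⟨i, hi, rfl⟩
    rw [vIdx_part (x i), mem_idxSet]
    exact ⟨⟨i, h hi, rfl⟩, hi⟩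

lemma eq_and_eqOn_of_tr_eq_tr (h : tr A x = tr B y) : A = B ∧ ∀ i ∈ A, x i = y i := by
  obtain rfl : A = B := idxSet_injective (by rw [← image_vIdx_tr (x := x), h, image_vIdx_tr])
  refine ⟨rfl, fun i hi => ?_⟩
  obtain ⟨j, _, hj⟩ := mem_tr.1 (h ▸ mem_tr.2 ⟨i, hi, rfl⟩)
  obtain rfl : j = i := Subtype.ext (by rw [← vIdx_part (y j), hj, vIdx_part (x i)])
  exact Subtype.ext hj.symm

lemma dependsOn_tr (B : Finset (Idx N)) : DependsOn (tr (P := P) B) B := fun x y h =>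
  image_congr fun i hi => by rw [h i hi]

lemma exists_eq_tr_of_subset {T : Finset V} (h : T ⊆ tr B x) : ∃ A ⊆ B, T = tr A x := by
  obtain ⟨A, hA, rfl⟩ := subset_image_iff.1 h
  exact ⟨A, coe_subset.1 hA, rfl⟩

lemma mem_powersetCard_tr {j : ℕ} {T : Finset V} :
    T ∈ (tr B x).powersetCard j ↔ ∃ A ∈ B.powersetCard j, T = tr A x := by
  rw [mem_powersetCard]
  constructor
  · rintro ⟨h, rfl⟩
    obtain ⟨A, hA, rfl⟩ := exists_eq_tr_of_subset h
    exact ⟨A, mem_powersetCard.2 ⟨hA, card_tr.symm⟩, rfl⟩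
  · rintro ⟨A, hA, rfl⟩
    rw [mem_powersetCard] at hA
    exact ⟨tr_mono hA.1, by rw [card_tr, hA.2]⟩

lemma card_filter_tr_eq_tr (B : Finset (Idx N)) (x₀ : ∀ i, P.Part N i) :
    #{x : ∀ i, P.Part N i | tr B x = tr B x₀} =
      ∏ i, if i ∈ B then 1 else Fintype.card (P.Part N i) := by
  have hfibre : ({x | tr B x = tr B x₀} : Finset (∀ i, P.Part N i)) =
      Fintype.piFinset fun i => if i ∈ B then {x₀ i} else univ := by
    ext x
    rw [mem_filter_univ, Fintype.mem_piFinset]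
    refine ⟨fun h i => ?_, fun h => dependsOn_tr B fun i hi => ?_⟩
    · split_ifs with hi
      · exact mem_singleton.2 ((eq_and_eqOn_of_tr_eq_tr h).2 i hi)
      · exact mem_univ _
    · simpa [mem_coe.1 hi] using h i
  rw [hfibre, Fintype.card_piFinset]
  refine prod_congr rfl fun i _ => ?_
  split_ifs
  exacts [card_singleton _, card_univ]

/-- The factor, which does not depend on `S`, is the probability of a given partial transversal. -/
lemma exists_expect_ind_tr_mem_eq_mul_card [∀ i, Nonempty (P.Part N i)] (B : Finset (Idx N)) :
    ∃ c : ℝ, 0 < c ∧ ∀ S : Finset (Finset V), (∀ T ∈ S, ∃ x : ∀ i, P.Part N i, T = tr B x) →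
      𝔼 x : ∀ i, P.Part N i, ind (tr B x ∈ S) = c * #S := by
  set m : ℕ := ∏ i, if i ∈ B then 1 else Fintype.card (P.Part N i) with hm
  have hm0 : (0 : ℝ) < m := Nat.cast_pos.2 <| prod_pos fun i _ => by
    split_ifs
    exacts [one_pos, Fintype.card_pos]
  refine ⟨m / Fintype.card (∀ i, P.Part N i),
    div_pos hm0 (Nat.cast_pos.2 Fintype.card_pos), fun S hS => ?_⟩
  have hcard : #{x : ∀ i, P.Part N i | tr B x ∈ S} = #S * m := by
    rw [card_eq_sum_card_fiberwise (f := tr B) (t := S) fun x hx =>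
      mem_coe.2 (mem_filter.1 (mem_coe.1 hx)).2]
    refine sum_const_nat fun T hT => ?_
    obtain ⟨x₀, rfl⟩ := hS T hT
    rw [hm, ← card_filter_tr_eq_tr B x₀, filter_filter]
    exact congrArg card (filter_congr fun x _ => and_iff_right_of_imp fun h => h ▸ hT)
  have hsum : ∑ x : ∀ i, P.Part N i, ind (tr B x ∈ S) =
      (#{x : ∀ i, P.Part N i | tr B x ∈ S} : ℝ) := by
    rw [natCast_card_filter]
    exact sum_congr rfl fun x _ => by simp [ind]
  rw [Fintype.expect_eq_sum_div_card, hsum, hcard]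
  push_cast
  ring

variable {k : ℕ} {a : ℕ → ℕ}

lemma image_vIdx_gnd (hP : P.IsLabeled k a) : P.gnd.image P.vIdx = Icc 1 (a 1) := by
  obtain ⟨⟨_, _, _, hcard, _⟩, hidx, hiff, _⟩ := hP
  refine eq_of_subset_of_card_le (fun i hi => ?_) ?_
  · obtain ⟨v, hv, rfl⟩ := mem_image.1 hi
    exact mem_Icc.2 (hidx v hv)
  · rw [Nat.card_Icc, Nat.add_sub_cancel, ← hcard]
    exact card_image_le_card_image fun u hu v hv => (hiff u hu v hv).1

lemma nonempty_part (hP : P.IsLabeled k a) (i : Idx (a 1)) : Nonempty (P.Part (a 1) i) := by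
  obtain ⟨v, hv, h⟩ := mem_image.1 <| (image_vIdx_gnd hP).ge i.2
  exact ⟨⟨v, mem_filter.2 ⟨hv, h⟩⟩⟩

lemma vClass_eq_filter (hP : P.IsLabeled k a) {v : V} (hv : v ∈ P.gnd) :
    P.vClass v = P.gnd.filter fun u => P.vIdx u = P.vIdx v := by
  obtain ⟨⟨hself, hsub, hcl, _⟩, _, hiff, _⟩ := hP
  ext u
  rw [mem_filter]
  constructor
  · intro hu
    have hu' := hsub v hv hu
    exact ⟨hu', (hiff u hu' v hv).2 (hcl u hu' v hv hu)⟩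
  · rintro ⟨hu, h⟩
    rw [← (hiff u hu v hv).1 h]
    exact hself u hu

lemma exists_card_part_eq_card_vClass (hP : P.IsLabeled k a) (i : Idx (a 1)) :
    ∃ v ∈ P.gnd, Fintype.card (P.Part (a 1) i) = #(P.vClass v) := by
  obtain ⟨v⟩ := nonempty_part hP i
  refine ⟨v, mem_gnd_of_part v, ?_⟩
  rw [Fintype.card_coe, vClass_eq_filter hP (mem_gnd_of_part v), vIdx_part]

lemma tr_mem_cross (hP : P.IsLabeled k a) {j : ℕ} {B : Finset (Idx N)} (hB : #B = j)
    (x : ∀ i, P.Part N i) : tr B x ∈ P.cross j := by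
  refine mem_filter.2 ⟨mem_powersetCard.2 ⟨tr_subset_gnd, by rw [card_tr, hB]⟩, ?_⟩
  intro u hu v hv huv h
  obtain ⟨i, _, rfl⟩ := mem_tr.1 hu
  obtain ⟨j, _, rfl⟩ := mem_tr.1 hv
  rw [← hP.2.2.1 _ (mem_gnd_of_part (x i)) _ (mem_gnd_of_part (x j)), vIdx_part,
    vIdx_part] at h
  exact huv (by rw [Subtype.ext h])

lemma exists_eq_tr (hP : P.IsLabeled k a) {S : Finset V} (hS : S ⊆ P.gnd)
    (hinj : Set.InjOn P.vIdx S) :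
    ∃ (B : Finset (Idx (a 1))) (x : ∀ i, P.Part (a 1) i), S = tr B x := by
  obtain ⟨B, hB⟩ := exists_idxSet_eq (N := a 1) (M := S.image P.vIdx) fun i hi => by
    obtain ⟨v, hv, rfl⟩ := mem_image.1 hi
    exact hP.2.1 v (hS hv)
  have hpick (i : Idx (a 1)) : ∃ v : P.Part (a 1) i, i ∈ B → v.1 ∈ S := by
    by_cases hi : i ∈ B
    · obtain ⟨v, hv, h⟩ := mem_image.1 (hB ▸ mem_idxSet.2 hi)
      exact ⟨⟨v, mem_filter.2 ⟨hS hv, h⟩⟩, fun _ => hv⟩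
    · exact ⟨(nonempty_part hP i).some, fun h => absurd h hi⟩
  choose x hx using hpick
  refine ⟨B, x, (eq_of_subset_of_card_le (fun v hv => ?_) ?_).symm⟩
  · obtain ⟨i, hi, rfl⟩ := mem_tr.1 hv
    exact hx i hi
  · rw [card_tr, ← card_idxSet, hB, card_image_of_injOn hinj]

lemma exists_eq_tr_of_mem_cross (hP : P.IsLabeled k a) {S : Finset V} {j : ℕ}
    (hS : S ∈ P.cross j) :
    ∃ (B : Finset (Idx (a 1))) (x : ∀ i, P.Part (a 1) i), #B = j ∧ S = tr B x := by
  obtain ⟨h, hne⟩ := mem_filter.1 hS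
  obtain ⟨hgnd, rfl⟩ := mem_powersetCard.1 h
  obtain ⟨B, x, rfl⟩ := exists_eq_tr hP hgnd fun u hu v hv huv => by
    by_contra huv'
    exact hne u hu v hv huv' ((hP.2.2.1 u (hgnd hu) v (hgnd hv)).1 huv)
  exact ⟨B, x, card_tr.symm, rfl⟩

lemma exists_eq_tr_of_image_vIdx_eq (hP : P.IsLabeled k a) {S : Finset V} {j : ℕ}
    (hS : S ∈ P.cross j) {B : Finset (Idx (a 1))} (hB : S.image P.vIdx = idxSet B) :
    ∃ x : ∀ i, P.Part (a 1) i, S = tr B x := by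
  obtain ⟨A, x, _, rfl⟩ := exists_eq_tr_of_mem_cross hP hS
  rw [image_vIdx_tr] at hB
  exact ⟨x, by rw [idxSet_injective hB]⟩

lemma mem_KsetC_iff_of_mem_cross (F : PartFam V) {j : ℕ} {T : Finset V} (hT : T ∈ F.cross j)
    (i : ℕ) (R : Finset (Finset V)) :
    T ∈ KsetC F.gnd (F.cross j) i j R ↔ ∀ S ∈ T.powersetCard i, S ∈ R := by
  unfold KsetC
  split_ifs with h
  · subst h
    rw [mem_filter, and_iff_right hT, powersetCard_one]
    exact ⟨fun h S hS => by obtain ⟨v, hv, rfl⟩ := mem_map.1 hS; exact h v hv,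
      fun h v hv => h _ (mem_map_of_mem _ hv)⟩
  · rw [Kset, mem_filter, and_iff_right (mem_filter.1 hT).1]

end Transversals

/-! ### Cells and polyads in terms of labels -/

section Cells

lemma forall_powersetCard_forall_subset_iff {α : Type*} [DecidableEq α] {B : Finset α} {j : ℕ}
    (hB : #B = j) (hj : 1 ≤ j) {p : Finset α → Prop} :
    (∀ A ∈ B.powersetCard (j - 1), ∀ C ⊆ A, p C) ↔ ∀ C ∈ B.ssubsets, p C := by
  constructor
  · intro h C hC
    rw [mem_ssubsets] at hC
    obtain ⟨A, hCA, hAB, hA⟩ := exists_subsuperset_card_eq (n := j - 1) hC.subset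
      (Nat.le_sub_one_of_lt (hB ▸ card_lt_card hC)) (by omega)
    exact h A (mem_powersetCard.2 ⟨hAB, hA⟩) C hCA
  · intro h A hA C hC
    rw [mem_powersetCard] at hA
    refine h C (mem_ssubsets.2 ⟨hC.trans hA.1, fun hBC => ?_⟩)
    have := (card_le_card hBC).trans (card_le_card hC)
    omega

variable {V : Type*} [DecidableEq V]

lemma singleton_mem_polyad_one {F : PartFam V} {J : Finset V} {v : V} :
    {v} ∈ F.polyad 1 J ↔ ∃ u ∈ J, v ∈ F.vClass u := by
  simp [PartFam.polyad, sing, mem_sup]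

lemma mem_polyad_of_two_le {F : PartFam V} {J T : Finset V} {i : ℕ} (hi : 2 ≤ i) :
    T ∈ F.polyad i J ↔ ∃ S ∈ J.powersetCard i, T ∈ F.cls i S := by
  rw [PartFam.polyad, if_neg (by omega), mem_sup]

lemma mem_cross_of_subset {F : PartFam V} {j : ℕ} {S T : Finset V} (hS : S ∈ F.cross j)
    (hT : T ⊆ S) : T ∈ F.cross #T := by
  obtain ⟨h, hne⟩ := mem_filter.1 hS
  exact mem_filter.2 ⟨mem_powersetCard.2 ⟨hT.trans (mem_powersetCard.1 h).1, rfl⟩,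
    fun u hu v hv => hne u (hT hu) v (hT hv)⟩

variable {P : LabFam V} {k j : ℕ} {a : ℕ → ℕ}

lemma mem_cls_self (hP : P.IsLabeled k a) (hj : 2 ≤ j) (hjk : j ≤ k - 1) {S : Finset V}
    (hS : S ∈ P.cross j) : S ∈ P.cls j S :=
  (hP.1.2.2.2.2.2 j hj hjk).1 S hS

lemma cls_eq_of_mem (hP : P.IsLabeled k a) (hj : 2 ≤ j) (hjk : j ≤ k - 1) {S T : Finset V}
    (hS : S ∈ P.cross j) (hT : T ∈ P.cls j S) : P.cls j T = P.cls j S :=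
  (hP.1.2.2.2.2.2 j hj hjk).2.1 S hS T hT

lemma cls_subset_polyCliques (hP : P.IsLabeled k a) (hj : 2 ≤ j) (hjk : j ≤ k - 1)
    {S : Finset V} (hS : S ∈ P.cross j) : P.cls j S ⊆ P.polyCliques j S :=
  (hP.1.2.2.2.2.2 j hj hjk).2.2.1 S hS

lemma polyCliques_subset_cross (hP : P.IsLabeled k a) (hj : 2 ≤ j) (hjk : j ≤ k - 1)
    {S : Finset V} (hS : S ∈ P.cross j) : P.polyCliques j S ⊆ P.cross j :=
  (hP.1.2.2.2.2.2 j hj hjk).2.2.2.1 S hS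

lemma card_image_cls_polyCliques (hP : P.IsLabeled k a) (hj : 2 ≤ j) (hjk : j ≤ k - 1)
    {S : Finset V} (hS : S ∈ P.cross j) : #((P.polyCliques j S).image (P.cls j)) = a j :=
  (hP.1.2.2.2.2.2 j hj hjk).2.2.2.2 S hS

lemma card_image_vIdx (hP : P.IsLabeled k a) {S : Finset V} (hS : S ∈ P.cross j) :
    #(S.image P.vIdx) = j := by
  obtain ⟨B, x, hB, rfl⟩ := exists_eq_tr_of_mem_cross hP hS
  rw [image_vIdx_tr, card_idxSet, hB]

lemma image_vIdx_eq_of_forall_mem (hP : P.IsLabeled k a) {S T : Finset V} (hS : S ∈ P.cross j)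
    (hT : T ∈ P.cross j) (h : ∀ v ∈ T, P.vIdx v ∈ S.image P.vIdx) :
    T.image P.vIdx = S.image P.vIdx :=
  eq_of_subset_of_card_le (image_subset_iff.2 h)
    (by rw [card_image_vIdx hP hS, card_image_vIdx hP hT])

lemma image_vIdx_eq_of_mem_polyCliques (hP : P.IsLabeled k a) (hj : 2 ≤ j) (hjk : j ≤ k - 1)
    {S T : Finset V} (hS : S ∈ P.cross j) (hT : T ∈ P.polyCliques j S) :
    T.image P.vIdx = S.image P.vIdx := by
  induction j, hj using Nat.le_induction generalizing S T with
  | base =>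
    have hT' := polyCliques_subset_cross hP le_rfl hjk hS hT
    refine image_vIdx_eq_of_forall_mem hP hS hT' fun v hv => ?_
    obtain ⟨u, hu, hvu⟩ := singleton_mem_polyad_one.1 <|
      (mem_KsetC_iff_of_mem_cross P.toPartFam hT' _ _).1 hT {v}
        (mem_powersetCard.2 ⟨singleton_subset_iff.2 hv, rfl⟩)
    have hu' : u ∈ P.gnd := (mem_powersetCard.1 (mem_filter.1 hS).1).1 hu
    rw [vClass_eq_filter hP hu', mem_filter] at hvu
    exact mem_image.2 ⟨u, hu, hvu.2.symm⟩
  | succ j hj ih =>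
    have hT' := polyCliques_subset_cross hP (hj.trans j.le_succ) hjk hS hT
    have hjk' := j.le_succ.trans hjk
    refine image_vIdx_eq_of_forall_mem hP hS hT' fun v hv => ?_
    have hcT : #T = j + 1 := (mem_powersetCard.1 (mem_filter.1 hT').1).2
    obtain ⟨R, hvR, hRT, hR⟩ := exists_subsuperset_card_eq (n := j) (singleton_subset_iff.2 hv)
      (by rw [card_singleton]; omega) (by omega)
    obtain ⟨S', hS', hRS'⟩ := (mem_polyad_of_two_le hj).1 <|
      (mem_KsetC_iff_of_mem_cross P.toPartFam hT' _ _).1 hT R (mem_powersetCard.2 ⟨hRT, hR⟩)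
    obtain ⟨hS'S, rfl⟩ := mem_powersetCard.1 hS'
    have hc := mem_cross_of_subset hS hS'S
    have hRS := ih hjk' hc (cls_subset_polyCliques hP hj hjk' hc hRS')
    exact image_subset_image hS'S (hRS ▸ mem_image_of_mem _ (singleton_subset_iff.1 hvR))

/-- The transversals `x` and `y` have the same labels over all subsets of `B`. -/
def Agree {N : ℕ} (B : Finset (Idx N)) (x y : ∀ i, P.Part N i) : Prop :=
  ∀ A ⊆ B, 2 ≤ #A → P.lbl #A (tr A x) = P.lbl #A (tr A y)

variable {A B : Finset (Idx (a 1))} {x y : ∀ i, P.Part (a 1) i}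

lemma Agree.mono (h : Agree B x y) (hA : A ⊆ B) : Agree A x y :=
  fun A' hA' => h A' (hA'.trans hA)

lemma Agree.of_card_le_one (h : #B ≤ 1) : Agree B x y :=
  fun _ hA h2 => absurd (h2.trans ((card_le_card hA).trans h)) (by omega)

lemma forall_agree_iff (hB : #B = j) (hj : 1 ≤ j) :
    (∀ A ∈ B.powersetCard (j - 1), Agree A x y) ↔
      ∀ A ∈ B.ssubsets, 2 ≤ #A → P.lbl #A (tr A x) = P.lbl #A (tr A y) :=
  forall_powersetCard_forall_subset_iff hB hj

lemma agree_iff (hB : #B = j) (hj : 2 ≤ j) :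
    Agree B x y ↔ (∀ A ∈ B.powersetCard (j - 1), Agree A x y) ∧
      P.lbl j (tr B x) = P.lbl j (tr B y) := by
  subst hB
  rw [forall_agree_iff rfl (by omega)]
  refine ⟨fun h => ⟨fun A hA => h A (mem_ssubsets.1 hA).subset, h B subset_rfl hj⟩,
    fun ⟨h, hlbl⟩ A hA h2 => ?_⟩
  rcases hA.eq_or_ssubset with rfl | hA
  exacts [hlbl, h A (mem_ssubsets.2 hA) h2]

lemma mem_polyad_tr {i : ℕ} (hi : 2 ≤ i) {T : Finset V} :
    T ∈ P.polyad i (tr B x) ↔ ∃ A ∈ B.powersetCard i, T ∈ P.cls i (tr A x) := by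
  rw [mem_polyad_of_two_le hi]
  constructor
  · rintro ⟨S, hS, hT⟩
    obtain ⟨A, hA, rfl⟩ := mem_powersetCard_tr.1 hS
    exact ⟨A, hA, hT⟩
  · rintro ⟨A, hA, hT⟩
    exact ⟨_, mem_powersetCard_tr.2 ⟨A, hA, rfl⟩, hT⟩

lemma tr_mem_polyad_iff_mem_cls (hP : P.IsLabeled k a) (hj : 2 ≤ j) (hjk : j ≤ k - 1)
    (hA : A ∈ B.powersetCard j) :
    tr A y ∈ P.polyad j (tr B x) ↔ tr A y ∈ P.cls j (tr A x) := by
  rw [mem_polyad_tr hj]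
  refine ⟨fun ⟨A', hA', h⟩ => ?_, fun h => ⟨A, hA, h⟩⟩
  have hc := tr_mem_cross hP (mem_powersetCard.1 hA').2 x
  have hidx :=
    image_vIdx_eq_of_mem_polyCliques hP hj hjk hc (cls_subset_polyCliques hP hj hjk hc h)
  rw [image_vIdx_tr, image_vIdx_tr] at hidx
  rwa [← idxSet_injective hidx] at h

lemma vClass_part (hP : P.IsLabeled k a) {i : Idx (a 1)} (v w : P.Part (a 1) i) :
    P.vClass v.1 = P.vClass w.1 :=
  (hP.2.2.1 _ (mem_gnd_of_part v) _ (mem_gnd_of_part w)).1 (by rw [vIdx_part, vIdx_part])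

lemma tr_mem_polyad_one (hP : P.IsLabeled k a) (hA : A ∈ B.powersetCard 1) :
    tr A y ∈ P.polyad 1 (tr B x) := by
  obtain ⟨hAB, hA1⟩ := mem_powersetCard.1 hA
  obtain ⟨i, rfl⟩ := card_eq_one.1 hA1
  rw [show tr {i} y = {(y i).1} from image_singleton _ _, singleton_mem_polyad_one]
  refine ⟨(x i).1, mem_tr.2 ⟨i, hAB (mem_singleton_self i), rfl⟩, ?_⟩
  rw [vClass_part hP (x i) (y i)]
  exact hP.1.1 _ (mem_gnd_of_part (y i))

lemma polyad_one_tr_eq (hP : P.IsLabeled k a) :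
    P.polyad 1 (tr B x) = P.polyad 1 (tr B y) := by
  rw [PartFam.polyad, PartFam.polyad, if_pos rfl, if_pos rfl, tr, tr, sup_image, sup_image]
  exact congrArg sing (sup_congr rfl fun i _ => vClass_part hP (x i) (y i))

lemma polyad_tr_eq_of_mem_cls (hP : P.IsLabeled k a) (hj : 1 ≤ j) (hjk : j ≤ k - 1)
    (h : ∀ A ∈ B.powersetCard j, 2 ≤ j → tr A y ∈ P.cls j (tr A x)) :
    P.polyad j (tr B x) = P.polyad j (tr B y) := by
  rcases hj.eq_or_lt with rfl | hj
  · exact polyad_one_tr_eq hP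
  · ext T
    rw [mem_polyad_tr hj, mem_polyad_tr hj]
    refine exists_congr fun A => and_congr_right fun hA => ?_
    rw [cls_eq_of_mem hP hj hjk (tr_mem_cross hP (mem_powersetCard.1 hA).2 x) (h A hA hj)]

lemma tr_mem_KsetC_iff (hP : P.IsLabeled k a) {N : ℕ} {B : Finset (Idx N)}
    {x : ∀ i, P.Part N i} (hB : #B = j) (R : Finset (Finset V)) :
    tr B x ∈ KsetC P.gnd (P.cross j) (j - 1) j R ↔ ∀ A ∈ B.powersetCard (j - 1), tr A x ∈ R := by
  rw [mem_KsetC_iff_of_mem_cross _ (tr_mem_cross hP hB x)]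
  constructor
  · exact fun h A hA => h _ (mem_powersetCard_tr.2 ⟨A, hA, rfl⟩)
  · rintro h S hS
    obtain ⟨A, hA, rfl⟩ := mem_powersetCard_tr.1 hS
    exact h A hA

lemma tr_mem_polyCliques_iff_mem_polyad (hP : P.IsLabeled k a) (hB : #B = j) :
    tr B y ∈ P.polyCliques j (tr B x) ↔
      ∀ A ∈ B.powersetCard (j - 1), tr A y ∈ P.polyad (j - 1) (tr B x) :=
  tr_mem_KsetC_iff hP hB _

lemma tr_mem_cls_iff (hP : P.IsLabeled k a) (hj : 2 ≤ j) (hjk : j ≤ k - 1) (hB : #B = j) :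
    tr B y ∈ P.cls j (tr B x) ↔ Agree B x y := by
  induction j using Nat.strong_induction_on generalizing B with
  | _ j ih =>
  have hx := tr_mem_cross hP hB x
  have hy := tr_mem_cross hP hB y
  have hfacet : ∀ A ∈ B.powersetCard (j - 1),
      (tr A y ∈ P.polyad (j - 1) (tr B x) ↔ Agree A x y) := by
    intro A hA
    have hA1 := (mem_powersetCard.1 hA).2
    rcases hj.eq_or_lt with rfl | h
    · exact iff_of_true (tr_mem_polyad_one hP hA) (.of_card_le_one hA1.le)
    · rw [tr_mem_polyad_iff_mem_cls hP (by omega) (by omega) hA]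
      exact ih _ (by omega) (by omega) (by omega) hA1
  rw [agree_iff hB hj, ← forall₂_congr hfacet, ← tr_mem_polyCliques_iff_mem_polyad hP hB]
  refine ⟨fun h => ⟨cls_subset_polyCliques hP hj hjk hx h,
    ((hP.2.2.2 j hj hjk).2.1 _ hx _ h).symm⟩, fun ⟨h, hlbl⟩ => ?_⟩
  rw [tr_mem_polyCliques_iff_mem_polyad hP hB] at h
  have hpoly : P.polyad (j - 1) (tr B x) = P.polyad (j - 1) (tr B y) :=
    polyad_tr_eq_of_mem_cls hP (by omega) (by omega) fun A hA h2 =>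
      (tr_mem_polyad_iff_mem_cls hP h2 (by omega) hA).1 (h A hA)
  rw [(hP.2.2.2 j hj hjk).2.2 _ hx _ hy hpoly hlbl]
  exact mem_cls_self hP hj hjk hy

lemma tr_mem_polyad_iff (hP : P.IsLabeled k a) (hj : 1 ≤ j) (hjk : j ≤ k - 1)
    (hA : A ∈ B.powersetCard j) : tr A y ∈ P.polyad j (tr B x) ↔ Agree A x y := by
  have hA' := (mem_powersetCard.1 hA).2
  rcases hj.eq_or_lt with rfl | hj
  · exact iff_of_true (tr_mem_polyad_one hP hA) (.of_card_le_one hA'.le)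
  · rw [tr_mem_polyad_iff_mem_cls hP hj hjk hA, tr_mem_cls_iff hP hj hjk hA']

lemma tr_mem_polyCliques_iff (hP : P.IsLabeled k a) (hj : 2 ≤ j) (hjk : j ≤ k - 1)
    (hB : #B = j) : tr B y ∈ P.polyCliques j (tr B x) ↔
      ∀ A ∈ B.ssubsets, 2 ≤ #A → P.lbl #A (tr A x) = P.lbl #A (tr A y) := by
  rw [tr_mem_polyCliques_iff_mem_polyad hP hB, ← forall_agree_iff hB (by omega)]
  exact forall₂_congr fun A hA => tr_mem_polyad_iff hP (by omega) (by omega) hA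

lemma exists_eq_tr_of_mem_polyCliques (hP : P.IsLabeled k a) (hj : 2 ≤ j) (hjk : j ≤ k - 1)
    (hB : #B = j) {T : Finset V} (hT : T ∈ P.polyCliques j (tr B x)) :
    ∃ y : ∀ i, P.Part (a 1) i, T = tr B y := by
  have hx := tr_mem_cross hP hB x
  refine exists_eq_tr_of_image_vIdx_eq hP (polyCliques_subset_cross hP hj hjk hx hT) ?_
  rw [image_vIdx_eq_of_mem_polyCliques hP hj hjk hx hT, image_vIdx_tr]

lemma polyad_eq_of_mem_polyCliques (hP : P.IsLabeled k a) (hj : 2 ≤ j) (hjk : j ≤ k - 1)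
    (hB : #B = j) {T : Finset V} (hT : T ∈ P.polyCliques j (tr B x)) :
    P.polyad (j - 1) T = P.polyad (j - 1) (tr B x) := by
  obtain ⟨y, rfl⟩ := exists_eq_tr_of_mem_polyCliques hP hj hjk hB hT
  rw [tr_mem_polyCliques_iff hP hj hjk hB, ← forall_agree_iff hB (by omega)] at hT
  exact (polyad_tr_eq_of_mem_cls hP (by omega) (by omega) fun A hA h2 =>
    (tr_mem_cls_iff hP h2 (by omega) (mem_powersetCard.1 hA).2).2 (hT A hA)).symm

lemma image_lbl_polyCliques (hP : P.IsLabeled k a) (hj : 2 ≤ j) (hjk : j ≤ k - 1)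
    (hB : #B = j) : (P.polyCliques j (tr B x)).image (P.lbl j) = Icc 1 (a j) := by
  have hx := tr_mem_cross hP hB x
  have hcross := polyCliques_subset_cross hP hj hjk hx
  obtain ⟨hrange, -, hinj⟩ := hP.2.2.2 j hj hjk
  refine eq_of_subset_of_card_le (image_subset_iff.2 fun T hT => ?_) ?_
  · exact mem_Icc.2 (hrange T (hcross hT))
  · rw [Nat.card_Icc, Nat.add_sub_cancel, ← card_image_cls_polyCliques hP hj hjk hx]
    exact card_image_le_card_image fun S hS T hT => hinj S (hcross hS) T (hcross hT) <| by
      rw [polyad_eq_of_mem_polyCliques hP hj hjk hB hS,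
        polyad_eq_of_mem_polyCliques hP hj hjk hB hT]

lemma exists_lbl_tr_eq (hP : P.IsLabeled k a) (hj : 2 ≤ j) (hjk : j ≤ k - 1) (hB : #B = j)
    (x : ∀ i, P.Part (a 1) i) {b : ℕ} (hb : b ∈ Icc 1 (a j)) :
    ∃ y : ∀ i, P.Part (a 1) i, P.lbl j (tr B y) = b ∧
      ∀ A ∈ B.ssubsets, 2 ≤ #A → P.lbl #A (tr A x) = P.lbl #A (tr A y) := by
  rw [← image_lbl_polyCliques hP hj hjk hB (x := x), mem_image] at hb
  obtain ⟨T, hT, rfl⟩ := hb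
  obtain ⟨y, rfl⟩ := exists_eq_tr_of_mem_polyCliques hP hj hjk hB hT
  exact ⟨y, rfl, (tr_mem_polyCliques_iff hP hj hjk hB).1 hT⟩

variable {z : Addr}

lemma addrOf_tr_eq_iff {M : Finset ℕ} :
    P.addrOf j (tr A x) = restrictA z j M ↔
      idxSet A = M ∧ ∀ C ⊆ A, 2 ≤ #C → #C ≤ j → P.lbl #C (tr C x) = z.2 (idxSet C) := by
  unfold LabFam.addrOf restrictA
  rw [Prod.mk.injEq, image_vIdx_tr]
  refine and_congr_right ?_
  rintro rfl
  rw [funext_iff]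
  refine ⟨fun h C hC h2 hj => ?_, fun h M => ?_⟩
  · have hM := h (idxSet C)
    rw [if_pos, if_pos, filter_tr hC] at hM
    · rwa [card_idxSet] at hM
    all_goals exact ⟨idxSet_subset_idxSet.2 hC, by rwa [card_idxSet], by rwa [card_idxSet]⟩
  · split_ifs with hM
    · obtain ⟨hMA, h2, hj⟩ := hM
      obtain ⟨C, hC, rfl⟩ := exists_idxSet_eq_of_subset hMA
      rw [card_idxSet] at h2 hj ⊢
      rw [filter_tr hC, h C hC h2 hj]
    · rfl

lemma mem_polyAt_of_two_le (hj : 2 ≤ j) {T : Finset V} :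
    T ∈ P.polyAt j z ↔ ∃ M ∈ z.1.powersetCard j,
      T ∈ P.cross j ∧ P.addrOf (j - 1) T = restrictA z (j - 1) M ∧ P.lbl j T = z.2 M := by
  classical
  rw [LabFam.polyAt, if_neg (by omega), mem_sup]
  refine exists_congr fun M => and_congr_right fun _ => ?_
  rw [LabFam.partAt, if_neg (by omega), mem_filter]

lemma singleton_mem_polyAt_one {v : V} : {v} ∈ P.polyAt 1 z ↔ v ∈ P.gnd ∧ P.vIdx v ∈ z.1 := by
  simp [LabFam.polyAt, sing]

variable {Z : Finset (Idx (a 1))}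

lemma tr_mem_polyAt_iff (hP : P.IsLabeled k a) (hj : 1 ≤ j) (hZ : idxSet Z = z.1)
    (hA : #A = j) : tr A x ∈ P.polyAt j z ↔
      A ⊆ Z ∧ ∀ C ⊆ A, 2 ≤ #C → P.lbl #C (tr C x) = z.2 (idxSet C) := by
  rcases hj.eq_or_lt with rfl | hj
  · obtain ⟨i, rfl⟩ := card_eq_one.1 hA
    have hlbl : ∀ C ⊆ {i}, 2 ≤ #C → P.lbl #C (tr C x) = z.2 (idxSet C) :=
      fun C hC h2 => absurd (h2.trans (card_le_card hC)) (by rw [hA]; omega)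
    rw [show tr {i} x = {(x i).1} from image_singleton _ _, singleton_mem_polyAt_one, vIdx_part,
      ← hZ, mem_idxSet, and_iff_right (mem_gnd_of_part _), singleton_subset_iff,
      and_iff_left hlbl]
  · subst hA
    simp only [mem_polyAt_of_two_le hj, addrOf_tr_eq_iff, ← hZ, mem_powersetCard]
    constructor
    · rintro ⟨_, ⟨hAZ, _⟩, _, ⟨rfl, hlbl⟩, htop⟩
      refine ⟨idxSet_subset_idxSet.1 hAZ, fun C hC h2 => ?_⟩
      rcases hC.eq_or_ssubset with rfl | hC'
      exacts [htop, hlbl C hC h2 (Nat.le_sub_one_of_lt (card_lt_card hC'))]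
    · rintro ⟨hAZ, hlbl⟩
      exact ⟨_, ⟨idxSet_subset_idxSet.2 hAZ, card_idxSet A⟩, tr_mem_cross hP rfl x,
        ⟨rfl, fun C hC h2 _ => hlbl C hC h2⟩, hlbl A subset_rfl hj⟩

lemma KsetC_polyAt_subset_cross (hk : 2 ≤ k) :
    KsetC P.gnd (P.cross k) (k - 1) k (P.polyAt (k - 1) z) ⊆ P.cross k := by
  intro T hT
  rcases hk.eq_or_lt with rfl | hk
  · rw [KsetC, if_pos rfl, mem_filter] at hT
    exact hT.1
  rw [KsetC, if_neg (by omega), Kset, mem_filter] at hT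
  refine mem_filter.2 ⟨hT.1, fun u hu v hv huv => ?_⟩
  obtain ⟨R, huvR, hRT, hR⟩ := exists_subsuperset_card_eq (n := k - 1)
    (insert_subset hu (singleton_subset_iff.2 hv)) (card_le_two.trans (by omega))
    (by rw [(mem_powersetCard.1 hT.1).2]; omega)
  obtain ⟨_, _, hcross, _⟩ :=
    (mem_polyAt_of_two_le (by omega)).1 (hT.2 R (mem_powersetCard.2 ⟨hRT, hR⟩))
  exact (mem_filter.1 hcross).2 u (huvR (mem_insert_self u _)) v
    (huvR (mem_insert_of_mem (mem_singleton_self v))) huv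

lemma exists_eq_tr_of_mem_KsetC_polyAt (hP : P.IsLabeled k a) (hk : 2 ≤ k)
    (hZ : idxSet Z = z.1) (hZk : #Z = k) {T : Finset V}
    (hT : T ∈ KsetC P.gnd (P.cross k) (k - 1) k (P.polyAt (k - 1) z)) :
    ∃ x : ∀ i, P.Part (a 1) i, T = tr Z x := by
  obtain ⟨B, x, hB, rfl⟩ := exists_eq_tr_of_mem_cross hP (KsetC_polyAt_subset_cross hk hT)
  rw [tr_mem_KsetC_iff hP hB] at hT
  have hBZ : B ⊆ Z := fun i hi => by
    obtain ⟨A, hiA, hAB, hA⟩ := exists_subsuperset_card_eq (n := k - 1)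
      (singleton_subset_iff.2 hi) (by rw [card_singleton]; omega) (by omega)
    exact ((tr_mem_polyAt_iff hP (by omega) hZ hA).1
      (hT A (mem_powersetCard.2 ⟨hAB, hA⟩))).1 (singleton_subset_iff.1 hiA)
  obtain rfl : B = Z := eq_of_subset_of_card_le hBZ (hZk.trans hB.symm).le
  exact ⟨x, rfl⟩

lemma tr_mem_KsetC_polyAt_iff (hP : P.IsLabeled k a) (hk : 2 ≤ k) (hZ : idxSet Z = z.1)
    (hZk : #Z = k) :
    tr Z x ∈ KsetC P.gnd (P.cross k) (k - 1) k (P.polyAt (k - 1) z) ↔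
      ∀ C ∈ Z.ssubsets, 2 ≤ #C → P.lbl #C (tr C x) = z.2 (idxSet C) := by
  rw [tr_mem_KsetC_iff hP hZk, ← forall_powersetCard_forall_subset_iff hZk (by omega)]
  refine forall₂_congr fun A hA => ?_
  obtain ⟨hAZ, hA⟩ := mem_powersetCard.1 hA
  rw [tr_mem_polyAt_iff hP (by omega) hZ hA, and_iff_right hAZ]

end Cells

/-! ### The labels of an equitable family are quasirandom -/

section Labels

lemma KsetC_mono {V : Type*} [DecidableEq V] {W : Finset V} {cr Q R : Finset (Finset V)}
    (h : R ⊆ Q) (i j : ℕ) : KsetC W cr i j R ⊆ KsetC W cr i j Q := by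
  unfold KsetC Kset
  split_ifs
  exacts [monotone_filter_right _ fun S _ hS v hv => h (hS v hv),
    monotone_filter_right _ fun S _ hS v hv => h (hS v hv)]

lemma abs_mul_sub_le_of_regular {c n s t d ε : ℝ} (hc : 0 ≤ c) (hd : d ∈ unitInterval)
    (hε : 0 ≤ ε) (ht : 0 ≤ t) (hts : t ≤ s) (hn : c * n ≤ 1) (hs : c * s ≤ 1)
    (h : ε * n ≤ s → |t - d * s| ≤ ε * s) : |c * t - d * (c * s)| ≤ ε := by
  rw [show c * t - d * (c * s) = c * (t - d * s) by ring, abs_mul, abs_of_nonneg hc]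
  rcases le_or_gt (ε * n) s with hns | hns
  · calc c * |t - d * s| ≤ c * (ε * s) := mul_le_mul_of_nonneg_left (h hns) hc
      _ = ε * (c * s) := by ring
      _ ≤ ε := mul_le_of_le_one_right hε hs
  · have hs0 : 0 ≤ s := ht.trans hts
    have hds : d * s ≤ s := mul_le_of_le_one_left hs0 hd.2
    have hds0 : 0 ≤ d * s := mul_nonneg hd.1 hs0
    calc c * |t - d * s| ≤ c * (ε * n) :=
          mul_le_mul_of_nonneg_left ((abs_le.2 ⟨by linarith, by linarith⟩).trans hns.le) hc
      _ = ε * (c * n) := by ring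
      _ ≤ ε := mul_le_of_le_one_right hε hn

variable {V : Type*} [DecidableEq V] {P : LabFam V} {k o j N : ℕ} {a : ℕ → ℕ} {ε : ℝ}

lemma abs_expect_mul_ind_le_of_regPairC [∀ i, Nonempty (P.Part N i)] {B : Finset (Idx N)}
    {A Q R : Finset (Finset V)} {d : ℝ} (hj : 1 ≤ j) (hε : 0 ≤ ε) (hd : d ∈ unitInterval)
    (hreg : RegPairC P.gnd (P.cross j) (j - 1) ε d A Q)
    (hQ : ∀ T ∈ KsetC P.gnd (P.cross j) (j - 1) j Q, ∃ x : ∀ i, P.Part N i, T = tr B x)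
    (hR : R ⊆ Q) :
    |𝔼 x : ∀ i, P.Part N i,
      (ind (tr B x ∈ A) - d) * ind (tr B x ∈ KsetC P.gnd (P.cross j) (j - 1) j R)| ≤ ε := by
  have hreg' := hreg R hR
  rw [Nat.sub_add_cancel hj] at hreg'
  have hRQ := KsetC_mono hR (j - 1) j (W := P.gnd) (cr := P.cross j)
  obtain ⟨c, hc, hcount⟩ := exists_expect_ind_tr_mem_eq_mul_card (P := P) B
  have hle (S : Finset (Finset V)) : 𝔼 x : ∀ i, P.Part N i, ind (tr B x ∈ S) ≤ 1 :=
    expect_le univ_nonempty fun x _ => ind_le_one _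
  set K := KsetC P.gnd (P.cross j) (j - 1) j
  have hcountQ := hcount (K Q) hQ
  have hcountR := hcount (K R) fun T hT => hQ T (hRQ hT)
  have hcountA := hcount (A ∩ K R) fun T hT => hQ T (hRQ (mem_inter.1 hT).2)
  have hsplit : 𝔼 x : ∀ i, P.Part N i, (ind (tr B x ∈ A) - d) * ind (tr B x ∈ K R) =
      c * #(A ∩ K R) - d * (c * #(K R)) := by
    simp only [sub_mul, ← ind_and, ← mem_inter, expect_sub_distrib, ← mul_expect, hcountA,
      hcountR]
  rw [hsplit]
  exact abs_mul_sub_le_of_regular hc.le hd hε (Nat.cast_nonneg _)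
    (Nat.cast_le.2 (card_le_card inter_subset_right)) (hcountQ ▸ hle _) (hcountR ▸ hle _) hreg'

lemma exists_subset_forall_tr_mem_KsetC_iff (hP : P.IsLabeled k a) {B : Finset (Idx N)}
    (hB : #B = j) {u : Idx N → (∀ i, P.Part N i) → Prop}
    (hu : ∀ i ∈ B, DependsOn (u i) (B.erase i)) (Q : Finset (Finset V)) :
    ∃ R ⊆ Q, ∀ x, tr B x ∈ KsetC P.gnd (P.cross j) (j - 1) j R ↔
      tr B x ∈ KsetC P.gnd (P.cross j) (j - 1) j Q ∧ ∀ i ∈ B, u i x := by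
  classical
  refine ⟨Q.filter fun S => ∀ i ∈ B, ∀ x, S = tr (B.erase i) x → u i x, filter_subset _ _,
    fun x => ?_⟩
  simp only [tr_mem_KsetC_iff hP hB, mem_filter]
  refine ⟨fun h => ⟨fun A hA => (h A hA).1, fun i hi => ?_⟩,
    fun ⟨hQ, hux⟩ A hA => ⟨hQ A hA, fun i hi y hxy => ?_⟩⟩
  · exact (h (B.erase i) (mem_powersetCard.2 ⟨erase_subset _ _, by
      rw [card_erase_of_mem hi, hB]⟩)).2 i hi x rfl
  · obtain ⟨rfl, hxy⟩ := eq_and_eqOn_of_tr_eq_tr hxy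
    exact (hu i hi hxy).mp (hux i hi)

/-- The label of the partial transversal picked by `x` in the classes of `B`. It is cut off to a
finite set of labels, and it is `0` when `B` is too small or too large to carry a label. -/
noncomputable def labelOf (P : LabFam V) (k o : ℕ) (B : Finset (Idx N)) (x : ∀ i, P.Part N i) :
    Fin (o + 1) :=
  if 2 ≤ #B ∧ #B ≤ k - 1 then Fin.ofNat (o + 1) (P.lbl #B (tr B x)) else 0

/-- The expected conditional density of the label `b` over `B`, given the labels over all the
proper subsets of `B`. -/
noncomputable def labelDens (k o : ℕ) (a : ℕ → ℕ) (B : Finset (Idx N)) (b : Fin (o + 1)) : ℝ :=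
  if 2 ≤ #B ∧ #B ≤ k - 1 then if (b : ℕ) ∈ Icc 1 (a #B) then 1 / a #B else 0
  else if b = 0 then 1 else 0

/-- The labels over the proper subsets of `B`, with the junk value `0` over all other sets. -/
noncomputable def lowerLabels (P : LabFam V) (k o : ℕ) (B : Finset (Idx N))
    (x : ∀ i, P.Part N i) : Finset (Idx N) → Fin (o + 1) :=
  fun A => if A ⊂ B then labelOf P k o A x else 0

lemma one_div_natCast_mem_unitInterval (n : ℕ) : 1 / (n : ℝ) ∈ unitInterval :=
  one_div (n : ℝ) ▸ ⟨inv_nonneg.2 n.cast_nonneg, Nat.cast_inv_le_one n⟩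

lemma labelDens_mem_unitInterval (B : Finset (Idx N)) (b : Fin (o + 1)) :
    labelDens k o a B b ∈ unitInterval := by
  unfold labelDens
  split_ifs
  exacts [one_div_natCast_mem_unitInterval _, unitInterval.zero_mem, unitInterval.one_mem,
    unitInterval.zero_mem]

lemma dependsOn_labelOf (B : Finset (Idx N)) : DependsOn (labelOf P k o B) B := fun x y h => by
  rw [labelOf, labelOf, dependsOn_tr B h]

variable {B : Finset (Idx N)} {x y : ∀ i, P.Part N i}

lemma labelOf_eq_iff (hP : P.IsLabeled k a) (ha : ∀ i, 1 ≤ i → i ≤ k - 1 → a i ≤ o)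
    (hB : 2 ≤ #B ∧ #B ≤ k - 1) {b : Fin (o + 1)} :
    labelOf P k o B x = b ↔ P.lbl #B (tr B x) = b := by
  have hlbl := ((hP.2.2.2 _ hB.1 hB.2).1 _ (tr_mem_cross hP rfl x)).2
  have hao := ha #B (by omega) hB.2
  rw [labelOf, if_pos hB, Fin.ext_iff, Fin.val_ofNat, Nat.mod_eq_of_lt (by omega)]

lemma labelOf_eq_labelOf_iff (hP : P.IsLabeled k a) (ha : ∀ i, 1 ≤ i → i ≤ k - 1 → a i ≤ o)
    (hB : #B ≤ k - 1) :
    labelOf P k o B x = labelOf P k o B y ↔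
      (2 ≤ #B → P.lbl #B (tr B x) = P.lbl #B (tr B y)) := by
  by_cases h2 : 2 ≤ #B
  · rw [labelOf_eq_iff hP ha ⟨h2, hB⟩, ← (labelOf_eq_iff hP ha ⟨h2, hB⟩ (x := y)).1 rfl,
      forall_prop_of_true h2]
  · exact iff_of_true (by rw [labelOf, labelOf, if_neg (by tauto), if_neg (by tauto)])
      fun h => absurd h h2

lemma lowerLabels_eq_lowerLabels_iff (hP : P.IsLabeled k a)
    (ha : ∀ i, 1 ≤ i → i ≤ k - 1 → a i ≤ o) (hB : #B ≤ k - 1) :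
    lowerLabels P k o B x = lowerLabels P k o B y ↔
      ∀ A ∈ B.ssubsets, 2 ≤ #A → P.lbl #A (tr A x) = P.lbl #A (tr A y) := by
  have hiff {A : Finset (Idx N)} (hA : A ⊂ B) :=
    labelOf_eq_labelOf_iff (x := x) (y := y) hP ha ((card_lt_card hA).le.trans hB)
  simp only [mem_ssubsets, funext_iff, lowerLabels]
  refine forall_congr' fun A => ?_
  split_ifs with hA
  · rw [hiff hA, forall_prop_of_true hA]
  · exact iff_of_true rfl fun h => absurd h hA

lemma exists_regPairC_forall_tr_mem_iff {B : Finset (Idx (a 1))} (hP : P.IsLabeled k a)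
    (ha : ∀ i, 1 ≤ i → i ≤ k - 1 → a i ≤ o) (hreg : P.PolyadReg k a ε)
    (hB : 2 ≤ #B ∧ #B ≤ k - 1) {b : Fin (o + 1)} (hb : (b : ℕ) ∈ Icc 1 (a #B))
    (x₀ : ∀ i, P.Part (a 1) i) :
    ∃ A Q, RegPairC P.gnd (P.cross #B) (#B - 1) ε (1 / a #B) A Q ∧
      (∀ T ∈ KsetC P.gnd (P.cross #B) (#B - 1) #B Q, ∃ x : ∀ i, P.Part (a 1) i, T = tr B x) ∧
      (∀ x, tr B x ∈ KsetC P.gnd (P.cross #B) (#B - 1) #B Q ↔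
        lowerLabels P k o B x = lowerLabels P k o B x₀) ∧
      ∀ x, lowerLabels P k o B x = lowerLabels P k o B x₀ →
        (tr B x ∈ A ↔ labelOf P k o B x = b) := by
  obtain ⟨hB2, hBk⟩ := hB
  obtain ⟨x₁, hx₁, hagree⟩ := exists_lbl_tr_eq hP hB2 hBk rfl x₀ hb
  rw [← lowerLabels_eq_lowerLabels_iff hP ha hBk] at hagree
  obtain ⟨Z, hBZ, -, hZ⟩ := exists_subsuperset_card_eq (n := k) (subset_univ B) (by omega)
    (by simpa using hP.1.2.2.2.2.1)
  have hBZ' := mem_powersetCard.2 ⟨hBZ, rfl⟩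
  refine ⟨P.polyad #B (tr Z x₁), P.polyad (#B - 1) (tr B x₁),
    hreg _ (tr_mem_cross hP hZ x₁) #B hB2 hBk _ (mem_powersetCard_tr.2 ⟨B, hBZ', rfl⟩),
    fun T hT => exists_eq_tr_of_mem_polyCliques hP hB2 hBk rfl hT, fun x => ?_, fun x hx => ?_⟩
  · rw [hagree, eq_comm (a := lowerLabels P k o B x), lowerLabels_eq_lowerLabels_iff hP ha hBk]
    exact tr_mem_polyCliques_iff hP hB2 hBk rfl
  · rw [hagree, eq_comm, lowerLabels_eq_lowerLabels_iff hP ha hBk,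
      ← forall_agree_iff rfl (by omega)] at hx
    rw [tr_mem_polyad_iff hP (by omega) hBk hBZ', agree_iff rfl hB2, and_iff_right hx,
      labelOf_eq_iff hP ha ⟨hB2, hBk⟩, hx₁, eq_comm]

lemma abs_expect_cell_le {B : Finset (Idx (a 1))} (hP : P.IsLabeled k a)
    (ha : ∀ i, 1 ≤ i → i ≤ k - 1 → a i ≤ o) (hε : 0 ≤ ε) (hreg : P.PolyadReg k a ε)
    (hB : 2 ≤ #B ∧ #B ≤ k - 1) {b : Fin (o + 1)} (hb : (b : ℕ) ∈ Icc 1 (a #B))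
    {u : Idx (a 1) → (∀ i, P.Part (a 1) i) → Prop}
    (hu : ∀ i ∈ B, DependsOn (u i) (B.erase i)) (θ : Finset (Idx (a 1)) → Fin (o + 1)) :
    |𝔼 x, (ind (labelOf P k o B x = b) - 1 / a #B) *
      ind (lowerLabels P k o B x = θ ∧ ∀ i ∈ B, u i x)| ≤ ε := by
  have := nonempty_part hP
  by_cases hθ : ∃ x₀, lowerLabels P k o B x₀ = θ
  swap
  · have hzero (x) : ind (lowerLabels P k o B x = θ ∧ ∀ i ∈ B, u i x) = 0 :=
      ind_false fun h => hθ ⟨x, h.1⟩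
    simpa only [hzero, mul_zero, expect_const_zero, abs_zero]
  obtain ⟨x₀, rfl⟩ := hθ
  obtain ⟨A, Q, hAQ, hQ, hcell, hlabel⟩ :=
    exists_regPairC_forall_tr_mem_iff hP ha hreg hB hb x₀
  obtain ⟨R, hR, hRu⟩ := exists_subset_forall_tr_mem_KsetC_iff hP (B := B) rfl hu Q
  refine (congrArg abs (expect_congr rfl fun x _ => ?_)).trans_le <|
    abs_expect_mul_ind_le_of_regPairC (one_le_two.trans hB.1) hε
      (one_div_natCast_mem_unitInterval (a #B)) hAQ hQ hR
  rw [ind_congr (hRu x), ind_congr (and_congr_left' (hcell x))]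
  by_cases hx : lowerLabels P k o B x = lowerLabels P k o B x₀
  · rw [ind_congr (hlabel x hx)]
  · have hzero : ind (lowerLabels P k o B x = lowerLabels P k o B x₀ ∧ ∀ i ∈ B, u i x) = 0 :=
      ind_false fun h => hx h.1
    rw [hzero, mul_zero, mul_zero]

lemma ind_labelOf_eq_labelDens (hP : P.IsLabeled k a) (ha : ∀ i, 1 ≤ i → i ≤ k - 1 → a i ≤ o)
    {b : Fin (o + 1)} (h : ¬((2 ≤ #B ∧ #B ≤ k - 1) ∧ (b : ℕ) ∈ Icc 1 (a #B))) :
    ind (labelOf P k o B x = b) = labelDens k o a B b := by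
  by_cases hB : 2 ≤ #B ∧ #B ≤ k - 1
  · have hb : (b : ℕ) ∉ Icc 1 (a #B) := fun hb => h ⟨hB, hb⟩
    rw [labelDens, if_pos hB, if_neg hb, ind_false]
    rw [labelOf_eq_iff hP ha hB]
    exact fun hlbl => hb <|
      hlbl ▸ mem_Icc.2 ((hP.2.2.2 _ hB.1 hB.2).1 _ (tr_mem_cross hP rfl x))
  · simp [labelDens, labelOf, hB, ind, eq_comm]

lemma isQuasirandom_labelOf (hP : P.IsLabeled k a) (ha : ∀ i, 1 ≤ i → i ≤ k - 1 → a i ≤ o)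
    (hε : 0 ≤ ε) (hreg : P.PolyadReg k a ε) :
    IsQuasirandom (labelOf (N := a 1) P k o) (labelDens k o a)
      (Fintype.card (Finset (Idx (a 1)) → Fin (o + 1)) * ε) where
  dependsOn := dependsOn_labelOf
  cutLE B b u hu := by
    by_cases hBb : (2 ≤ #B ∧ #B ≤ k - 1) ∧ (b : ℕ) ∈ Icc 1 (a #B)
    swap
    · simp only [ind_labelOf_eq_labelDens hP ha hBb, sub_self, zero_mul, expect_const_zero,
        abs_zero]
      positivity
    obtain ⟨hB, hb⟩ := hBb
    rw [labelDens, if_pos hB, if_pos hb]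
    have hsplit : 𝔼 x, (ind (labelOf P k o B x = b) - 1 / a #B) * ind (∀ i ∈ B, u i x) =
        ∑ θ, 𝔼 x, (ind (labelOf P k o B x = b) - 1 / a #B) *
          ind (lowerLabels P k o B x = θ ∧ ∀ i ∈ B, u i x) := by
      rw [← expect_sum_comm]
      refine expect_congr rfl fun x _ => ?_
      simp only [ind_and (lowerLabels P k o B x = _)]
      rw [← mul_sum, ← sum_mul, sum_ind_eq, one_mul]
    rw [hsplit]
    calc _ ≤ ∑ θ, |𝔼 x, (ind (labelOf P k o B x = b) - 1 / a #B) *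
          ind (lowerLabels P k o B x = θ ∧ ∀ i ∈ B, u i x)| := abs_sum_le_sum_abs _ _
      _ ≤ ∑ _θ : Finset (Idx (a 1)) → Fin (o + 1), ε :=
        sum_le_sum fun θ _ => abs_expect_cell_le hP ha hε hreg hB hb hu θ
      _ = _ := by simp

end Labels

/-! ### Densities of polyads and the transfer -/

section Transfer

universe u

/-- The label which the address `z` prescribes over `B`, encoded as in `labelOf`. -/
noncomputable def addrLabel (k o : ℕ) {N : ℕ} (z : Addr) (B : Finset (Idx N)) : Fin (o + 1) :=
  if 2 ≤ #B ∧ #B ≤ k - 1 then Fin.ofNat (o + 1) (z.2 (idxSet B)) else 0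

variable {V : Type*} [DecidableEq V] {P : LabFam V} {k o : ℕ} {a : ℕ → ℕ}
  {B Z : Finset (Idx (a 1))} {z : Addr}

lemma val_addrLabel (ha : ∀ i, 1 ≤ i → i ≤ k - 1 → a i ≤ o) (hz : IsAddress k (k - 1) a z)
    (hZ : idxSet Z = z.1) (hBZ : B ⊆ Z) (hB : 2 ≤ #B ∧ #B ≤ k - 1) :
    (addrLabel k o z B : ℕ) = z.2 (idxSet B) ∧ z.2 (idxSet B) ∈ Icc 1 (a #B) := by
  have hlbl := hz.2.2.1 (idxSet B) (hZ ▸ idxSet_subset_idxSet.2 hBZ)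
  rw [card_idxSet] at hlbl
  have hlbl := hlbl hB.1 hB.2
  have hao := ha #B (by omega) hB.2
  refine ⟨?_, mem_Icc.2 hlbl⟩
  rw [addrLabel, if_pos hB, Fin.val_ofNat, Nat.mod_eq_of_lt (by omega)]

lemma one_div_le_labelDens (ha : ∀ i, 1 ≤ i → i ≤ k - 1 → a i ≤ o)
    (hz : IsAddress k (k - 1) a z) (hZ : idxSet Z = z.1) (hBZ : B ⊆ Z) :
    1 / (o : ℝ) ≤ labelDens k o a B (addrLabel k o z B) := by
  by_cases hB : 2 ≤ #B ∧ #B ≤ k - 1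
  · obtain ⟨hval, hmem⟩ := val_addrLabel ha hz hZ hBZ hB
    rw [labelDens, if_pos hB, hval, if_pos hmem]
    have hao := ha #B (by omega) hB.2
    rw [mem_Icc] at hmem
    exact one_div_le_one_div_of_le (Nat.cast_pos.2 (by omega)) (Nat.cast_le.2 hao)
  · rw [labelDens, if_neg hB, addrLabel, if_neg hB, if_pos rfl]
    exact (one_div_natCast_mem_unitInterval o).2

lemma labelOf_eq_addrLabel_iff (hP : P.IsLabeled k a) (ha : ∀ i, 1 ≤ i → i ≤ k - 1 → a i ≤ o)
    (hz : IsAddress k (k - 1) a z) (hZ : idxSet Z = z.1) (hBZ : B ⊆ Z) (hB : #B ≤ k - 1)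
    {x : ∀ i, P.Part (a 1) i} :
    labelOf P k o B x = addrLabel k o z B ↔
      (2 ≤ #B → P.lbl #B (tr B x) = z.2 (idxSet B)) := by
  by_cases h2 : 2 ≤ #B
  · rw [labelOf_eq_iff hP ha ⟨h2, hB⟩, (val_addrLabel ha hz hZ hBZ ⟨h2, hB⟩).1,
      forall_prop_of_true h2]
  · exact iff_of_true (by rw [labelOf, addrLabel, if_neg (by tauto), if_neg (by tauto)])
      fun h => absurd h h2

lemma dens_eq_facetDensity (hP : P.IsLabeled k a) (hk : 2 ≤ k)
    (ha : ∀ i, 1 ≤ i → i ≤ k - 1 → a i ≤ o) (hz : IsAddress k (k - 1) a z)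
    (hZ : idxSet Z = z.1) (hZk : #Z = k) (H : Finset (Finset V)) :
    dens P.gnd (P.cross k) (k - 1) (KsetC P.gnd (P.cross k) (k - 1) k H) (P.polyAt (k - 1) z) =
      facetDensity (labelOf (N := a 1) P k o) (fun B x => tr B x ∈ H) Z (addrLabel k o z) := by
  have := nonempty_part hP
  set K := KsetC P.gnd (P.cross k) (k - 1) k
  have hpolyad (x : ∀ i, P.Part (a 1) i) : tr Z x ∈ K (P.polyAt (k - 1) z) ↔
      ∀ B ∈ Z.ssubsets, labelOf P k o B x = addrLabel k o z B := by
    rw [tr_mem_KsetC_polyAt_iff hP hk hZ hZk]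
    refine forall₂_congr fun B hB => ?_
    rw [mem_ssubsets] at hB
    have hBk := (card_lt_card hB).trans_eq hZk
    rw [labelOf_eq_addrLabel_iff hP ha hz hZ hB.subset (by omega)]
  have hfacets (x : ∀ i, P.Part (a 1) i) : tr Z x ∈ K H ∩ K (P.polyAt (k - 1) z) ↔
      (∀ B ∈ Z.ssubsets, labelOf P k o B x = addrLabel k o z B) ∧
        ∀ B ∈ Z.powersetCard (#Z - 1), tr B x ∈ H := by
    rw [mem_inter, hpolyad, and_comm, hZk, tr_mem_KsetC_iff hP hZk]
  have htr : ∀ T ∈ K (P.polyAt (k - 1) z), ∃ x : ∀ i, P.Part (a 1) i, T = tr Z x :=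
    fun T hT => exists_eq_tr_of_mem_KsetC_polyAt hP hk hZ hZk hT
  obtain ⟨c, hc, hcount⟩ := exists_expect_ind_tr_mem_eq_mul_card (P := P) Z
  simp only [facetDensity, ← hfacets]
  simp only [← hpolyad]
  rw [hcount _ htr, hcount _ fun T hT => htr T (mem_inter.1 hT).2, mul_div_mul_left _ _ hc.ne',
    dens, Nat.sub_add_cancel (one_le_two.trans hk)]
  exact ite_eq_right_iff.2 fun h => by rw [h, Nat.cast_zero, div_zero]

lemma facetDensity_congr {ι L X : Type*} [DecidableEq ι] [Fintype X] {l : Finset ι → X → L}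
    {χ χ' : Finset ι → X → Prop} {Z : Finset ι} {a : Finset ι → L}
    (h : ∀ B ∈ Z.powersetCard (#Z - 1), ∀ x, χ B x ↔ χ' B x) :
    facetDensity l χ Z a = facetDensity l χ' Z a :=
  congrArg (· / _) <| expect_congr rfl fun x _ =>
    ind_congr <| and_congr_right' <| forall₂_congr fun B hB => h B hB x

lemma exists_subset_cross_forall_tr_mem_iff (hP : P.IsLabeled k a) (j : ℕ)
    {χ : Finset (Idx (a 1)) → (∀ i, P.Part (a 1) i) → Prop} (hχ : ∀ B, DependsOn (χ B) B) :
    ∃ H ⊆ P.cross j, ∀ B, #B = j → ∀ x, tr B x ∈ H ↔ χ B x := by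
  classical
  refine ⟨(P.cross j).filter fun T => ∃ B x, T = tr B x ∧ χ B x, filter_subset _ _,
    fun B hB x => ?_⟩
  rw [mem_filter, and_iff_right (tr_mem_cross hP hB x)]
  refine ⟨fun ⟨A, y, h, hA⟩ => ?_, fun h => ⟨B, x, rfl, h⟩⟩
  obtain ⟨rfl, hxy⟩ := eq_and_eqOn_of_tr_eq_tr h
  exact (hχ B hxy).mpr hA

lemma exists_pos_forall_mul_le {q δ : ℕ → ℝ} (hq : ∀ N, 0 < q N) (hδ : ∀ N, 0 < δ N) (o : ℕ) :
    ∃ ε₀ > 0, ∀ ε ≤ ε₀, ∀ N ≤ o, q N * ε ≤ δ N := by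
  refine ⟨(range (o + 1)).inf' nonempty_range_add_one fun N => δ N / q N,
    (lt_inf'_iff _).2 fun N _ => div_pos (hδ N) (hq N), fun ε hε N hN => ?_⟩
  rw [mul_comm, ← le_div_iff₀ (hq N)]
  exact hε.trans (inf'_le _ (mem_range_succ_iff.2 hN))

theorem mimic_lemma_general {k : ℕ} (hk : 2 ≤ k) {o : ℕ} (ho : 0 < o) {ν : ℝ} (hν : 0 < ν) :
    ∃ ε₀ > 0, ∃ N : ℕ, ∀ ε, 0 ≤ ε → ε ≤ ε₀ →
      ∀ (V₁ V₂ : Type u) [DecidableEq V₁] [DecidableEq V₂] (P : LabFam V₁) (Q : LabFam V₂)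
        (a : ℕ → ℕ), (∀ i, 1 ≤ i → i ≤ k - 1 → a i ≤ o) →
      P.IsLabeled k a → P.PolyadReg k a ε → Q.IsLabeled k a → Q.PolyadReg k a ε →
      (∀ v ∈ Q.gnd, N ≤ #(Q.vClass v)) →
      ∀ H : Finset (Finset V₁), ∃ F ⊆ Q.cross (k - 1), ∀ z, IsAddress k (k - 1) a z →
        |dens P.gnd (P.cross k) (k - 1) (KsetC P.gnd (P.cross k) (k - 1) k H)
            (P.polyAt (k - 1) z) -
          dens Q.gnd (Q.cross k) (k - 1) (KsetC Q.gnd (Q.cross k) (k - 1) k F)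
            (Q.polyAt (k - 1) z)| ≤ ν := by
  choose δ hδ M hmimic using fun N : ℕ =>
    exists_mimic (Idx N) (Fin (o + 1)) (k - 1) (c := 1 / o) (by positivity) hν
  obtain ⟨ε₀, hε₀, hle⟩ := exists_pos_forall_mul_le
    (q := fun N => Fintype.card (Finset (Idx N) → Fin (o + 1)))
    (fun N => Nat.cast_pos.2 Fintype.card_pos) hδ o
  refine ⟨ε₀, hε₀, (range (o + 1)).sup M, ?_⟩
  intro ε hε hεε₀ V₁ V₂ _ _ P Q a ha hP hPreg hQ hQreg hlarge H
  have ha1 : a 1 ≤ o := ha 1 le_rfl (by omega)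
  have := nonempty_part hP
  have := nonempty_part hQ
  obtain ⟨χ, hχ, hdens⟩ := hmimic (a 1) (P.Part (a 1)) (Q.Part (a 1)) (labelOf P k o)
    (labelOf Q k o) (labelDens k o a) labelDens_mem_unitInterval
    ((isQuasirandom_labelOf hP ha hε hPreg).mono (hle ε hεε₀ _ ha1))
    ((isQuasirandom_labelOf hQ ha hε hQreg).mono (hle ε hεε₀ _ ha1))
    (fun i => by
      obtain ⟨v, hv, hcard⟩ := exists_card_part_eq_card_vClass hQ i
      exact hcard ▸ (le_sup (mem_range_succ_iff.2 ha1)).trans (hlarge v hv))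
    (fun B x => tr B x ∈ H) fun B => dependsOn_comp (dependsOn_tr B) (· ∈ H)
  obtain ⟨F, hF, hFχ⟩ := exists_subset_cross_forall_tr_mem_iff hQ (k - 1) hχ
  refine ⟨F, hF, fun z hz => ?_⟩
  obtain ⟨Z, hZ⟩ := exists_idxSet_eq hz.2.1
  have hZk : #Z = k := by rw [← card_idxSet, hZ, hz.1]
  rw [dens_eq_facetDensity hP hk ha hz hZ hZk, dens_eq_facetDensity hQ hk ha hz hZ hZk,
    facetDensity_congr fun B hB => hFχ B (by rw [(mem_powersetCard.1 hB).2, hZk])]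
  exact hdens Z (addrLabel k o z) (by omega) fun B hB =>
    one_div_le_labelDens ha hz hZ (mem_ssubsets.1 hB).subset

end Transfer

end HypReg

namespace HypReg

open Finset

/-- Transferring the large-scale structure of a (k−1)-graph to another vertex set
(Lemma 5.2 of the paper). -/
theorem mimic_lemma :
    ∀ k o : ℕ, 2 ≤ k → 2 ≤ o → ∀ ν : ℝ, 0 < ν →
    ∃ ε₀ : ℝ, 0 < ε₀ ∧ ∀ ε : ℝ, 0 < ε → ε ≤ ε₀ →
    ∃ n₀ : ℕ,
    ∀ (V₁ : Type) [DecidableEq V₁], ∀ (V₂ : Type) [DecidableEq V₂],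
    ∀ (W₁ : Finset V₁) (W₂ : Finset V₂) (n m : ℕ),
    W₁.card = n → W₂.card = m → n₀ ≤ n → n₀ ≤ m →
    ∀ a : ℕ → ℕ, (∀ i, 1 ≤ i → i ≤ k - 1 → 1 ≤ a i ∧ a i ≤ o) →
    ∀ (P : LabFam V₁) (Q : LabFam V₂), P.gnd = W₁ → Q.gnd = W₂ →
    P.IsLabeled k a → P.toPartFam.IsEquitableE k a (1 / (a 1 : ℝ)) ε →
    Q.IsLabeled k a → Q.toPartFam.IsEquitableE k a (1 / (a 1 : ℝ)) ε →
    ∀ H : Finset (Finset V₁), H ⊆ P.toPartFam.cross (k-1) →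
    ∃ (G : Finset (Finset V₁)) (Fk : Finset (Finset V₂)),
      G ⊆ P.toPartFam.cross (k-1) ∧ Fk ⊆ Q.toPartFam.cross (k-1) ∧
      -- (F1)
      ((sd H G).card : ℝ) ≤ ν * (n.choose (k-1) : ℝ) ∧
      -- (F2)
      ∀ z : Addr, IsAddress k (k-1) a z →
        |dens P.gnd (P.toPartFam.cross k) (k-1)
            (KsetC P.gnd (P.toPartFam.cross k) (k-1) k G) (P.polyAt (k-1) z) -
          dens Q.gnd (Q.toPartFam.cross k) (k-1)
            (KsetC Q.gnd (Q.toPartFam.cross k) (k-1) k Fk) (Q.polyAt (k-1) z)| ≤ ν := by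
  intro k o hk ho ν hν
  obtain ⟨ε₀, hε₀, N, hmimic⟩ := mimic_lemma_general hk (o := o) (by omega) hν
  refine ⟨ε₀, hε₀, fun ε hε hεε₀ => ⟨N * o, ?_⟩⟩
  rintro V₁ _ V₂ _ _ _ n m rfl rfl - hm a ha P Q rfl rfl hP ⟨-, -, hPreg⟩ hQ ⟨-, hQcard, hQreg⟩
    H hH
  have hlarge : ∀ v ∈ Q.gnd, N ≤ #(Q.vClass v) := fun v hv => by
    obtain ⟨ha1, ha1o⟩ := ha 1 le_rfl (by omega)
    have hdiv : N ≤ #Q.gnd / a 1 :=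
      (Nat.le_div_iff_mul_le ha1).2 ((Nat.mul_le_mul_left N ha1o).trans hm)
    have := hQcard v hv
    omega
  obtain ⟨F, hF, hdens⟩ := hmimic ε hε.le hεε₀ V₁ V₂ P Q a (fun i h1 hi => (ha i h1 hi).2)
    hP hPreg hQ hQreg hlarge H
  refine ⟨H, F, hH, hF, ?_, hdens⟩
  simp only [sd, sdiff_self, union_self, bot_eq_empty, card_empty, Nat.cast_zero]
  positivity

end HypReg
end
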